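/- arXiv:2005.10920 — 2 statements merged into one kernel-verified Lean document; each statement's English description precedes it below -/
import Mathlib

section
/- Let n > 1 be an integer. There exist infinitely many pairwise non-isomorphic number fields K with the following properties: there is a positive integer y with y odd and y not divisible by 3 such that the polynomial x³ + ((yⁿ+3)/2)x² + ((yⁿ−3)/2)x − 1 is irreducible over ℚ and K is its splitting field; K is a totally real Galois extension of ℚ of degree 3 with Galois group isomorphic to ℤ/3ℤ; and rank_n Cl(K) ≥ 2. -/
open Polynomial NumberField

/-- `M` contains a subgroup isomorphic to `(ℤ/nℤ)^s`, i.e. `rank_n M ≥ s`. -/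
def HasZModRankGE (M : Type*) [CommGroup M] (n s : ℕ) : Prop :=
  ∃ φ : (Multiplicative (Fin s → ZMod n)) →* M, Function.Injective φ

/-- A number field (here a subfield of `ℂ`) is totally real if all of its complex
embeddings take real values. -/
def TotallyReal (K : Type*) [Field K] : Prop :=
  ∀ (φ : K →+* ℂ) (x : K), (φ x).im = 0

/-!
Let `θ` be a root of the simplest cubic polynomial with parameter `A = (yⁿ + 3) / 2`. Then
`(θ - 1)(θ + 2)(2θ + 1) = -yⁿ θ(θ + 1)` with `θ` and `θ + 1` units, so for `3 ∤ y` the principal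
ideals of `θ - 1` and `θ + 2` are `n`-th powers of ideals. The unit rank being `2`, the classes of
these two ideals generate a copy of `(ℤ/nℤ)²` as soon as `θ, θ + 1, θ - 1, θ + 2` are independent
modulo `±1` and `p`-th powers for every prime `p ∣ n`.

Independence is tested at primes above the prime divisors of `y`, where `θ` reduces to `1` or `-2`
and everything in sight to some `±2ᵘ3ᵛ`. So `y` is chosen such that `±2ᵘ3ᵛ` is a `p`-th power
modulo all its prime divisors only when `p` divides `u` and `v`; for `p = 3` one more congruence,
modulo `13`, is needed. Such a `y` exists because an integer `m` that is not a `p`-th power is not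
one modulo infinitely many primes, as a comparison of the ideal count of `ℚ(m^(1/p))` with the
divergence of `∑ 1 / l` over the primes `l ≡ 1 mod p` shows.

Replacing `n` by `nk` yields class groups of order at least `(nk)²`, whence infinitely many fields.
-/

section IndependentFamilies

variable {ι G : Type*} [Fintype ι] [CommGroup G] {n : ℕ}

/-- The homomorphism `(ℤ/nℤ)^ι → G`, `v ↦ ∏ i, g i ^ v i`, attached to a family of elements of `G`
killed by `n`; it is written multiplicatively to match `HasZModRankGE`. -/
def zmodPowHom [NeZero n] (g : ι → G) (hg : ∀ i, g i ^ n = 1) :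
    Multiplicative (ι → ZMod n) →* G where
  toFun v := ∏ i, g i ^ (v.toAdd i).val
  map_one' := by simp
  map_mul' v w := by
    simp only [← Finset.prod_mul_distrib, ← pow_add, toAdd_mul, Pi.add_apply, ZMod.val_add]
    exact Finset.prod_congr rfl fun i _ => (pow_eq_pow_mod _ (hg i)).symm

theorem zmodPowHom_injective [NeZero n] {g : ι → G} (hg : ∀ i, g i ^ n = 1)
    (hind : ∀ e : ι → ℕ, ∏ i, g i ^ e i = 1 → ∀ i, n ∣ e i) :
    Function.Injective (zmodPowHom g hg) := by
  refine (injective_iff_map_eq_one _).mpr fun v hv => Multiplicative.toAdd.injective ?_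
  funext i
  exact (ZMod.val_eq_zero _).mp (Nat.eq_zero_of_dvd_of_lt (hind _ hv i) (ZMod.val_lt _))

theorem natCard_multiplicative_pi_zmod (ι : Type*) [Fintype ι] (n : ℕ) :
    Nat.card (Multiplicative (ι → ZMod n)) = n ^ Fintype.card ι := by
  rw [Nat.card_congr Multiplicative.toAdd, Nat.card_fun, Nat.card_zmod, Nat.card_eq_fintype_card]

theorem hasZModRankGE_iff_exists_independent [NeZero n] {s : ℕ} :
    HasZModRankGE G n s ↔ ∃ g : Fin s → G, (∀ i, g i ^ n = 1) ∧
      ∀ e : Fin s → ℕ, ∏ i, g i ^ e i = 1 → ∀ i, n ∣ e i := by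
  refine ⟨fun ⟨φ, hφ⟩ => ?_, fun ⟨g, hg, hind⟩ => ⟨zmodPowHom g hg, zmodPowHom_injective hg hind⟩⟩
  let basis (i : Fin s) : Multiplicative (Fin s → ZMod n) := Multiplicative.ofAdd (Pi.single i 1)
  refine ⟨fun i => φ (basis i), fun i => ?_, fun e he i => ?_⟩
  · rw [← map_pow, ← ofAdd_nsmul, ← Nat.cast_smul_eq_nsmul (ZMod n), ZMod.natCast_self, zero_smul,
      ofAdd_zero, map_one]
  · simp only [← map_pow, ← map_prod] at he
    have hsum : ∑ j, e j • Pi.single (M := fun _ => ZMod n) j 1 = 0 := by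
      simpa only [basis, ← ofAdd_nsmul, ← ofAdd_sum, ofAdd_eq_one] using
        (injective_iff_map_eq_one φ).mp hφ _ he
    have := congrFun hsum i
    rw [← ZMod.natCast_eq_zero_iff]
    simpa [Finset.sum_apply, Pi.single_apply] using this

theorem HasZModRankGE.of_mul_right {k s : ℕ} [NeZero n] [NeZero k] (h : HasZModRankGE G (n * k) s) :
    HasZModRankGE G n s := by
  obtain ⟨g, hg, hind⟩ := hasZModRankGE_iff_exists_independent.mp h
  refine hasZModRankGE_iff_exists_independent.mpr
    ⟨fun i => g i ^ k, fun i => by rw [← pow_mul, mul_comm, hg], fun e he i => ?_⟩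
  have hdvd : n * k ∣ e i * k :=
    mul_comm k (e i) ▸ hind (fun i => k * e i) (by simpa only [← pow_mul] using he) i
  exact Nat.dvd_of_mul_dvd_mul_right (NeZero.pos k) hdvd

theorem HasZModRankGE.pow_le_natCard [Finite G] {s : ℕ} (h : HasZModRankGE G n s) :
    n ^ s ≤ Nat.card G := by
  obtain ⟨φ, hφ⟩ := h
  simpa only [natCard_multiplicative_pi_zmod, Fintype.card_fin] using
    Nat.card_le_card_of_injective φ hφ

theorem dvd_of_prod_pow_eq_one (hn : n ≠ 0) (g : ι → G)
    (hprime : ∀ p : ℕ, p.Prime → p ∣ n →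
      ∀ e : ι → ℕ, ∏ i, g i ^ (n / p * e i) = 1 → ∀ i, p ∣ e i)
    (e : ι → ℕ) (he : ∏ i, g i ^ e i = 1) (i : ι) : n ∣ e i := by
  suffices ∀ m, m ∣ n → ∀ i, m ∣ e i from this n dvd_rfl i
  intro m
  induction m using induction_on_primes with
  | zero => exact fun h => absurd (zero_dvd_iff.mp h) hn
  | one => exact fun _ i => one_dvd _
  | prime_mul p m hp ih =>
    rintro ⟨k, rfl⟩
    choose f hf using ih ⟨p * k, by ring⟩
    have hdiv : p * m * k / p = k * m := Nat.div_eq_of_eq_mul_right hp.pos (by ring)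
    have hexp i : p * m * k / p * f i = e i * k := by rw [hdiv, hf i]; ring
    have hpf := hprime p hp ⟨m * k, by ring⟩ f <| by
      simp only [hexp, pow_mul, Finset.prod_pow, he, one_pow]
    exact fun i => by rw [hf i, mul_comm p]; exact Nat.mul_dvd_mul_left m (hpf i)

/-- Linear algebra over `ℤ/nℤ`: an independent family as long as a generating one generates. -/
theorem exists_eq_prod_pow_of_generates [NeZero n] (hG : ∀ x : G, x ^ n = 1) {κ : Type*}
    [Fintype κ] (hcard : Fintype.card ι = Fintype.card κ) (f : κ → G)
    (hf : ∀ x, ∃ a : κ → ℤ, x = ∏ i, f i ^ a i) (g : ι → G)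
    (hg : ∀ e : ι → ℕ, ∏ i, g i ^ e i = 1 → ∀ i, n ∣ e i) (x : G) :
    ∃ e : ι → ℕ, x = ∏ i, g i ^ e i := by
  have hsurj : Function.Surjective (zmodPowHom f fun i => hG (f i)) := fun x => by
    obtain ⟨a, rfl⟩ := hf x
    refine ⟨Multiplicative.ofAdd fun i => (a i : ZMod n), Finset.prod_congr rfl fun i _ => ?_⟩
    rw [toAdd_ofAdd, ← zpow_natCast, ZMod.val_intCast, ← zpow_eq_zpow_emod' _ (hG (f i))]
  have : Finite G := Finite.of_surjective _ hsurj
  have hbij := (zmodPowHom_injective (fun i => hG (g i)) hg).bijective_of_nat_card_le <| by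
    simpa only [natCard_multiplicative_pi_zmod, hcard] using
      Nat.card_le_card_of_surjective _ hsurj
  obtain ⟨v, rfl⟩ := hbij.surjective x
  exact ⟨fun i => (v.toAdd i).val, rfl⟩

end IndependentFamilies

section ClassGroups

open nonZeroDivisors in
theorem hasZModRankGE_classGroup {R : Type*} [CommRing R] [IsDedekindDomain R] {n s : ℕ}
    (hn : n ≠ 0) (x : Fin s → R) (hx : ∀ j, x j ≠ 0)
    (hpow : ∀ j, ∃ I : Ideal R, Ideal.span {x j} = I ^ n)
    (hind : ∀ p : ℕ, p.Prime → p ∣ n → ∀ (u : Rˣ) (β : R) (b : Fin s → ℕ),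
      u * ∏ j, x j ^ b j = β ^ p → ∀ j, p ∣ b j) :
    HasZModRankGE (ClassGroup R) n s := by
  have : NeZero n := ⟨hn⟩
  choose I hI using hpow
  have hmem j : I j ∈ (Ideal R)⁰ := mem_nonZeroDivisors_of_ne_zero fun h0 =>
    hx j <| Ideal.span_singleton_eq_bot.mp <| by rw [hI, h0, zero_pow hn, Ideal.zero_eq_bot]
  let J j : (Ideal R)⁰ := ⟨I j, hmem j⟩
  refine hasZModRankGE_iff_exists_independent.mpr ⟨fun j => ClassGroup.mk0 (J j), fun j => ?_,
    dvd_of_prod_pow_eq_one hn _ fun p hp hpn e he => ?_⟩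
  · rw [← map_pow, ClassGroup.mk0_eq_one_iff, SubmonoidClass.coe_pow, ← hI]
    exact ⟨⟨x j, rfl⟩⟩
  · simp only [← map_pow, ← map_prod] at he
    rw [ClassGroup.mk0_eq_one_iff, SubmonoidClass.coe_finsetProd] at he
    obtain ⟨β, hβ⟩ := he.principal
    rw [Ideal.submodule_span_eq] at hβ
    have hspan : Ideal.span {∏ j, x j ^ e j} = Ideal.span {β ^ p} := by
      rw [← Ideal.span_singleton_pow, ← hβ, ← Ideal.prod_span_singleton]
      simp only [← Ideal.span_singleton_pow, hI, SubmonoidClass.coe_pow, J, ← Finset.prod_pow,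
        ← pow_mul]
      exact Finset.prod_congr rfl fun j _ => by rw [mul_right_comm, Nat.div_mul_cancel hpn]
    obtain ⟨u, hu⟩ := Ideal.span_singleton_eq_span_singleton.mp hspan
    exact hind p hp hpn u β e (by rw [mul_comm, hu])

theorem exists_span_eq_pow_of_mul_eq_pow {R : Type*} [CommRing R] [IsDedekindDomain R] {n : ℕ}
    {x ν w η : R} (hη : IsUnit η) (hcop : IsCoprime x ν) (h : x * ν = w ^ n * η) :
    ∃ I : Ideal R, Ideal.span {x} = I ^ n := by
  refine exists_eq_pow_of_mul_eq_pow_of_coprime (b := Ideal.span {ν}) (c := Ideal.span {w})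
    (Ideal.isCoprime_span_singleton_iff x ν |>.mpr hcop) ?_
  rw [Ideal.span_singleton_mul_span_singleton, h, Ideal.span_singleton_mul_right_unit hη,
    Ideal.span_singleton_pow]

open NumberField.Units

variable {K : Type*} [Field K] [NumberField K] {ι : Type*} [Fintype ι]

/-- By Dirichlet's unit theorem the units modulo torsion and `n`-th powers are a quotient of
`(ℤ/nℤ) ^ rank K`, so an injective image of `(ℤ/nℤ) ^ ι` in them is everything. -/
theorem exists_unit_eq_torsion_mul_pow_mul_prod {n : ℕ} (hn : n ≠ 0)
    (hcard : Fintype.card ι = Units.rank K) (ε : ι → (𝓞 K)ˣ)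
    (hε : ∀ ζ ∈ torsion K, ∀ (η : (𝓞 K)ˣ) (a : ι → ℕ), ζ * ∏ i, ε i ^ a i = η ^ n → ∀ i, n ∣ a i)
    (u : (𝓞 K)ˣ) : ∃ ζ ∈ torsion K, ∃ (η : (𝓞 K)ˣ) (a : ι → ℕ), u = ζ * η ^ n * ∏ i, ε i ^ a i := by
  have : NeZero n := ⟨hn⟩
  let H : Subgroup (𝓞 K)ˣ := torsion K ⊔ (powMonoidHom n).range
  have hH {v : (𝓞 K)ˣ} (hv : (v : (𝓞 K)ˣ ⧸ H) = 1) :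
      ∃ ζ ∈ torsion K, ∃ η : (𝓞 K)ˣ, v = ζ * η ^ n := by
    obtain ⟨ζ, hζ, _, ⟨η, rfl⟩, rfl⟩ := Subgroup.mem_sup.mp ((QuotientGroup.eq_one_iff v).mp hv)
    exact ⟨ζ, hζ, η, rfl⟩
  have hpow (x : (𝓞 K)ˣ ⧸ H) : x ^ n = 1 := by
    obtain ⟨v, rfl⟩ := QuotientGroup.mk_surjective x
    exact (QuotientGroup.eq_one_iff (v ^ n)).mpr (Subgroup.mem_sup_right ⟨v, rfl⟩)
  have hfund (x : (𝓞 K)ˣ ⧸ H) :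
      ∃ a : Fin (Units.rank K) → ℤ, x = ∏ i, (fundSystem K i : (𝓞 K)ˣ ⧸ H) ^ a i := by
    obtain ⟨v, rfl⟩ := QuotientGroup.mk_surjective x
    obtain ⟨⟨ζ, a⟩, hv, -⟩ := exist_unique_eq_mul_prod K v
    have hζ : ((ζ : (𝓞 K)ˣ) : (𝓞 K)ˣ ⧸ H) = 1 :=
      (QuotientGroup.eq_one_iff _).mpr (Subgroup.mem_sup_left ζ.2)
    refine ⟨a, ?_⟩
    simp only [hv, QuotientGroup.mk_mul, hζ, QuotientGroup.mk_prod, QuotientGroup.mk_zpow]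
    exact one_mul (∏ i, (fundSystem K i : (𝓞 K)ˣ ⧸ H) ^ a i)
  have hind (a : ι → ℕ) (ha : ∏ i, (ε i : (𝓞 K)ˣ ⧸ H) ^ a i = 1) : ∀ i, n ∣ a i := by
    simp only [← QuotientGroup.mk_pow, ← QuotientGroup.mk_prod] at ha
    obtain ⟨ζ, hζ, η, hη⟩ := hH ha
    exact hε ζ⁻¹ (inv_mem hζ) η a (by rw [hη, inv_mul_cancel_left])
  obtain ⟨a, ha⟩ := exists_eq_prod_pow_of_generates hpow (hcard.trans (Fintype.card_fin _).symm) _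
    hfund _ hind u
  simp only [← QuotientGroup.mk_pow, ← QuotientGroup.mk_prod] at ha
  obtain ⟨ζ, hζ, η, hη⟩ := hH (v := u * (∏ i, ε i ^ a i)⁻¹) (by
    rw [QuotientGroup.mk_mul, QuotientGroup.mk_inv, ha, mul_inv_cancel])
  exact ⟨ζ, hζ, η, a, by rw [← hη, inv_mul_cancel_right]⟩

theorem hasZModRankGE_classGroup_of_card_eq_rank {n s : ℕ} (hn : n ≠ 0)
    (hcard : Fintype.card ι = Units.rank K) (ε : ι → (𝓞 K)ˣ) (x : Fin s → 𝓞 K)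
    (hx : ∀ j, x j ≠ 0) (hpow : ∀ j, ∃ I : Ideal (𝓞 K), Ideal.span {x j} = I ^ n)
    (hind : ∀ p : ℕ, p.Prime → p ∣ n → ∀ ζ ∈ torsion K, ∀ (a : ι → ℕ) (b : Fin s → ℕ) (β : 𝓞 K),
      (ζ : 𝓞 K) * (∏ i, (ε i : 𝓞 K) ^ a i) * ∏ j, x j ^ b j = β ^ p →
        (∀ i, p ∣ a i) ∧ ∀ j, p ∣ b j) :
    HasZModRankGE (ClassGroup (𝓞 K)) n s := by
  refine hasZModRankGE_classGroup hn x hx hpow fun p hp hpn u β b hβ => ?_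
  have hε (ζ : (𝓞 K)ˣ) (hζ : ζ ∈ torsion K) (η : (𝓞 K)ˣ) (a : ι → ℕ)
      (h : ζ * ∏ i, ε i ^ a i = η ^ p) : ∀ i, p ∣ a i := by
    refine (hind p hp hpn ζ hζ a 0 η ?_).1
    simpa using congrArg (Units.val : (𝓞 K)ˣ → 𝓞 K) h
  obtain ⟨ζ, hζ, η, a, rfl⟩ := exists_unit_eq_torsion_mul_pow_mul_prod hp.ne_zero hcard ε hε u
  refine (hind p hp hpn ζ hζ a b (β * (η⁻¹ : (𝓞 K)ˣ)) ?_).2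
  have hη : (η : 𝓞 K) ^ p * ((η⁻¹ : (𝓞 K)ˣ) : 𝓞 K) ^ p = 1 := by
    rw [← mul_pow, Units.mul_inv, one_pow]
  rw [mul_pow, ← hβ]
  push_cast
  linear_combination (-(ζ : 𝓞 K) * (∏ i, (ε i : 𝓞 K) ^ a i) * ∏ j, x j ^ b j) * hη

end ClassGroups

section RingHoms

/-- `θ` generates the number field `K` over `ℚ` and has minimal polynomial `f`; in other words, `θ`
identifies `K` with the stem field `ℚ[X]/(f)`. -/
structure IsGeneratingRoot (f : ℤ[X]) {K : Type*} [Field K] [NumberField K] (θ : 𝓞 K) : Prop where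
  adjoin_eq_top : Algebra.adjoin ℚ {(θ : K)} = ⊤
  minpoly_eq : minpoly ℤ θ = f

theorem exists_algHom_extending_of_mul_mem {R S F : Type*} [CommRing R] [CommRing S] [Algebra R S]
    [Field F] [Algebra R F] {T : Subalgebra R S} (ψ : T →ₐ[R] F) (δ : T)
    (hδ : ∀ z : S, (δ : S) * z ∈ T) (hψ : ψ δ ≠ 0) : ∃ φ : S →ₐ[R] F, ∀ t : T, φ t = ψ t := by
  let χ (z : S) : F := ψ ⟨δ * z, hδ z⟩ / ψ δ
  have hχ (z : S) : ψ δ * χ z = ψ ⟨δ * z, hδ z⟩ := mul_div_cancel₀ _ hψ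
  have hχT (t : T) : χ t = ψ t := mul_left_cancel₀ hψ <| by
    rw [hχ, ← map_mul]; rfl
  refine ⟨AlgHom.ofLinearMap ⟨⟨χ, fun x z => ?_⟩, fun c z => ?_⟩ ?_ fun x z => ?_, hχT⟩
  · refine mul_left_cancel₀ hψ ?_
    rw [mul_add, hχ, hχ, hχ, ← map_add]
    exact congrArg ψ (Subtype.ext (mul_add _ _ _))
  · refine mul_left_cancel₀ hψ ?_
    rw [RingHom.id_apply, mul_smul_comm, hχ, hχ, ← map_smul]
    exact congrArg ψ (Subtype.ext (mul_smul_comm _ _ _))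
  · exact (hχT 1).trans (map_one ψ)
  · refine mul_left_cancel₀ (mul_ne_zero hψ hψ) ?_
    calc ψ δ * ψ δ * χ (x * z) = ψ δ * ψ ⟨δ * (x * z), hδ _⟩ := by rw [mul_assoc, hχ]
      _ = ψ ⟨δ * x, hδ x⟩ * ψ ⟨δ * z, hδ z⟩ := by
        rw [← map_mul, ← map_mul]
        exact congrArg ψ (Subtype.ext (show (δ : S) * (δ * (x * z)) = δ * x * (δ * z) by ring))
      _ = ψ δ * ψ δ * (χ x * χ z) := by rw [← hχ, ← hχ]; ring

/-- The conductor of `ℤ[α]` contains `f'(α)`, so the homomorphism `ℤ[α] → F` sending `α` to a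
simple root of `f` extends to all integers. -/
theorem IsGeneratingRoot.exists_ringHom_apply_eq {f : ℤ[X]} {K F : Type*} [Field K] [NumberField K]
    [Field F] {α : 𝓞 K} (hα : IsGeneratingRoot f α) {r : F} (hr : aeval r f = 0)
    (hr' : aeval r (derivative f) ≠ 0) : ∃ φ : 𝓞 K →+* F, φ α = r := by
  obtain ⟨hadj, rfl⟩ := hα
  have hint : IsIntegral ℤ α := RingOfIntegers.isIntegral α
  let α' : Algebra.adjoin ℤ {α} := ⟨α, Algebra.self_mem_adjoin_singleton ℤ α⟩
  let pb := Algebra.adjoin.powerBasis' hint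
  have hgen : pb.gen = α' := Algebra.adjoin.powerBasis'_gen hint
  obtain ⟨ψ, hψ⟩ : ∃ ψ : Algebra.adjoin ℤ {α} →ₐ[ℤ] F, ψ α' = r := by
    refine ⟨pb.lift r ?_, hgen ▸ pb.lift_gen r _⟩
    rwa [← Algebra.adjoin.powerBasis'_minpoly_gen hint]
  let δ : Algebra.adjoin ℤ {α} := aeval α' (derivative (minpoly ℤ α))
  have hδ : (δ : 𝓞 K) = aeval α (derivative (minpoly ℤ α)) := (Subalgebra.aeval_coe _ α' _).symm
  have hcond : (δ : 𝓞 K) ∈ conductor ℤ α := by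
    refine Ideal.mul_le_right (I := differentIdeal ℤ (𝓞 K)) ?_
    rw [mul_comm, conductor_mul_differentIdeal ℤ ℚ K α hadj, hδ]
    exact Ideal.mem_span_singleton_self _
  obtain ⟨φ, hφ⟩ := exists_algHom_extending_of_mul_mem ψ δ hcond <| by
    rwa [← aeval_algHom_apply, hψ]
  exact ⟨φ, (hφ α').trans hψ⟩

theorem absNorm_ker_ringHom_zmod {S : Type*} [CommRing S] [IsDedekindDomain S] [Module.Free ℤ S]
    {l : ℕ} (φ : S →+* ZMod l) : Ideal.absNorm (RingHom.ker φ) = l := by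
  rw [Ideal.absNorm_apply, Submodule.cardQuot_apply]
  exact (Nat.card_congr
    (RingHom.quotientKerEquivOfSurjective (ZMod.ringHom_surjective φ)).toEquiv).trans
    (Nat.card_zmod l)

end RingHoms

section PrimesInResidueClasses

open ArithmeticFunction.vonMangoldt Filter Topology

variable {q : ℕ} (a : ZMod q)

theorem mul_residueClass_div_rpow_le {δ : ℝ} (hδ : δ ∈ Set.Ioc 0 1) (m : ℕ) :
    δ * (residueClass a m / (m : ℝ) ^ (1 + δ)) ≤
      {l : ℕ | l.Prime ∧ (l : ZMod q) = a}.indicator (fun l => 1 / (l : ℝ)) m +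
        (if m.Prime then 0 else residueClass a m) / m := by
  rcases Nat.eq_zero_or_pos m with rfl | hm
  · simp [Set.indicator_apply]
  have hm0 : (0 : ℝ) < m := Nat.cast_pos.mpr hm
  have hpow : (1 : ℝ) ≤ (m : ℝ) ^ δ := Real.one_le_rpow (Nat.one_le_cast.mpr hm) hδ.1.le
  have hsplit : δ * (residueClass a m / (m : ℝ) ^ (1 + δ)) =
      δ * residueClass a m / (m : ℝ) ^ δ / m := by
    rw [Real.rpow_add hm0, Real.rpow_one, mul_div_assoc, mul_div_assoc, div_div, mul_comm (m : ℝ)]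
  rw [hsplit]
  by_cases hp : m.Prime
  · rw [if_pos hp, zero_div, add_zero]
    by_cases hma : (m : ZMod q) = a
    · rw [Set.indicator_of_mem (show m ∈ {l : ℕ | l.Prime ∧ (l : ZMod q) = a} from ⟨hp, hma⟩)]
      gcongr
      have hlog : residueClass a m ≤ (m : ℝ) ^ δ / δ := calc
        residueClass a m ≤ Real.log m :=
          (residueClass_le a m).trans_eq (ArithmeticFunction.vonMangoldt_apply_prime hp)
        _ ≤ (m : ℝ) ^ δ / δ := Real.log_le_rpow_div hm0.le hδ.1
      rw [div_le_one (by positivity), mul_comm]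
      exact (le_div_iff₀ hδ.1).mp hlog
    · have hzero : residueClass a m = 0 :=
        Set.indicator_of_notMem (s := {l : ℕ | (l : ZMod q) = a}) hma _
      rw [hzero, mul_zero, zero_div, zero_div]
      exact Set.indicator_nonneg (fun _ _ => by positivity) _
  · rw [if_neg hp, Set.indicator_of_notMem fun h => hp h.1, zero_add]
    gcongr
    exact (div_le_self (mul_nonneg hδ.1.le (residueClass_nonneg a m)) hpow).trans
      (mul_le_of_le_one_left (residueClass_nonneg a m) hδ.2)

theorem tendsto_mul_residueClass_div_rpow (m : ℕ) :
    Tendsto (fun δ : ℝ => δ * (residueClass a m / (m : ℝ) ^ (1 + δ))) (𝓝[>] 0) (𝓝 0) := by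
  rcases eq_or_ne m 0 with rfl | hm
  · simp
  have hcont : ContinuousAt (fun δ : ℝ => δ * (residueClass a m / (m : ℝ) ^ (1 + δ))) 0 := by
    fun_prop (disch := positivity)
  simpa only [zero_mul] using hcont.tendsto.mono_left nhdsWithin_le_nhds

variable {a}

/-- As `δ → 0⁺`, the terms of `δ ∑ Λ(m) / m ^ (1 + δ)` tend to `0`; if the reciprocals of the primes
were summable they would do so dominatedly, against the simple pole of the series at `1`. -/
theorem not_summable_indicator_primes_residueClass [NeZero q] (ha : IsUnit a) :
    ¬ Summable ({l : ℕ | l.Prime ∧ (l : ZMod q) = a}.indicator fun l => 1 / (l : ℝ)) := by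
  intro hsum
  have hunit : Set.Ioc (0 : ℝ) 1 ∈ 𝓝[>] (0 : ℝ) := Ioc_mem_nhdsGT one_pos
  have hzero : Tendsto (fun δ : ℝ => ∑' m : ℕ, δ * (residueClass a m / (m : ℝ) ^ (1 + δ))) (𝓝[>] 0)
      (𝓝 (∑' _ : ℕ, (0 : ℝ))) := by
    refine tendsto_tsum_of_dominated_convergence
      (hsum.add (summable_residueClass_non_primes_div a)) (tendsto_mul_residueClass_div_rpow a) ?_
    filter_upwards [hunit] with δ hδ m
    rw [Real.norm_of_nonneg]
    · exact mul_residueClass_div_rpow_le a hδ m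
    · have := residueClass_nonneg a m
      have := hδ.1
      positivity
  obtain ⟨C, hC⟩ := LSeries_residueClass_lower_bound ha
  have hpole : Tendsto (fun δ : ℝ => (q.totient : ℝ)⁻¹ - C * δ) (𝓝[>] 0)
      (𝓝 ((q.totient : ℝ)⁻¹ - C * 0)) :=
    tendsto_const_nhds.sub (tendsto_const_nhds.mul (tendsto_id.mono_left nhdsWithin_le_nhds))
  have hle : (q.totient : ℝ)⁻¹ - C * 0 ≤ ∑' _ : ℕ, (0 : ℝ) := by
    refine le_of_tendsto_of_tendsto hpole hzero ?_
    filter_upwards [hunit] with δ hδ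
    have hδ0 : δ ≠ 0 := hδ.1.ne'
    have hbound := hC (x := 1 + δ) ⟨by linarith [hδ.1], by linarith [hδ.2]⟩
    rw [tsum_mul_left]
    calc (q.totient : ℝ)⁻¹ - C * δ = δ * ((q.totient : ℝ)⁻¹ / (1 + δ - 1) - C) := by
          rw [add_sub_cancel_left]; field_simp
      _ ≤ _ := mul_le_mul_of_nonneg_left hbound hδ.1.le
  have hpos : 0 < (q.totient : ℝ)⁻¹ := inv_pos.mpr (mod_cast q.totient.pos_of_neZero)
  rw [mul_zero, sub_zero, tsum_zero] at hle
  exact hpos.not_ge hle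

end PrimesInResidueClasses

section CountingIdeals

open Filter Topology

variable {M : Type*} [Field M] [NumberField M]

theorem eq_of_le_of_absNorm_prime {I J : Ideal (𝓞 M)} (hI : (Ideal.absNorm I).Prime) (hJ : J ≠ ⊤)
    (hle : I ≤ J) : I = J := by
  have hI0 : I ≠ ⊥ := fun h => hI.ne_zero (Ideal.absNorm_eq_zero_iff.mpr h)
  exact ((Ideal.isPrime_of_irreducible_absNorm hI).isMaximal hI0).eq_of_le hJ hle

/-- The ideal of norm `d` obtained by multiplying the chosen ideals `P l` of norm `l` over the prime
factorization of `d`. -/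
noncomputable def factorizationIdeal (P : ℕ → Ideal (𝓞 M)) (d : ℕ) : Ideal (𝓞 M) :=
  (d.primeFactorsList.map P).prod

variable {P Q : ℕ → Ideal (𝓞 M)}

theorem absNorm_factorizationIdeal {d : ℕ} (hd : d ≠ 0)
    (hP : ∀ l ∈ d.primeFactorsList, Ideal.absNorm (P l) = l) :
    Ideal.absNorm (factorizationIdeal P d) = d := by
  rw [factorizationIdeal, map_list_prod, List.map_map,
    List.map_congr_left (f := Ideal.absNorm ∘ P) (g := id) hP, List.map_id,
    Nat.prod_primeFactorsList hd]

theorem exists_eq_of_factorizationIdeal_le {d : ℕ}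
    (hP : ∀ l ∈ d.primeFactorsList, Ideal.absNorm (P l) = l) {I : Ideal (𝓞 M)} (hI : I.IsPrime)
    (hle : factorizationIdeal P d ≤ I) : ∃ l ∈ d.primeFactorsList, P l = I := by
  rw [factorizationIdeal, ← Multiset.prod_coe, ← Multiset.map_coe, hI.multiset_prod_map_le] at hle
  obtain ⟨l, hl, hle⟩ := hle
  refine ⟨l, hl, eq_of_le_of_absNorm_prime ?_ hI.ne_top hle⟩
  rw [hP l hl]
  exact Nat.prime_of_mem_primeFactorsList hl

variable {B : ℕ} {T : Finset ℕ}

theorem absNorm_eq_of_mem_primeFactorsList_one_add_mul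
    (hP : ∀ l : ℕ, l.Prime → ¬ l ∣ B → Ideal.absNorm (P l) = l) (k : ℕ) :
    ∀ l ∈ (1 + B * k).primeFactorsList, Ideal.absNorm (P l) = l := fun l hl =>
  have hlp := Nat.prime_of_mem_primeFactorsList hl
  hP l hlp fun hlB => hlp.not_dvd_one <| (Nat.dvd_add_left (hlB.mul_right k)).mp <|
    Nat.dvd_of_mem_primeFactorsList hl

theorem absNorm_factorizationIdeal_one_add_mul
    (hP : ∀ l : ℕ, l.Prime → ¬ l ∣ B → Ideal.absNorm (P l) = l) (k : ℕ) :
    Ideal.absNorm (factorizationIdeal P (1 + B * k)) = 1 + B * k :=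
  absNorm_factorizationIdeal (by lia) (absNorm_eq_of_mem_primeFactorsList_one_add_mul hP k)

theorem injOn_factorizationIdeal_mul (hB : B ≠ 0)
    (hP : ∀ l : ℕ, l.Prime → ¬ l ∣ B → Ideal.absNorm (P l) = l)
    (hQ : ∀ l ∈ T, l.Prime ∧ Ideal.absNorm (Q l) = l ∧ Q l ≠ P l) :
    Set.InjOn (fun x : (_ : ℕ) × ℕ => factorizationIdeal P (1 + B * x.2) * Q x.1)
      {x | x.1 ∈ T} := by
  rintro ⟨l, k⟩ hl ⟨l', k'⟩ hl' heq
  change factorizationIdeal P (1 + B * k) * Q l = factorizationIdeal P (1 + B * k') * Q l' at heq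
  obtain ⟨hlp, hnorm, hne⟩ := hQ l hl
  obtain ⟨hlp', hnorm', -⟩ := hQ l' hl'
  have hfactors := absNorm_eq_of_mem_primeFactorsList_one_add_mul hP
  have hprime : (Q l).IsPrime := Ideal.isPrime_of_irreducible_absNorm (by rwa [hnorm])
  obtain rfl : l = l' := by
    rcases hprime.mul_le.mp (heq ▸ Ideal.mul_le_right) with hle | hle
    · obtain ⟨q, hq, hqQ⟩ := exists_eq_of_factorizationIdeal_le (hfactors k') hprime hle
      obtain rfl : q = l := by rw [← hfactors k' q hq, hqQ, hnorm]
      exact absurd hqQ.symm hne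
    · rw [← hnorm, ← hnorm', eq_of_le_of_absNorm_prime (by rwa [hnorm']) hprime.ne_top hle]
  have hk : (1 + B * k) * l = (1 + B * k') * l := by
    simpa only [map_mul, absNorm_factorizationIdeal_one_add_mul hP, hnorm] using
      congrArg Ideal.absNorm heq
  rw [Nat.eq_of_mul_eq_mul_left (Nat.pos_of_ne_zero hB)
    (Nat.add_left_cancel (Nat.eq_of_mul_eq_mul_right hlp.pos hk))]

/-- The ideals counted on the left are the products of `Q l` with ideals of norm `1 + B * k`. -/
theorem sum_floor_le_natCard_absNorm_le (hB : B ≠ 0)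
    (hP : ∀ l : ℕ, l.Prime → ¬ l ∣ B → Ideal.absNorm (P l) = l)
    (hQ : ∀ l ∈ T, l.Prime ∧ Ideal.absNorm (Q l) = l ∧ Q l ≠ P l) {s : ℝ} (hs : 0 ≤ s) :
    ∑ l ∈ T, ⌊(1 / (B * l) : ℝ) * s⌋₊ ≤
      Nat.card {I : Ideal (𝓞 M) // (Ideal.absNorm I : ℝ) ≤ s} := by
  let E := (T.sigma fun l => Finset.range ⌊(1 / (B * l) : ℝ) * s⌋₊)
  have hfin : Finite {I : Ideal (𝓞 M) // (Ideal.absNorm I : ℝ) ≤ s} := by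
    simp_rw [← Nat.le_floor_iff hs]
    exact Ideal.finite_setOfPred_absNorm_le _
  have hle (x : E) :
      (Ideal.absNorm (factorizationIdeal P (1 + B * x.1.2) * Q x.1.1) : ℝ) ≤ s := by
    obtain ⟨⟨l, k⟩, hx⟩ := x
    obtain ⟨hl, hk⟩ := Finset.mem_sigma.mp hx
    have hlB : (0 : ℝ) < B * l :=
      mod_cast Nat.mul_pos (Nat.pos_of_ne_zero hB) (hQ l hl).1.pos
    rw [map_mul, absNorm_factorizationIdeal_one_add_mul hP, (hQ l hl).2.1]
    calc (((1 + B * k) * l : ℕ) : ℝ) ≤ ((B * (k + 1) * l : ℕ) : ℝ) := by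
          have : 1 ≤ B := Nat.one_le_iff_ne_zero.mpr hB
          gcongr
          lia
      _ = B * l * (k + 1 : ℕ) := by push_cast; ring
      _ ≤ B * l * (1 / (B * l) * s) := by
          gcongr
          exact (Nat.le_floor_iff (by positivity)).mp (Finset.mem_range.mp hk)
      _ = s := by rw [← mul_assoc, mul_one_div_cancel hlB.ne', one_mul]
  let F (x : E) : {I : Ideal (𝓞 M) // (Ideal.absNorm I : ℝ) ≤ s} := ⟨_, hle x⟩
  have hF : Function.Injective F := fun x x' h =>
    Subtype.ext <| injOn_factorizationIdeal_mul hB hP hQ (Finset.mem_sigma.mp x.2).1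
      (Finset.mem_sigma.mp x'.2).1 (congrArg Subtype.val h)
  simpa only [Nat.card_eq_fintype_card, Fintype.card_coe, E, Finset.card_sigma, Finset.card_range]
    using Nat.card_le_card_of_injective F hF

theorem summable_of_two_ideals (hB : B ≠ 0)
    (hM : ∀ l : ℕ, l.Prime → ¬ l ∣ B → ∃ I : Ideal (𝓞 M), Ideal.absNorm I = l) :
    Summable ({l : ℕ | l.Prime ∧ ∃ I J : Ideal (𝓞 M),
      I ≠ J ∧ Ideal.absNorm I = l ∧ Ideal.absNorm J = l}.indicator fun l => 1 / (l : ℝ)) := by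
  classical
  choose! P hP using hM
  set S : Set ℕ :=
    {l | l.Prime ∧ ∃ I J : Ideal (𝓞 M), I ≠ J ∧ Ideal.absNorm I = l ∧ Ideal.absNorm J = l}
  have hQ (l : ℕ) (hl : l ∈ S) : ∃ J : Ideal (𝓞 M), l.Prime ∧ Ideal.absNorm J = l ∧ J ≠ P l := by
    obtain ⟨hlp, I, J, hIJ, hI, hJ⟩ := hl
    rcases eq_or_ne I (P l) with rfl | hne
    exacts [⟨J, hlp, hJ, hIJ.symm⟩, ⟨I, hlp, hI, hne⟩]
  choose! Q hQ using hQ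
  obtain ⟨κ, hκ⟩ : ∃ κ : ℝ, Tendsto (fun s : ℝ =>
      (Nat.card {I : Ideal (𝓞 M) // (Ideal.absNorm I : ℝ) ≤ s} : ℝ) / s) atTop (𝓝 κ) :=
    ⟨_, NumberField.Ideal.tendsto_norm_le_div_atTop M⟩
  have hbound (T : Finset ℕ) (hT : ∀ l ∈ T, l.Prime ∧ Ideal.absNorm (Q l) = l ∧ Q l ≠ P l) :
      ∑ l ∈ T, (1 / (B * l) : ℝ) ≤ κ := by
    refine le_of_tendsto_of_tendsto
      (tendsto_finsetSum T fun l _ => tendsto_nat_floor_mul_div_atTop (by positivity)) hκ ?_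
    filter_upwards [eventually_gt_atTop 0] with s hs
    rw [← Finset.sum_div]
    gcongr
    exact_mod_cast sum_floor_le_natCard_absNorm_le hB hP hT hs.le
  refine summable_of_sum_le (c := B * κ) (Set.indicator_nonneg fun _ _ => by positivity) fun u => ?_
  rw [Finset.sum_indicator_eq_sum_filter]
  calc _ = B * ∑ l ∈ u with l ∈ S, (1 / (B * l) : ℝ) := by
        rw [Finset.mul_sum]
        refine Finset.sum_congr rfl fun l _ => ?_
        rw [← mul_div_assoc, mul_div_mul_left _ _ (Nat.cast_ne_zero.mpr hB)]
    _ ≤ B * κ := by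
        gcongr
        exact hbound _ fun l hl => hQ l (Finset.mem_filter.mp hl).2

end CountingIdeals

section PowerResidues

theorem minpoly_int_eq_of_irreducible {K : Type*} [Field K] [NumberField K] {α : 𝓞 K} {f : ℤ[X]}
    (hf : f.Monic) (hirr : Irreducible f) (hα : aeval α f = 0) : minpoly ℤ α = f := by
  have hint : IsIntegral ℤ α := RingOfIntegers.isIntegral α
  refine eq_of_monic_of_associated (minpoly.monic hint) hf ?_
  exact (minpoly.irreducible hint).associated_of_dvd hirr
    (minpoly.isIntegrallyClosed_dvd hint hα)

theorem exists_isGeneratingRoot {f : ℤ[X]} (hf : f.Monic) (hirr : Irreducible f) :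
    ∃ (K : IntermediateField ℚ ℂ) (_ : NumberField K) (θ : 𝓞 K), IsGeneratingRoot f θ := by
  have hdeg : f.degree ≠ 0 := (hf.degree_pos_of_not_isUnit hirr.not_isUnit).ne'
  obtain ⟨z, hz⟩ := IsAlgClosed.exists_aeval_eq_zero_of_injective ℂ
    (FaithfulSMul.algebraMap_injective ℤ ℂ) f hdeg
  have hint : IsIntegral ℤ z := ⟨f, hf, hz⟩
  have hintQ : IsIntegral ℚ z := hint.tower_top
  have hfin : FiniteDimensional ℚ (IntermediateField.adjoin ℚ {z}) :=
    IntermediateField.adjoin.finiteDimensional hintQ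
  have hnf : NumberField (IntermediateField.adjoin ℚ {z}) := ⟨⟩
  let ζ : IntermediateField.adjoin ℚ {z} := IntermediateField.AdjoinSimple.gen ℚ z
  have hζ : IsIntegral ℤ ζ :=
    (isIntegral_algebraMap_iff (FaithfulSMul.algebraMap_injective _ ℂ)).mp hint
  refine ⟨_, hnf, ⟨ζ, hζ⟩, ?_, minpoly_int_eq_of_irreducible hf hirr ?_⟩
  · have h := (IntermediateField.adjoin.powerBasis hintQ).adjoin_gen_eq_top
    rwa [IntermediateField.adjoin.powerBasis_gen] at h
  · refine FaithfulSMul.algebraMap_injective (𝓞 (IntermediateField.adjoin ℚ {z})) ℂ ?_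
    exact ((aeval_algebraMap_apply ℂ _ f).symm.trans hz).trans (map_zero _).symm

theorem irreducible_X_pow_sub_C_int {p : ℕ} (hp : p.Prime) {m : ℤ} (hm : ∀ k : ℤ, k ^ p ≠ m) :
    Irreducible (X ^ p - C m : ℤ[X]) := by
  rw [(monic_X_pow_sub_C m hp.ne_zero).irreducible_iff_irreducible_map_fraction_map (K := ℚ),
    Polynomial.map_sub, Polynomial.map_pow, map_X, map_C]
  refine X_pow_sub_C_irreducible_of_prime hp fun b hb => ?_
  have hbint : IsIntegral ℤ b := .of_pow hp.pos (hb ▸ isIntegral_algebraMap)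
  obtain ⟨k, rfl⟩ := IsIntegrallyClosed.isIntegral_iff.mp hbint
  exact hm k (FaithfulSMul.algebraMap_injective ℤ ℚ (by rw [map_pow, hb]))

theorem exists_ne_pow_eq {p l : ℕ} [Fact p.Prime] [Fact l.Prime] (hl : (l : ZMod p) = 1)
    {r : ZMod l} (hr : r ≠ 0) : ∃ r', r' ≠ 0 ∧ r' ≠ r ∧ r' ^ p = r ^ p := by
  obtain ⟨ζ, hζ⟩ : ∃ ζ : (ZMod l)ˣ, orderOf ζ = p := by
    refine exists_prime_orderOf_dvd_card p ?_
    rw [ZMod.card_units, ← ZMod.natCast_eq_zero_iff, Nat.cast_sub (Fact.out : l.Prime).one_le, hl,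
      Nat.cast_one, sub_self]
  refine ⟨r * ζ, mul_ne_zero hr ζ.ne_zero, fun h => ?_, ?_⟩
  · have hζ1 : ζ = 1 := Units.ext (mul_left_cancel₀ hr (h.trans (mul_one r).symm))
    exact (Fact.out : p.Prime).ne_one (by rw [← hζ, hζ1, orderOf_one])
  · rw [mul_pow, ← Units.val_pow_eq_pow_val, ← hζ, pow_orderOf_eq_one, Units.val_one, mul_one]

variable {p l : ℕ} {m : ℤ} {M : Type*} [Field M] [NumberField M] {α : 𝓞 M}

theorem IsGeneratingRoot.exists_ringHom_of_pow_eq [Fact l.Prime]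
    (hα : IsGeneratingRoot (X ^ p - C m) α) (hp : (p : ZMod l) ≠ 0) {r : ZMod l} (hr0 : r ≠ 0)
    (hr : r ^ p = m) : ∃ φ : 𝓞 M →+* ZMod l, φ α = r := by
  refine hα.exists_ringHom_apply_eq (by simp [hr]) ?_
  simp [derivative_X_pow, hp, hr0]

theorem IsGeneratingRoot.exists_ideals_ne_of_pow_eq [Fact p.Prime] [Fact l.Prime]
    (hα : IsGeneratingRoot (X ^ p - C m) α) (hp : (p : ZMod l) ≠ 0) (hl : (l : ZMod p) = 1)
    {r : ZMod l} (hr0 : r ≠ 0) (hr : r ^ p = m) :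
    ∃ I J : Ideal (𝓞 M), I ≠ J ∧ Ideal.absNorm I = l ∧ Ideal.absNorm J = l := by
  obtain ⟨r', hr0', hne, hr'⟩ := exists_ne_pow_eq hl hr0
  obtain ⟨φ, hφ⟩ := hα.exists_ringHom_of_pow_eq hp hr0 hr
  obtain ⟨φ', hφ'⟩ := hα.exists_ringHom_of_pow_eq hp hr0' (hr'.trans hr)
  refine ⟨_, _, fun h => hne ?_, absNorm_ker_ringHom_zmod φ, absNorm_ker_ringHom_zmod φ'⟩
  rw [← hφ, ← hφ', ZMod.ringHom_eq_of_ker_eq φ φ' h]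

/-- If `m` were a `p`-th power modulo almost all primes, then almost every prime would be the norm
of an ideal of `ℚ(m^(1/p))`, and almost every prime `l ≡ 1` modulo `p` the norm of two ideals:
too many, since `∑ 1 / l` over the latter primes diverges. -/
theorem exists_prime_forall_pow_ne (hp : p.Prime) (hm : ∀ k : ℤ, k ^ p ≠ m) {B : ℕ}
    (hB : B ≠ 0) : ∃ l : ℕ, l.Prime ∧ ¬ l ∣ B ∧ ∀ x : ZMod l, x ^ p ≠ m := by
  by_contra! hcon
  have hm0 : m ≠ 0 := fun h => hm 0 (by rw [h, zero_pow hp.ne_zero])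
  obtain ⟨M, _, α, hα⟩ := exists_isGeneratingRoot (monic_X_pow_sub_C m hp.ne_zero)
    (irreducible_X_pow_sub_C_int hp hm)
  set B' := B * (p * m.natAbs)
  have hB' : B' ≠ 0 := mul_ne_zero hB (mul_ne_zero hp.ne_zero (Int.natAbs_ne_zero.mpr hm0))
  have hpl (l : ℕ) (hlB : ¬ l ∣ B') : (p : ZMod l) ≠ 0 := by
    rw [Ne, ZMod.natCast_eq_zero_iff]
    exact fun h => hlB ((h.mul_right _).mul_left _)
  have hroot (l : ℕ) (hl : l.Prime) (hlB : ¬ l ∣ B') : ∃ r : ZMod l, r ≠ 0 ∧ r ^ p = m := by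
    obtain ⟨r, hr⟩ := hcon l hl fun h => hlB (h.mul_right _)
    refine ⟨r, fun hr0 => hlB ?_, hr⟩
    rw [hr0, zero_pow hp.ne_zero, eq_comm, ZMod.intCast_zmod_eq_zero_iff_dvd,
      Int.natCast_dvd] at hr
    exact (hr.mul_left _).mul_left _
  have hsum := summable_of_two_ideals (M := M) hB' fun l hl hlB => by
    have : Fact l.Prime := ⟨hl⟩
    obtain ⟨r, hr0, hr⟩ := hroot l hl hlB
    obtain ⟨φ, -⟩ := hα.exists_ringHom_of_pow_eq (hpl l hlB) hr0 hr
    exact ⟨_, absNorm_ker_ringHom_zmod φ⟩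
  have : Fact p.Prime := ⟨hp⟩
  refine not_summable_indicator_primes_residueClass (q := p) isUnit_one <|
    .of_norm_bounded_eventually_nat hsum ?_
  filter_upwards [Filter.eventually_gt_atTop B'] with l hl
  have hlB : ¬ l ∣ B' := Nat.not_dvd_of_pos_of_lt (Nat.pos_of_ne_zero hB') hl
  rw [norm_indicator_eq_indicator_norm, Set.indicator_apply]
  split_ifs with h
  · have : Fact l.Prime := ⟨h.1⟩
    obtain ⟨r, hr0, hr⟩ := hroot l h.1 hlB
    rw [Real.norm_of_nonneg (by positivity), Set.indicator_of_mem]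
    exact ⟨h.1, hα.exists_ideals_ne_of_pow_eq (hpl l hlB) h.2 hr0 hr⟩
  · exact Set.indicator_nonneg (fun _ _ => by positivity) l

end PowerResidues

section PowerDetecting

theorem exists_coprime_forall_pow_ne {ι : Type*} (T : Finset ι) {p : ι → ℕ} {m : ι → ℤ}
    (hp : ∀ i ∈ T, (p i).Prime) (hm : ∀ i ∈ T, ∀ k : ℤ, k ^ p i ≠ m i) {B : ℕ} (hB : B ≠ 0) :
    ∃ D : ℕ, D.Coprime B ∧
      ∀ i ∈ T, ∃ l : ℕ, l.Prime ∧ l ∣ D ∧ ∀ x : ZMod l, x ^ p i ≠ m i := by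
  have hex (i : ι) (hi : i ∈ T) := exists_prime_forall_pow_ne (hp i hi) (hm i hi) hB
  choose! l hl hlB hne using hex
  exact ⟨∏ i ∈ T, l i, .prod_left fun i hi => (hl i hi).coprime_iff_not_dvd.mpr (hlB i hi),
    fun i hi => ⟨l i, hl i hi, Finset.dvd_prod_of_mem l hi, hne i hi⟩⟩

theorem exists_pow_eq_mul_pow_mod {F : Type*} [Field F] {p u v : ℕ} {a b s : F} (ha : a ≠ 0)
    (hb : b ≠ 0) (h : ∃ x, x ^ p = s * a ^ u * b ^ v) :
    ∃ x, x ^ p = s * a ^ (u % p) * b ^ (v % p) := by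
  obtain ⟨x, hx⟩ := h
  refine ⟨x / (a ^ (u / p) * b ^ (v / p)), ?_⟩
  have hdenom : (a ^ (u / p) * b ^ (v / p)) ^ p ≠ 0 :=
    pow_ne_zero _ (mul_ne_zero (pow_ne_zero _ ha) (pow_ne_zero _ hb))
  rw [div_pow, div_eq_iff hdenom, hx]
  nth_rw 1 [← Nat.mod_add_div u p, ← Nat.mod_add_div v p]
  ring

theorem dvd_of_pow_eq_unit_mul_two_pow_mul_three_pow {p u v : ℕ} {s : ℤˣ} {k : ℤ}
    (hk : k ^ p = s * 2 ^ u * 3 ^ v) : p ∣ u ∧ p ∣ v := by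
  have habs : k.natAbs ^ p = 2 ^ u * 3 ^ v := by
    rw [← Int.natAbs_pow, hk, Int.natAbs_mul, Int.natAbs_mul, Int.units_natAbs, one_mul,
      Int.natAbs_pow, Int.natAbs_pow]
    rfl
  have hfac : p • k.natAbs.factorization = .single 2 u + .single 3 v := by
    rw [← Nat.factorization_pow, habs, Nat.factorization_mul (by positivity) (by positivity),
      Nat.prime_two.factorization_pow, Nat.prime_three.factorization_pow]
  exact ⟨⟨_, by simpa using (DFunLike.congr_fun hfac 2).symm⟩,
    ⟨_, by simpa using (DFunLike.congr_fun hfac 3).symm⟩⟩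

/-- For every prime `p ∣ n`, an integer `± 2^u * 3^v` that is a `p`-th power modulo every prime
divisor of `y` is a `p`-th power up to sign. -/
def PowerDetecting (n y : ℕ) : Prop :=
  ∀ p : ℕ, p.Prime → p ∣ n → ∀ (s : ℤˣ) (u v : ℕ),
    (∀ l : ℕ, l.Prime → l ∣ y → ∃ x : ZMod l, x ^ p = ((s * 2 ^ u * 3 ^ v : ℤ) : ZMod l)) →
      p ∣ u ∧ p ∣ v

theorem PowerDetecting.mono {n y z : ℕ} (hy : PowerDetecting n y) (hyz : y ∣ z) :
    PowerDetecting n z := fun p hp hpn s u v h =>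
  hy p hp hpn s u v fun l hl hly => h l hl (hly.trans hyz)

theorem exists_powerDetecting {n B : ℕ} (hn : n ≠ 0) (hB : B ≠ 0) (h6 : 6 ∣ B) :
    ∃ D : ℕ, D.Coprime B ∧ PowerDetecting n D := by
  classical
  let T : Finset (ℕ × ℤˣ × ℕ × ℕ) :=
    {q ∈ n.primeFactors ×ˢ Finset.univ ×ˢ Finset.range n ×ˢ Finset.range n |
      ¬ (q.1 ∣ q.2.2.1 ∧ q.1 ∣ q.2.2.2)}
  obtain ⟨D, hD, hres⟩ := exists_coprime_forall_pow_ne T (p := fun q => q.1)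
    (m := fun q => q.2.1 * 2 ^ q.2.2.1 * 3 ^ q.2.2.2)
    (fun q hq => Nat.prime_of_mem_primeFactors
      (Finset.mem_product.mp (Finset.mem_of_mem_filter q hq)).1)
    (fun q hq k hk => (Finset.mem_filter.mp hq).2
      (dvd_of_pow_eq_unit_mul_two_pow_mul_three_pow hk)) hB
  refine ⟨D, hD, fun p hp hpn s u v h => by_contra fun huv => ?_⟩
  have hmod (w : ℕ) : w % p < n :=
    (Nat.mod_lt w hp.pos).trans_le (Nat.le_of_dvd (Nat.pos_of_ne_zero hn) hpn)
  obtain ⟨l, hl, hlD, hne⟩ := hres (p, s, u % p, v % p) <| by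
    simpa [T, hp, hpn, hn, hmod, Nat.dvd_mod_iff, Int.units_eq_one_or] using huv
  have : Fact l.Prime := ⟨hl⟩
  have hsix (q : ℕ) (hq : q.Prime) (hq6 : q ∣ 6) : (q : ZMod l) ≠ 0 := by
    rw [Ne, ZMod.natCast_eq_zero_iff, Nat.prime_dvd_prime_iff_eq hl hq]
    rintro rfl
    exact hl.not_dvd_one (hD ▸ Nat.dvd_gcd hlD (hq6.trans h6))
  obtain ⟨x, hx⟩ := exists_pow_eq_mul_pow_mod (s := ((s : ℤ) : ZMod l))
    (hsix 2 Nat.prime_two (by norm_num)) (hsix 3 Nat.prime_three (by norm_num))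
    (by simpa using h l hl hlD)
  exact hne x (by simpa using hx)

/-- The parameters `y` for which Shanks's simplest cubic field with `2 * A = y ^ n + 3` is shown to
have two independent ideal classes of order `n`. -/
structure IsAdmissible (n y : ℕ) : Prop where
  odd : Odd y
  not_three_dvd : ¬ 3 ∣ y
  cast_zmod_thirteen : (y : ZMod 13) = 1
  powerDetecting : PowerDetecting n y

instance fact_prime_thirteen : Fact (Nat.Prime 13) := ⟨by norm_num⟩

theorem exists_isAdmissible {n : ℕ} (hn : n ≠ 0) : ∃ y : ℕ, IsAdmissible n y := by
  obtain ⟨D, hD, hdet⟩ := exists_powerDetecting (B := 78) hn (by norm_num) (by norm_num)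
  have hcop (q : ℕ) (hq : q.Prime) (hq78 : q ∣ 78) : ¬ q ∣ D := fun hqD =>
    hq.not_dvd_one (hD ▸ Nat.dvd_gcd hqD hq78)
  have h2 := hcop 2 Nat.prime_two (by norm_num)
  have h3 := hcop 3 Nat.prime_three (by norm_num)
  have h13 : (D : ZMod 13) ≠ 0 := by
    rw [Ne, ZMod.natCast_eq_zero_iff]
    exact hcop 13 Fact.out (by norm_num)
  refine ⟨D ^ 12, ⟨(Nat.odd_iff.mpr (Nat.two_dvd_ne_zero.mp h2)).pow,
    fun h => h3 (Nat.prime_three.dvd_of_dvd_pow h), ?_,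
    hdet.mono (dvd_pow_self D (by norm_num))⟩⟩
  rw [Nat.cast_pow]
  exact ZMod.pow_card_sub_one_eq_one h13

end PowerDetecting

section SimplestCubic

/-- The polynomial defining Shanks's simplest cubic field with parameter `A`. -/
noncomputable def simplestCubic (A : ℤ) : ℤ[X] := X ^ 3 + C A * X ^ 2 + C (A - 3) * X - 1

variable {A : ℤ}

theorem monic_simplestCubic (A : ℤ) : (simplestCubic A).Monic := by
  rw [simplestCubic]
  monicity!

theorem natDegree_simplestCubic (A : ℤ) : (simplestCubic A).natDegree = 3 := by
  rw [simplestCubic]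
  compute_degree!

theorem map_simplestCubic {R : Type*} [CommRing R] (A : ℤ) :
    (simplestCubic A).map (algebraMap ℤ R) =
      X ^ 3 + C (A : R) * X ^ 2 + C ((A : R) - 3) * X - 1 := by
  simp [simplestCubic, map_ofNat]

theorem aeval_simplestCubic {R : Type*} [CommRing R] (A : ℤ) (r : R) :
    aeval r (simplestCubic A) = r ^ 3 + A * r ^ 2 + (A - 3) * r - 1 := by
  rw [← aeval_map_algebraMap R, map_simplestCubic]
  simp

theorem aeval_derivative_simplestCubic {R : Type*} [CommRing R] (A : ℤ) (r : R) :
    aeval r (derivative (simplestCubic A)) = 3 * r ^ 2 + 2 * A * r + (A - 3) := by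
  rw [← aeval_map_algebraMap R, ← derivative_map, map_simplestCubic]
  simp only [derivative_sub, derivative_add, derivative_mul, derivative_X_pow_succ, derivative_X,
    derivative_C, derivative_one, coe_aeval_eq_eval, eval_add, eval_sub, eval_mul, eval_pow, eval_X,
    eval_C, eval_one, eval_zero, Nat.cast_ofNat, Nat.cast_one]
  ring

theorem irreducible_simplestCubic (A : ℤ) : Irreducible (simplestCubic A) := by
  have hmonic := monic_simplestCubic A
  rw [hmonic.irreducible_iff_irreducible_map_fraction_map (K := ℚ)]
  refine irreducible_of_degree_le_three_of_not_isRoot ?_ fun x hx => ?_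
  · rw [hmonic.natDegree_map, natDegree_simplestCubic]
    decide
  rw [IsRoot, eval_map_algebraMap] at hx
  obtain ⟨z, rfl⟩ := isInteger_of_is_root_of_monic hmonic hx
  rw [aeval_algebraMap_apply, map_eq_zero_iff _ (FaithfulSMul.algebraMap_injective ℤ ℚ),
    aeval_simplestCubic] at hx
  have hz : z ∣ 1 := ⟨z ^ 2 + A * z + (A - 3), by linear_combination -hx⟩
  rcases Int.isUnit_iff.mp (isUnit_of_dvd_one hz) with rfl | rfl <;> lia

theorem irreducible_map_simplestCubic (A : ℤ) :
    Irreducible ((simplestCubic A).map (algebraMap ℤ ℚ)) :=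
  (monic_simplestCubic A).irreducible_iff_irreducible_map_fraction_map.mp
    (irreducible_simplestCubic A)

namespace IsGeneratingRoot

variable {K : Type*} [Field K] [NumberField K] {θ : 𝓞 K} (hθ : IsGeneratingRoot (simplestCubic A) θ)

include hθ

theorem simplestCubic_eq_zero : θ ^ 3 + A * θ ^ 2 + (A - 3) * θ - 1 = 0 := by
  rw [← aeval_simplestCubic, ← hθ.minpoly_eq, minpoly.aeval]

theorem isUnit_root : IsUnit θ :=
  .of_mul_eq_one (θ ^ 2 + A * θ + (A - 3)) (by linear_combination hθ.simplestCubic_eq_zero)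

theorem isUnit_root_add_one : IsUnit (θ + 1) :=
  .of_mul_eq_one (-(θ ^ 2 + (A - 1) * θ - 2))
    (by linear_combination -hθ.simplestCubic_eq_zero)

theorem sub_one_mul_add_two_mul :
    (θ - 1) * ((θ + 2) * (2 * θ + 1)) = (2 * A - 3) * -(θ * (θ + 1)) := by
  linear_combination 2 * hθ.simplestCubic_eq_zero

theorem exists_ringHom_apply_eq_of_two_mul_eq_three {F : Type*} [Field F] (h2 : (2 : F) ≠ 0)
    (h3 : (3 : F) ≠ 0) (hA : 2 * (A : F) = 3) {r : F} (hr : (r - 1) * (r + 2) = 0) :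
    ∃ φ : 𝓞 K →+* F, φ θ = r := by
  refine hθ.exists_ringHom_apply_eq ?_ fun h => mul_ne_zero h3 h3 ?_
  · rw [aeval_simplestCubic]
    refine mul_left_cancel₀ h2 ?_
    linear_combination (r ^ 2 + r) * hA + (2 * r + 1) * hr
  · rw [aeval_derivative_simplestCubic] at h
    linear_combination 2 * h - (2 * r + 1) * hA - 6 * hr

theorem map_simplestCubic_eq_mul : ((simplestCubic A).map (algebraMap ℤ ℚ)).map (algebraMap ℚ K) =
    (X - C (θ : K)) * (X - C ((θ : K) ^ 2 + (A - 1) * θ - 2)) *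
      (X - C (-(θ : K) ^ 2 - A * θ + 2 - A)) := by
  have heq : (θ : K) ^ 3 + A * θ ^ 2 + (A - 3) * θ - 1 = 0 := by
    rw [← aeval_simplestCubic, aeval_algebraMap_apply, ← hθ.minpoly_eq, minpoly.aeval, map_zero]
  have hconj : ((θ : K) ^ 2 + (A - 1) * θ - 2) * (-θ ^ 2 - A * θ + 2 - A) =
      θ ^ 2 + A * θ + (A - 3) := by
    linear_combination (1 - A - (θ : K)) * heq
  have hconjC := congrArg (C : K → K[X]) hconj
  have heqC := congrArg (C : K → K[X]) heq
  rw [Polynomial.map_map, ← IsScalarTower.algebraMap_eq, map_simplestCubic]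
  simp only [map_add, map_sub, map_mul, map_neg, map_pow, map_one, map_ofNat, map_zero] at *
  linear_combination (C (θ : K) - X) * hconjC + heqC

theorem isSplittingField_simplestCubic :
    ((simplestCubic A).map (algebraMap ℤ ℚ)).IsSplittingField ℚ K where
  splits' := by
    rw [hθ.map_simplestCubic_eq_mul]
    exact ((Splits.X_sub_C _).mul (Splits.X_sub_C _)).mul (Splits.X_sub_C _)
  adjoin_rootSet' := by
    rw [eq_top_iff, ← hθ.adjoin_eq_top]
    refine Algebra.adjoin_mono ?_
    rw [Set.singleton_subset_iff, mem_rootSet]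
    refine ⟨((monic_simplestCubic A).map _).ne_zero, ?_⟩
    rw [aeval_map_algebraMap, aeval_algebraMap_apply, ← hθ.minpoly_eq, minpoly.aeval, map_zero]

theorem finrank_eq_three : Module.finrank ℚ K = 3 := by
  have hint : IsIntegral ℚ (θ : K) := (RingOfIntegers.isIntegral_coe θ).tower_top
  have htop : IntermediateField.adjoin ℚ {(θ : K)} = ⊤ := by
    rw [← IntermediateField.toSubalgebra_inj,
      IntermediateField.adjoin_simple_toSubalgebra_of_isAlgebraic hint.isAlgebraic,
      hθ.adjoin_eq_top, IntermediateField.top_toSubalgebra]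
  have hminpoly : minpoly ℚ (θ : K) = (simplestCubic A).map (algebraMap ℤ ℚ) := by
    rw [← hθ.minpoly_eq, ← RingOfIntegers.minpoly_coe]
    exact minpoly.isIntegrallyClosed_eq_field_fractions' ℚ (RingOfIntegers.isIntegral_coe θ)
  rw [← (Field.primitive_element_iff_minpoly_natDegree_eq ℚ (θ : K)).mp htop, hminpoly,
    (monic_simplestCubic A).natDegree_map, natDegree_simplestCubic]

theorem isGalois : IsGalois ℚ K :=
  have := hθ.isSplittingField_simplestCubic
  .of_separable_splitting_field (irreducible_map_simplestCubic A).separable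

theorem nonempty_galoisGroup_mulEquiv : Nonempty ((K ≃ₐ[ℚ] K) ≃* Multiplicative (ZMod 3)) := by
  have := hθ.isGalois
  have : Fact (Nat.Prime 3) := ⟨Nat.prime_three⟩
  have hcard : Nat.card (K ≃ₐ[ℚ] K) = 3 := by
    rw [IsGalois.card_aut_eq_finrank, hθ.finrank_eq_three]
  exact ⟨mulEquivOfPrimeCardEq hcard (Nat.card_zmod 3)⟩

theorem odd_finrank : Odd (Module.finrank ℚ K) := by
  rw [hθ.finrank_eq_three]
  decide

theorem units_rank_eq_two : Units.rank K = 2 := by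
  have := hθ.isGalois
  have := IsUnramifiedAtInfinitePlaces_of_odd_finrank hθ.odd_finrank
  rw [Units.rank, IsUnramifiedAtInfinitePlaces.card_infinitePlace ℚ K, hθ.finrank_eq_three]
  simp

end IsGeneratingRoot

theorem totallyReal_of_odd_finrank {K : Type*} [Field K] [NumberField K] [IsGalois ℚ K]
    (h : Odd (Module.finrank ℚ K)) : TotallyReal K := by
  intro φ x
  have hunram := IsUnramifiedAtInfinitePlaces_of_odd_finrank h
  have hreal : (InfinitePlace.mk φ).IsReal := by
    refine (InfinitePlace.isUnramified_iff.mp (hunram.isUnramified (.mk φ))).resolve_right ?_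
    rw [InfinitePlace.not_isComplex_iff_isReal]
    exact IsTotallyReal.isReal _
  exact Complex.conj_eq_iff_im.mp (RingHom.congr_fun (InfinitePlace.isReal_mk_iff.mp hreal) x)

end SimplestCubic

section Independence

theorem exists_pow_eq_of_mul_pow_eq_pow {R : Type*} [CommRing R] [IsDomain R]
    [IsIntegrallyClosed R] {p : ℕ} (hp : p ≠ 0) {x ν w η μ β : R} (hw : w ≠ 0)
    (hx : x * ν = w ^ p * η) {c : ℕ} (h : μ * x ^ c = β ^ p) :
    ∃ g, g ^ p = μ * η ^ c * ν ^ (c * (p - 1)) := by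
  have hcp : c + c * (p - 1) = c * p := by rw [← mul_one_add, Nat.add_sub_of_le (by lia)]
  have hmul : (β * ν ^ c) ^ p = (w ^ c) ^ p * (μ * η ^ c * ν ^ (c * (p - 1))) :=
    calc (β * ν ^ c) ^ p = μ * (x * ν) ^ c * ν ^ (c * (p - 1)) := by
          rw [mul_pow, ← h, ← pow_mul, ← hcp, pow_add]
          ring
      _ = _ := by
          rw [hx]
          ring
  obtain ⟨g, hg⟩ := (IsIntegrallyClosed.pow_dvd_pow_iff hp).mp ⟨_, hmul⟩
  rw [hg, mul_pow] at hmul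
  exact ⟨g, mul_left_cancel₀ (pow_ne_zero p (pow_ne_zero c hw)) hmul⟩

theorem dvd_and_dvd_of_dvd_add_two_mul {p c d : ℕ} (hp : p.Prime) (hp3 : p ≠ 3)
    (hc : p ∣ c + 2 * (d * (p - 1))) (hd : p ∣ d + 2 * (c * (p - 1))) : p ∣ c ∧ p ∣ d := by
  have hp1 : ((p - 1 : ℕ) : ZMod p) = -1 := by
    rw [Nat.cast_sub hp.one_le, CharP.cast_eq_zero, Nat.cast_one, zero_sub]
  have : Fact p.Prime := ⟨hp⟩
  have h3 : (3 : ZMod p) ≠ 0 := by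
    exact_mod_cast fun h => hp3 ((Nat.prime_dvd_prime_iff_eq hp Nat.prime_three).mp
      ((ZMod.natCast_eq_zero_iff 3 p).mp h))
  simp only [← ZMod.natCast_eq_zero_iff, Nat.cast_add, Nat.cast_mul, Nat.cast_ofNat, hp1] at *
  constructor <;> refine (mul_eq_zero.mp ?_).resolve_left h3
  · linear_combination -hc - 2 * hd
  · linear_combination -hd - 2 * hc

theorem IsAdmissible.cast_eq_two {A : ℤ} {n y : ℕ} (hy : IsAdmissible n y)
    (hA : 2 * A = (y : ℤ) ^ n + 3) : (A : ZMod 13) = 2 := by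
  have hA' : 2 * (A : ZMod 13) = (y : ZMod 13) ^ n + 3 := by
    exact_mod_cast congrArg (Int.cast (R := ZMod 13)) hA
  rw [hy.cast_zmod_thirteen, one_pow] at hA'
  have hunit : IsUnit (2 : ZMod 13) := by decide
  exact hunit.mul_left_cancel (hA'.trans (by decide))

namespace IsGeneratingRoot

variable {A : ℤ} {K : Type*} [Field K] [NumberField K] {θ : 𝓞 K} {n y p : ℕ}
  (hθ : IsGeneratingRoot (simplestCubic A) θ) (hy : IsAdmissible n y) (hA : 2 * A = (y : ℤ) ^ n + 3)

include hθ hA in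
theorem sub_one_mul_add_two_mul_eq_pow_mul :
    (θ - 1) * ((θ + 2) * (2 * θ + 1)) = (y : 𝓞 K) ^ n * -(θ * (θ + 1)) := by
  have hA' : 2 * (A : 𝓞 K) = (y : 𝓞 K) ^ n + 3 := by
    exact_mod_cast congrArg (Int.cast (R := 𝓞 K)) hA
  rw [hθ.sub_one_mul_add_two_mul, hA', add_sub_cancel_right]

include hθ hy hA in
theorem exists_ringHom_zmod_apply_eq (hn : n ≠ 0) {l : ℕ} [Fact l.Prime] (hly : l ∣ y) {r : ℤ}
    (hr : (r - 1) * (r + 2) = 0) : ∃ φ : 𝓞 K →+* ZMod l, φ θ = r := by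
  have hl : l.Prime := Fact.out
  have hne : ∀ q, q.Prime → ¬ q ∣ y → (q : ZMod l) ≠ 0 := fun q hq hqy h =>
    hqy ((Nat.prime_dvd_prime_iff_eq hl hq).mp ((ZMod.natCast_eq_zero_iff q l).mp h) ▸ hly)
  refine hθ.exists_ringHom_apply_eq_of_two_mul_eq_three
    (hne 2 Nat.prime_two hy.odd.not_two_dvd_nat) (hne 3 Nat.prime_three hy.not_three_dvd) ?_
    (mod_cast congrArg (Int.cast (R := ZMod l)) hr)
  have hyl : (y : ZMod l) = 0 := (ZMod.natCast_eq_zero_iff y l).mpr hly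
  have hAl : 2 * (A : ZMod l) = (y : ZMod l) ^ n + 3 := by
    exact_mod_cast congrArg (Int.cast (R := ZMod l)) hA
  rw [hAl, hyl, zero_pow hn, zero_add]

section Exponents

variable (hn : n ≠ 0) (hp : p.Prime) (hpn : p ∣ n) {s : ℤˣ} {a b c d : ℕ} {β : 𝓞 K}

include hθ hy hA hn hp hpn

theorem dvd_and_dvd_of_pow_eq {r : ℤ} (hr : (r - 1) * (r + 2) = 0) {u v : ℕ} {z g : 𝓞 K}
    (hz : ∀ (l : ℕ) (φ : 𝓞 K →+* ZMod l), φ θ = r → φ z = (s * 2 ^ u * 3 ^ v : ℤ))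
    (hg : g ^ p = z) : p ∣ u ∧ p ∣ v := by
  refine hy.powerDetecting p hp hpn s u v fun l hl hly => ?_
  have : Fact l.Prime := ⟨hl⟩
  obtain ⟨φ, hφ⟩ := hθ.exists_ringHom_zmod_apply_eq hy hA hn hly hr
  exact ⟨φ g, by rw [← map_pow, hg, hz l φ hφ]⟩

variable (hβ : ((s : ℤ) : 𝓞 K) * θ ^ a * (θ + 1) ^ b * (θ - 1) ^ c * (θ + 2) ^ d = β ^ p)

include hβ

/-- Modulo a prime above `y` with `θ ↦ 1` the factor `θ - 1` vanishes. Since its product with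
`(θ + 2)(2θ + 1)` is `yⁿ` times a unit, `(θ - 1) ^ c` can be replaced, up to `p`-th powers, by
elements that do not vanish there. -/
theorem dvd_and_dvd_of_apply_eq_one : p ∣ b + c ∧ p ∣ d + 2 * (c * (p - 1)) := by
  obtain ⟨m, rfl⟩ := hpn
  have hx := hθ.sub_one_mul_add_two_mul_eq_pow_mul hA
  rw [pow_mul'] at hx
  have hμ : ((s : ℤ) * θ ^ a * (θ + 1) ^ b * (θ + 2) ^ d) * (θ - 1) ^ c = β ^ p := by
    rw [← hβ]
    ring
  obtain ⟨g, hg⟩ := exists_pow_eq_of_mul_pow_eq_pow hp.ne_zero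
    (pow_ne_zero m (Nat.cast_ne_zero.mpr hy.odd.pos.ne')) hx hμ
  refine hθ.dvd_and_dvd_of_pow_eq hy hA hn hp (dvd_mul_right p m) (r := 1) (by norm_num)
    (s := s * (-1) ^ c) (fun l φ hφ => ?_) hg
  have hunit : (-(1 * (1 + 1)) : ZMod l) = -1 * 2 := by ring
  have hcofactor : ((1 + 2) * (2 * 1 + 1) : ZMod l) = 3 ^ 2 := by ring
  simp only [map_mul, map_pow, map_add, map_neg, map_one, map_intCast, map_ofNat, hφ,
    Int.cast_one]
  rw [hunit, hcofactor, mul_pow, ← pow_mul]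
  push_cast
  ring

theorem dvd_and_dvd_of_apply_eq_neg_two : p ∣ a + d ∧ p ∣ c + 2 * (d * (p - 1)) := by
  obtain ⟨m, rfl⟩ := hpn
  have hx : (θ + 2) * ((θ - 1) * (2 * θ + 1)) = ((y : 𝓞 K) ^ m) ^ p * -(θ * (θ + 1)) := by
    rw [← pow_mul', ← hθ.sub_one_mul_add_two_mul_eq_pow_mul hA]
    ring
  obtain ⟨g, hg⟩ := exists_pow_eq_of_mul_pow_eq_pow hp.ne_zero
    (pow_ne_zero m (Nat.cast_ne_zero.mpr hy.odd.pos.ne')) hx hβ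
  refine hθ.dvd_and_dvd_of_pow_eq hy hA hn hp (dvd_mul_right p m) (r := -2) (by norm_num)
    (s := s * (-1) ^ (a + b + c + d)) (fun l φ hφ => ?_) hg
  have hroot : (-2 : ZMod l) = -1 * 2 := by ring
  have hroot_add_one : (-2 + 1 : ZMod l) = -1 := by ring
  have hroot_sub_one : (-2 - 1 : ZMod l) = -1 * 3 := by ring
  have hunit : (-(-2 * (-2 + 1)) : ZMod l) = -1 * 2 := by ring
  have hcofactor : ((-2 - 1) * (2 * -2 + 1) : ZMod l) = 3 ^ 2 := by ring
  simp only [map_mul, map_pow, map_add, map_sub, map_neg, map_one, map_intCast, map_ofNat, hφ,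
    Int.cast_neg, Int.cast_ofNat]
  rw [hunit, hcofactor, hroot_add_one, hroot_sub_one, hroot]
  simp only [mul_pow, ← pow_mul]
  push_cast
  ring

end Exponents

include hθ hy hA in
/-- The prime `13`, above which `θ ↦ 2`, supplies the congruence that is missing for `p = 3`: there
`θ, θ + 1, θ + 2` become `2, 2 ^ 4, 2 ^ 2`, and `2 ^ 4` has order `3`. -/
theorem three_dvd_of_eq_pow_three {s : ℤˣ} {a b c d : ℕ} {β : 𝓞 K}
    (hβ : ((s : ℤ) : 𝓞 K) * θ ^ a * (θ + 1) ^ b * (θ - 1) ^ c * (θ + 2) ^ d = β ^ 3) :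
    3 ∣ a + 4 * b + 2 * d := by
  have hA13 : (A : ZMod 13) = 2 := hy.cast_eq_two hA
  obtain ⟨φ, hφ⟩ := hθ.exists_ringHom_apply_eq (r := (2 : ZMod 13))
    (by rw [aeval_simplestCubic, hA13]; decide)
    (by rw [aeval_derivative_simplestCubic, hA13]; decide)
  have hsign : (((s : ℤ) : ZMod 13)) ^ 4 = 1 := by
    rcases Int.units_eq_one_or s with rfl | rfl <;> rfl
  have hval : φ β ^ 12 = 3 ^ (a + 4 * b + 2 * d) :=
    calc φ β ^ 12 = φ (β ^ 3) ^ 4 := by rw [map_pow, ← pow_mul]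
      _ = ((s : ℤ) : ZMod 13) ^ 4 * (2 ^ 4) ^ (a + 4 * b + 2 * d) := by
        have h3 : (2 + 1 : ZMod 13) = 2 ^ 4 := by decide
        have h1 : (2 - 1 : ZMod 13) = 1 := by decide
        have h4 : (2 + 2 : ZMod 13) = 2 ^ 2 := by decide
        rw [← hβ]
        simp only [map_mul, map_pow, map_add, map_sub, map_one, map_intCast, map_ofNat, hφ]
        rw [h3, h1, h4, one_pow]
        simp only [← pow_mul, mul_pow, pow_add]
        ring
      _ = _ := by
        rw [hsign, one_mul]
        rfl
  have hne : φ β ≠ 0 := fun h => by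
    rw [h, zero_pow (by norm_num)] at hval
    exact pow_ne_zero _ (by decide) hval.symm
  rw [ZMod.pow_card_sub_one_eq_one hne] at hval
  have horder : orderOf (3 : ZMod 13) = 3 := orderOf_eq_prime (by decide) (by decide)
  exact horder ▸ orderOf_dvd_of_pow_eq_one hval.symm

include hθ hy hA in
theorem dvd_of_eq_pow (hn : n ≠ 0) (hp : p.Prime) (hpn : p ∣ n) {s : ℤˣ} {a b c d : ℕ} {β : 𝓞 K}
    (hβ : ((s : ℤ) : 𝓞 K) * θ ^ a * (θ + 1) ^ b * (θ - 1) ^ c * (θ + 2) ^ d = β ^ p) :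
    (p ∣ a ∧ p ∣ b) ∧ p ∣ c ∧ p ∣ d := by
  obtain ⟨hbc, hdc⟩ := hθ.dvd_and_dvd_of_apply_eq_one hy hA hn hp hpn hβ
  obtain ⟨had, hcd⟩ := hθ.dvd_and_dvd_of_apply_eq_neg_two hy hA hn hp hpn hβ
  obtain ⟨hc, hd⟩ : p ∣ c ∧ p ∣ d := by
    by_cases hp3 : p = 3
    · subst hp3
      have := hθ.three_dvd_of_eq_pow_three hy hA hβ
      lia
    · exact dvd_and_dvd_of_dvd_add_two_mul hp hp3 hcd hdc
  exact ⟨⟨(Nat.dvd_add_left hd).mp had, (Nat.dvd_add_left hc).mp hbc⟩, hc, hd⟩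

end IsGeneratingRoot

end Independence

section ClassGroupRank

variable {A : ℤ} {K : Type*} [Field K] [NumberField K] {θ : 𝓞 K} {n y : ℕ}

theorem isCoprime_pow_nine {R : Type*} [CommRing R] (hy : ¬ 3 ∣ y) :
    IsCoprime ((y : R) ^ n) 9 := by
  have hcop : Nat.Coprime (y ^ n) (3 ^ 2) :=
    ((Nat.prime_three.coprime_iff_not_dvd.mpr hy).symm).pow n 2
  simpa using (Nat.isCoprime_iff_coprime.mpr hcop).map (Int.castRingHom R)

namespace IsGeneratingRoot

variable (hθ : IsGeneratingRoot (simplestCubic A) θ) (hA : 2 * A = (y : ℤ) ^ n + 3)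

include hθ hA

theorem exists_span_eq_pow (hy : ¬ 3 ∣ y) {x ν k : 𝓞 K}
    (hx : x * ν = (θ - 1) * ((θ + 2) * (2 * θ + 1))) (hν : ν = 9 + x * k) :
    ∃ I : Ideal (𝓞 K), Ideal.span {x} = I ^ n := by
  rw [hθ.sub_one_mul_add_two_mul_eq_pow_mul hA] at hx
  have hη := (hθ.isUnit_root.mul hθ.isUnit_root_add_one).neg
  refine exists_span_eq_pow_of_mul_eq_pow hη ?_ hx
  have hcop : IsCoprime x 9 :=
    (isCoprime_pow_nine hy).of_isCoprime_of_dvd_left (hη.dvd_mul_right.mp ⟨ν, hx.symm⟩)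
  exact hν ▸ hcop.add_mul_left_right k

theorem hasZModRankGE_classGroup (hn : n ≠ 0) (hy : IsAdmissible n y) :
    HasZModRankGE (ClassGroup (𝓞 K)) n 2 := by
  have hx := hθ.sub_one_mul_add_two_mul_eq_pow_mul hA
  have hne : (θ - 1) * ((θ + 2) * (2 * θ + 1)) ≠ 0 := by
    rw [hx]
    exact mul_ne_zero (pow_ne_zero n (Nat.cast_ne_zero.mpr hy.odd.pos.ne'))
      (hθ.isUnit_root.mul hθ.isUnit_root_add_one).neg.ne_zero
  refine hasZModRankGE_classGroup_of_card_eq_rank (ι := Fin 2) hn hθ.units_rank_eq_two.symm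
    ![hθ.isUnit_root.unit, hθ.isUnit_root_add_one.unit] ![θ - 1, θ + 2] ?_ ?_
    fun p hp hpn ζ hζ a b β hβ => ?_
  · simpa [Fin.forall_fin_two] using ⟨left_ne_zero_of_mul hne,
      left_ne_zero_of_mul (right_ne_zero_of_mul hne)⟩
  · have hone : ∃ I : Ideal (𝓞 K), Ideal.span {θ - 1} = I ^ n :=
      hθ.exists_span_eq_pow hA hy.not_three_dvd (k := 2 * θ + 7) rfl (by ring)
    have hneg_two : ∃ I : Ideal (𝓞 K), Ideal.span {θ + 2} = I ^ n :=
      hθ.exists_span_eq_pow hA hy.not_three_dvd (ν := (θ - 1) * (2 * θ + 1)) (k := 2 * θ - 5)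
        (by ring) (by ring)
    simpa [Fin.forall_fin_two] using ⟨hone, hneg_two⟩
  · obtain ⟨s, hs⟩ : ∃ s : ℤˣ, (ζ : 𝓞 K) = (s : ℤ) := by
      rcases Units.torsion_eq_one_or_neg_one_of_odd_finrank hθ.odd_finrank ⟨ζ, hζ⟩ with rfl | rfl
      · exact ⟨1, by simp⟩
      · exact ⟨-1, by simp⟩
    simp only [Fin.forall_fin_two]
    refine hθ.dvd_of_eq_pow hy hA hn hp hpn (s := s) (β := β) ?_
    simpa [Fin.prod_univ_two, mul_assoc, hs] using hβ

end IsGeneratingRoot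

end ClassGroupRank

section ShanksFields

theorem exists_two_mul_eq_pow_add_three {n y : ℕ} (hy : Odd y) :
    ∃ A : ℤ, 2 * A = (y : ℤ) ^ n + 3 := by
  have hodd : Odd ((y : ℤ) ^ n) := (mod_cast hy : Odd (y : ℤ)).pow
  obtain ⟨A, hA⟩ := hodd.add_odd (by decide : Odd (3 : ℤ))
  exact ⟨A, by lia⟩

theorem map_simplestCubic_of_two_mul_eq {A : ℤ} {n y : ℕ} (hA : 2 * A = (y : ℤ) ^ n + 3) :
    (simplestCubic A).map (algebraMap ℤ ℚ) = X ^ 3 + C (((y : ℚ) ^ n + 3) / 2) * X ^ 2 +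
      C (((y : ℚ) ^ n - 3) / 2) * X - 1 := by
  have hA' : 2 * (A : ℚ) = (y : ℚ) ^ n + 3 := by exact_mod_cast congrArg (Int.cast (R := ℚ)) hA
  have hpow : (y : ℚ) ^ n = 2 * A - 3 := by linarith
  rw [map_simplestCubic, hpow]
  ring_nf

theorem eq_of_algEquiv_of_normal {F E : Type*} [Field F] [Field E] [Algebra F E]
    {K K' : IntermediateField F E} [Normal F K] (e : K ≃ₐ[F] K') : K = K' := by
  rw [← AlgHom.fieldRange_of_normal (K'.val.comp e.toAlgHom), ← AlgHom.map_fieldRange]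
  exact (congrArg _ (AlgEquiv.fieldRange_eq_top e)).trans
    ((AlgHom.fieldRange_eq_map _).symm.trans K'.fieldRange_val)

theorem eq_of_ringEquiv_of_normal {K K' : IntermediateField ℚ ℂ} (hK : Normal ℚ K)
    (e : K ≃+* K') : K = K' := by
  -- Instance search offers the `ℚ`-algebra structure of a field of characteristic zero instead.
  have : @Normal ℚ K _ _ K.algebra' := hK
  exact eq_of_algEquiv_of_normal
    (.ofRingEquiv (f := e) (RingHom.map_rat_algebraMap (e : K →+* K')))

/-- The subfields of `ℂ` generated by a root of some simplest cubic polynomial with parameter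
`(y ^ n + 3) / 2`, where `y` is odd and prime to `3`, whose class group has `n`-rank at
least `2`. -/
def shanksFields (n : ℕ) : Set (IntermediateField ℚ ℂ) :=
  {K | ∃ (_ : NumberField K) (y : ℕ) (A : ℤ) (θ : 𝓞 K), Odd y ∧ ¬ 3 ∣ y ∧
    2 * A = (y : ℤ) ^ n + 3 ∧ IsGeneratingRoot (simplestCubic A) θ ∧
    HasZModRankGE (ClassGroup (𝓞 K)) n 2}

theorem exists_mem_shanksFields_le_card {n k : ℕ} (hn : n ≠ 0) (hk : k ≠ 0) :
    ∃ K ∈ shanksFields n, k ≤ Nat.card (ClassGroup (𝓞 K)) := by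
  have hnk : n * k ≠ 0 := mul_ne_zero hn hk
  have : NeZero n := ⟨hn⟩
  have : NeZero k := ⟨hk⟩
  obtain ⟨y, hy⟩ := exists_isAdmissible hnk
  obtain ⟨A, hA⟩ := exists_two_mul_eq_pow_add_three (n := n * k) hy.odd
  obtain ⟨K, _, θ, hθ⟩ :=
    exists_isGeneratingRoot (monic_simplestCubic A) (irreducible_simplestCubic A)
  have hrank := hθ.hasZModRankGE_classGroup hA hnk hy
  have hA' : 2 * A = ((y ^ k : ℕ) : ℤ) ^ n + 3 := by
    rw [hA, Nat.cast_pow, ← pow_mul, mul_comm k]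
  refine ⟨K, ⟨‹_›, y ^ k, A, θ, hy.odd.pow,
    fun h => hy.not_three_dvd (Nat.prime_three.dvd_of_dvd_pow h), hA', hθ,
    hrank.of_mul_right⟩, ?_⟩
  calc k ≤ n * k := Nat.le_mul_of_pos_left k (Nat.pos_of_ne_zero hn)
    _ ≤ (n * k) ^ 2 := Nat.le_self_pow two_ne_zero _
    _ ≤ Nat.card (ClassGroup (𝓞 K)) := hrank.pow_le_natCard

theorem infinite_shanksFields {n : ℕ} (hn : n ≠ 0) : (shanksFields n).Infinite := by
  refine Set.Infinite.of_image (fun K : IntermediateField ℚ ℂ => Nat.card (ClassGroup (𝓞 K)))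
    (Set.infinite_of_not_bddAbove ?_)
  rintro ⟨B, hB⟩
  obtain ⟨K, hK, hcard⟩ := exists_mem_shanksFields_le_card hn B.succ_ne_zero
  exact absurd (hB (Set.mem_image_of_mem _ hK)) (Nat.not_le.mpr hcard)

end ShanksFields

/-- **Cyclic cubic fields with large class group (`G = ℤ/3ℤ`).**
For every integer `n > 1` there are infinitely many pairwise non-isomorphic totally real
cyclic cubic fields `K`, each a splitting field of an irreducible polynomial
`x³ + ((yⁿ + 3)/2)x² + ((yⁿ - 3)/2)x - 1` with `y` a positive odd integer with `3 ∤ y`,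
such that `rank_n Cl(K) ≥ 2`. -/
theorem cyclic_cubic_large_class_group (n : ℕ) (hn : 1 < n) :
    ∃ S : Set (IntermediateField ℚ ℂ), S.Infinite ∧
      (∀ K ∈ S, ∀ K' ∈ S, K ≠ K' → IsEmpty (K ≃+* K')) ∧
      ∀ K ∈ S, ∃ y : ℕ, 0 < y ∧ Odd y ∧ ¬ (3 ∣ y) ∧
        (let P : Polynomial ℚ := X ^ 3 + C (((y : ℚ) ^ n + 3) / 2) * X ^ 2 +
          C (((y : ℚ) ^ n - 3) / 2) * X - 1
         Irreducible P ∧ P.IsSplittingField ℚ K) ∧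
        NumberField K ∧ Module.finrank ℚ K = 3 ∧ IsGalois ℚ K ∧
        Nonempty ((K ≃ₐ[ℚ] K) ≃* Multiplicative (ZMod 3)) ∧
        TotallyReal K ∧
        HasZModRankGE (ClassGroup (𝓞 K)) n 2 := by
  refine ⟨shanksFields n, infinite_shanksFields (by lia), ?_, ?_⟩
  · rintro K ⟨_, _, A, θ, _, _, _, hθ, _⟩ K' - hne
    exact ⟨fun e => hne (eq_of_ringEquiv_of_normal hθ.isGalois.to_normal e)⟩
  · rintro K ⟨_, y, A, θ, hodd, h3, hA, hθ, hrank⟩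
    have := hθ.isGalois
    refine ⟨y, hodd.pos, hodd, h3, ?_, inferInstance, hθ.finrank_eq_three, this,
      hθ.nonempty_galoisGroup_mulEquiv, totallyReal_of_odd_finrank hθ.odd_finrank, hrank⟩
    rw [← map_simplestCubic_of_two_mul_eq hA]
    exact ⟨irreducible_map_simplestCubic A, hθ.isSplittingField_simplestCubic⟩
end

section
/- Let n > 1 be an odd integer. There exist infinitely many pairwise non-isomorphic number fields K with the following properties: there is a positive integer y with y ≡ 5 (mod 12) and y not divisible by 5 such that the polynomial x⁴ + ((yⁿ+7)/6)x³ − 6x² − ((yⁿ+7)/6)x + 1 is irreducible over ℚ and K is its splitting field; K is a totally real Galois extension of ℚ of degree 4 with Galois group isomorphic to ℤ/4ℤ; and rank_n Cl(K) ≥ 3. -/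
open Polynomial NumberField

/-!
Put `k = (yⁿ + 7) / 12`. The Cayley transform `x ↦ (x - 1) / (x + 1)` permutes the four roots
`x₀, …, x₃` of the quartic cyclically, and `yⁿ` is the product of the `xᵢ - 2`, which are pairwise
coprime because any two of them generate an ideal containing `5`. Hence `(xᵢ - 2) = Aᵢⁿ`, and the
claim is that the classes of `A₀, A₁, A₂` are independent of order `n`.

For a prime `p ∣ n`, a relation between them makes a product of powers of the `xᵢ - 2` a unit times
a `p`-th power. The unit rank is at most three, so this unit can be exchanged, up to `p`-th powers,
for a product of the units `x₀`, `x₁` and `(x₀ - 1)² / 2`. At a prime `q ∣ y` the quartic has a root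
congruent to `2`, and under the resulting embeddings `K → ℚ_q` all six factors have, up to sign and
`p`-th powers, residues in the group generated by `2, 3, 5`. By Kummer theory, and because the
Dedekind zeta function has a simple pole, finitely many `q` detect the `p`-th powers in that group;
taking `y` divisible by these `q` forces every exponent to be divisible by `p`.

The quadratic subfield of `K` is `ℚ(√(k² + 4))`, and `y` can be chosen so that `k² + 4` is coprime
to the corresponding integers of finitely many given fields, so infinitely many fields arise.
-/

/-! ### Euler products and the pole of the Dedekind zeta function -/

section EulerProduct

open Filter Topology ENNReal IsDedekindDomain

/-- The expansion of the Euler product `∏ᵢ (1 - w i)⁻¹` as the sum of all monomials in the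
weights `w i`. -/
noncomputable def eulerSum {ι : Type*} (w : ι → ℝ≥0∞) : ℝ≥0∞ :=
  ∑' f : ι →₀ ℕ, f.prod fun i k => w i ^ k

section EulerSum

variable {ι κ : Type*}

lemma eulerSum_sumElim (w : ι → ℝ≥0∞) (w' : κ → ℝ≥0∞) :
    eulerSum (Sum.elim w w') = eulerSum w * eulerSum w' := by
  rw [eulerSum, ← (Finsupp.sumFinsuppEquivProdFinsupp (α := ι) (β := κ)).symm.tsum_eq,
    ENNReal.tsum_prod', eulerSum, eulerSum, ← ENNReal.tsum_mul_right]
  refine tsum_congr fun f => ?_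
  rw [← ENNReal.tsum_mul_left]
  exact tsum_congr fun g => Finsupp.prod_sumElim ..

lemma eulerSum_comp_le {h : ι → κ} (hh : h.Injective) (w : κ → ℝ≥0∞) :
    eulerSum (w ∘ h) ≤ eulerSum w := by
  simp only [eulerSum]
  refine le_trans (le_of_eq (tsum_congr fun f => ?_)) (ENNReal.tsum_comp_le_tsum_of_injective
    (Finsupp.embDomain_injective ⟨h, hh⟩) _)
  exact (Finsupp.prod_embDomain (v := f) (f := ⟨h, hh⟩) (g := fun i k => w i ^ k)).symm

lemma eulerSum_comp_equiv (e : ι ≃ κ) (w : κ → ℝ≥0∞) : eulerSum (w ∘ e) = eulerSum w :=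
  (eulerSum_comp_le e.injective w).antisymm <| by
    simpa [Function.comp_assoc] using eulerSum_comp_le e.symm.injective (w ∘ e)

lemma eulerSum_eq_inv_of_unique [Unique ι] (w : ι → ℝ≥0∞) :
    eulerSum w = (1 - w default)⁻¹ := by
  rw [eulerSum, ← ENNReal.tsum_geometric, ← (Finsupp.uniqueEquiv (M := ℕ) (default : ι)).tsum_eq]
  refine tsum_congr fun f => ?_
  rw [Finsupp.prod_fintype _ _ (by simp)]
  simp [Finsupp.uniqueEquiv]

lemma eulerSum_le_two_pow [Finite ι] (w : ι → ℝ≥0∞) (hw : ∀ i, w i ≤ 2⁻¹) :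
    eulerSum w ≤ 2 ^ Nat.card ι := by
  induction ι using Finite.induction_empty_option with
  | of_equiv e ih =>
    rw [← Nat.card_congr e, ← eulerSum_comp_equiv e]
    exact ih _ fun i => hw _
  | h_empty => simp [eulerSum]
  | @h_option α _ ih =>
    have hsome : w ∘ (Equiv.optionEquivSumPUnit.{0} α).symm =
        Sum.elim (w ∘ some) fun _ => w none := by
      ext (_ | _) <;> simp
    rw [← eulerSum_comp_equiv (Equiv.optionEquivSumPUnit.{0} α).symm, hsome, eulerSum_sumElim,
      Finite.card_option, pow_succ]
    refine mul_le_mul' (ih _ fun i => hw _) ?_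
    rw [eulerSum_eq_inv_of_unique, ENNReal.inv_le_iff_inv_le]
    exact (ENNReal.one_sub_inv_two.symm.le).trans (tsub_le_tsub_left (hw none) 1)

end EulerSum

section Ideal

variable {R : Type*} [CommRing R] [IsDedekindDomain R]

lemma prod_asIdeal_pow_injective : Function.Injective
    fun f : HeightOneSpectrum R →₀ ℕ => f.prod fun v k => v.asIdeal ^ k := by
  classical
  have hprod (f : HeightOneSpectrum R →₀ ℕ) :
      f.prod (fun v k => v.asIdeal ^ k) = (f.toMultiset.map (·.asIdeal)).prod := by
    simp [Finsupp.toMultiset_map, Finsupp.prod_toMultiset, Finsupp.prod_mapDomain_index, pow_add]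
  have hfactors (f : HeightOneSpectrum R →₀ ℕ) :
      UniqueFactorizationMonoid.normalizedFactors (f.prod fun v k => v.asIdeal ^ k) =
        f.toMultiset.map (·.asIdeal) := by
    rw [hprod, UniqueFactorizationMonoid.normalizedFactors_prod_of_prime]
    simpa using fun v _ => v.prime
  intro f g hfg
  have hmap := congrArg UniqueFactorizationMonoid.normalizedFactors hfg
  rw [hfactors, hfactors] at hmap
  exact Multiset.toFinsupp.symm.injective
    (Multiset.map_injective (fun _ _ => HeightOneSpectrum.ext) hmap)

lemma exists_prod_asIdeal_pow_eq {I : Ideal R} (hI : I ≠ 0) :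
    ∃ f : HeightOneSpectrum R →₀ ℕ, f.prod (fun v k => v.asIdeal ^ k) = I := by
  induction I using UniqueFactorizationMonoid.induction_on_prime with
  | h₁ => exact absurd rfl hI
  | h₂ x hx => exact ⟨0, by simp [Ideal.isUnit_iff.mp hx, Ideal.one_eq_top]⟩
  | h₃ I P hI0 hP ih =>
    obtain ⟨f, hf⟩ := ih hI0
    refine ⟨.single ⟨P, Ideal.isPrime_of_prime hP, hP.ne_zero⟩ 1 + f, ?_⟩
    rw [Finsupp.prod_add_index' (by simp) (by simp [pow_add]), hf,
      Finsupp.prod_single_index (by simp), pow_one]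

end Ideal

section DedekindZeta

variable (K : Type*) [Field K] [NumberField K]

/-- The weight `N(I)^{-s}` of an ideal in the Dirichlet series of the Dedekind zeta function. -/
noncomputable def normWeight {K : Type*} [Field K] [NumberField K] (s : ℝ) (I : Ideal (𝓞 K)) :
    ℝ≥0∞ :=
  ENNReal.ofReal ((Ideal.absNorm I : ℝ) ^ (-s))

variable {K} in
lemma normWeight_mul (s : ℝ) (I J : Ideal (𝓞 K)) :
    normWeight s (I * J) = normWeight s I * normWeight s J := by
  simp [normWeight, Real.mul_rpow, ENNReal.ofReal_mul, Real.rpow_nonneg]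

variable {K} in
lemma normWeight_le_inv_two {s : ℝ} (hs : 1 < s) {I : Ideal (𝓞 K)} (hI : I ≠ ⊤) :
    normWeight s I ≤ 2⁻¹ := by
  have h2 : (2⁻¹ : ℝ≥0∞) = ENNReal.ofReal 2⁻¹ := by
    rw [ENNReal.ofReal_inv_of_pos two_pos, ENNReal.ofReal_ofNat]
  rw [normWeight, h2]
  refine ENNReal.ofReal_le_ofReal ?_
  rcases Nat.eq_zero_or_pos (Ideal.absNorm I) with h0 | hpos
  · simp [h0, Real.zero_rpow (show -s ≠ 0 by linarith)]
  have hN : (2 : ℝ) ≤ Ideal.absNorm I := by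
    have : Ideal.absNorm I ≠ 1 := by rwa [Ne, Ideal.absNorm_eq_one_iff]
    exact_mod_cast (show 2 ≤ Ideal.absNorm I by omega)
  calc (Ideal.absNorm I : ℝ) ^ (-s) ≤ (Ideal.absNorm I : ℝ) ^ (-1 : ℝ) :=
        Real.rpow_le_rpow_of_exponent_le (by linarith) (by linarith)
    _ ≤ 2⁻¹ := by rw [Real.rpow_neg_one]; gcongr

lemma eulerSum_normWeight {s : ℝ} (hs : 1 < s) :
    eulerSum (fun v : HeightOneSpectrum (𝓞 K) => normWeight s v.asIdeal) =
      ∑' I : Ideal (𝓞 K), normWeight s I := by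
  have hterm (f : HeightOneSpectrum (𝓞 K) →₀ ℕ) :
      (f.prod fun v k => normWeight s v.asIdeal ^ k) =
        normWeight s (f.prod fun v k => v.asIdeal ^ k) := by
    let φ : Ideal (𝓞 K) →* ℝ≥0∞ :=
      { toFun := normWeight s, map_one' := by simp [normWeight], map_mul' := normWeight_mul s }
    exact ((map_finsuppProd φ f _).trans (Finsupp.prod_congr fun v _ => map_pow φ _ _)).symm
  rw [eulerSum, tsum_congr hterm]
  refine prod_asIdeal_pow_injective.tsum_eq (f := normWeight s) fun I hI =>
    exists_prod_asIdeal_pow_eq ?_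
  rintro rfl
  simp [normWeight, Real.zero_rpow (show -s ≠ 0 by linarith)] at hI

lemma tsum_normWeight (s : ℝ) :
    ∑' I : Ideal (𝓞 K), normWeight s I = ∑' n : ℕ, ENNReal.ofReal
      (Nat.card {I : Ideal (𝓞 K) // Ideal.absNorm I = n} * (n : ℝ) ^ (-s)) := by
  rw [← (Equiv.sigmaFiberEquiv fun I : Ideal (𝓞 K) => Ideal.absNorm I).tsum_eq,
    ENNReal.tsum_sigma']
  refine tsum_congr fun n => ?_
  have : Finite {I : Ideal (𝓞 K) // Ideal.absNorm I = n} := Ideal.finite_setOfPred_absNorm_eq n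
  have hfiber (I : {I : Ideal (𝓞 K) // Ideal.absNorm I = n}) :
      normWeight s I.1 = ENNReal.ofReal ((n : ℝ) ^ (-s)) := by rw [normWeight, I.2]
  rw [ENNReal.ofReal_mul (by positivity), ENNReal.ofReal_natCast]
  exact (tsum_congr hfiber).trans (by rw [ENNReal.tsum_const, ENat.card_eq_coe_natCard]; rfl)

lemma dedekindZeta_ofReal (s : ℝ) (hs : 1 < s) :
    dedekindZeta K s = ((∑' n : ℕ,
      Nat.card {I : Ideal (𝓞 K) // Ideal.absNorm I = n} * (n : ℝ) ^ (-s) : ℝ) : ℂ) := by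
  rw [dedekindZeta, LSeries, Complex.ofReal_tsum]
  refine tsum_congr fun n => ?_
  rcases eq_or_ne n 0 with rfl | hn
  · simp [Real.zero_rpow (show -s ≠ 0 by linarith)]
  · rw [LSeries.term_of_ne_zero hn, Complex.ofReal_mul, Complex.ofReal_cpow (by positivity),
      Complex.ofReal_neg, Complex.cpow_neg]
    rfl

lemma tendsto_sub_one_mul_tsum_normWeight :
    Tendsto (fun s : ℝ => ENNReal.ofReal (s - 1) * ∑' I : Ideal (𝓞 K), normWeight s I) (𝓝[>] 1)
      (𝓝 (ENNReal.ofReal (dedekindZeta_residue K))) := by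
  have hlim := tendsto_sub_one_mul_dedekindZeta_nhdsGT K
  have hne : ∀ᶠ s : ℝ in 𝓝[>] 1, (s - 1 : ℂ) * dedekindZeta K s ≠ 0 :=
    hlim.eventually_ne (by exact_mod_cast dedekindZeta_residue_ne_zero K)
  refine ((ENNReal.continuous_ofReal.tendsto _).comp
    ((Complex.continuous_re.tendsto _).comp hlim)).congr' ?_
  filter_upwards [hne, self_mem_nhdsWithin] with s hs (hs1 : 1 < s)
  rw [dedekindZeta_ofReal K s hs1] at hs
  have hsum : Summable fun n : ℕ =>
      Nat.card {I : Ideal (𝓞 K) // Ideal.absNorm I = n} * (n : ℝ) ^ (-s) := by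
    contrapose! hs
    simp [tsum_eq_zero_of_not_summable hs]
  rw [tsum_normWeight, ← ENNReal.ofReal_tsum_of_nonneg (fun n => by positivity) hsum,
    ← ENNReal.ofReal_mul (by linarith), Function.comp_apply, Function.comp_apply,
    dedekindZeta_ofReal K s hs1, ← Complex.ofReal_one, ← Complex.ofReal_sub,
    ← Complex.ofReal_mul, Complex.ofReal_re]

variable {F M : Type*} [Field F] [NumberField F] [Field M] [NumberField M]

lemma sq_tsum_normWeight_le {T : Set (HeightOneSpectrum (𝓞 F))} (hT : T.Finite)
    {g : ↥Tᶜ ⊕ ↥Tᶜ → HeightOneSpectrum (𝓞 M)} (hg : g.Injective)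
    (hnorm : ∀ P, Ideal.absNorm (g P).asIdeal = Ideal.absNorm (P.elim id id).1.asIdeal)
    {s : ℝ} (hs : 1 < s) :
    (∑' I : Ideal (𝓞 F), normWeight s I) ^ 2 ≤
      (2 ^ Nat.card T) ^ 2 * ∑' I : Ideal (𝓞 M), normWeight s I := by
  classical
  have := hT.to_subtype
  let wF := fun v : HeightOneSpectrum (𝓞 F) => normWeight s v.asIdeal
  let wM := fun v : HeightOneSpectrum (𝓞 M) => normWeight s v.asIdeal
  have hsplit : wF ∘ Equiv.Set.sumCompl T =
      Sum.elim (fun P : T => wF P) (fun P : ↥Tᶜ => wF P) := by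
    ext (P | P) <;> simp
  have hdouble : wM ∘ g = Sum.elim (fun P : ↥Tᶜ => wF P) (fun P : ↥Tᶜ => wF P) := by
    ext (P | P) <;> simp [wF, wM, normWeight, hnorm]
  rw [← eulerSum_normWeight F hs, ← eulerSum_normWeight M hs,
    ← eulerSum_comp_equiv (Equiv.Set.sumCompl T), hsplit, eulerSum_sumElim, mul_pow]
  gcongr
  · exact eulerSum_le_two_pow _ fun P => normWeight_le_inv_two hs P.1.isPrime.ne_top
  · rw [sq, ← eulerSum_sumElim, ← hdouble]
    exact eulerSum_comp_le hg wM

/- The pole of `ζ_F²` at `s = 1` is double, that of `ζ_M` is simple. -/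
theorem not_injective_of_absNorm_eq {T : Set (HeightOneSpectrum (𝓞 F))} (hT : T.Finite)
    (g : ↥Tᶜ ⊕ ↥Tᶜ → HeightOneSpectrum (𝓞 M))
    (hnorm : ∀ P, Ideal.absNorm (g P).asIdeal = Ideal.absNorm (P.elim id id).1.asIdeal) :
    ¬ g.Injective := by
  intro hg
  have hF := ENNReal.Tendsto.pow (n := 2) (tendsto_sub_one_mul_tsum_normWeight F)
  have hzero : Tendsto (fun s : ℝ => ENNReal.ofReal (s - 1) * (2 ^ Nat.card T) ^ 2) (𝓝[>] 1)
      (𝓝 0) := by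
    have hsub : Tendsto (fun s : ℝ => ENNReal.ofReal (s - 1)) (𝓝[>] 1) (𝓝 0) := by
      simpa [Function.comp_def] using ((ENNReal.continuous_ofReal.comp
        (continuous_sub_right (1 : ℝ))).tendsto 1).mono_left nhdsWithin_le_nhds
    simpa using ENNReal.Tendsto.mul_const hsub (.inr (by finiteness))
  have hM := ENNReal.Tendsto.mul hzero (.inr ENNReal.ofReal_ne_top)
    (tendsto_sub_one_mul_tsum_normWeight M) (.inr (by simp))
  rw [zero_mul] at hM
  refine (le_of_tendsto_of_tendsto hF hM ?_).not_gt ?_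
  · filter_upwards [self_mem_nhdsWithin] with s (hs : 1 < s)
    calc _ = ENNReal.ofReal (s - 1) ^ 2 * (∑' I : Ideal (𝓞 F), normWeight s I) ^ 2 := mul_pow ..
      _ ≤ ENNReal.ofReal (s - 1) ^ 2 *
          ((2 ^ Nat.card T) ^ 2 * ∑' I : Ideal (𝓞 M), normWeight s I) := by
        gcongr
        exact sq_tsum_normWeight_le hT hg hnorm hs
      _ = _ := by ring
  · exact ENNReal.pow_pos (ENNReal.ofReal_pos.mpr (dedekindZeta_residue_pos F)) 2

end DedekindZeta

end EulerProduct

/-! ### Detecting `p`-th powers modulo primes -/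

section Kummer

open IsDedekindDomain
open scoped Pointwise

lemma natCast_mem_of_primitiveRoot_sub_one_mem {R : Type*} [CommRing R] [IsDomain R] {ζ : R} {p : ℕ}
    (hζ : IsPrimitiveRoot ζ p) (hp : 1 < p) {I : Ideal R} (h : ζ - 1 ∈ I) : (p : R) ∈ I := by
  have hsum : (p : R) = -∑ i ∈ Finset.range p, (ζ ^ i - 1) := by
    simp [Finset.sum_sub_distrib, hζ.geom_sum_eq_zero hp]
  rw [hsum]
  exact I.neg_mem (I.sum_mem fun i _ => I.mem_of_dvd (sub_one_dvd_pow_sub_one ζ i) h)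

lemma exists_smul_eq_mul_of_isSplittingField {F M : Type*} [Field F] [Field M] [Algebra F M]
    {p : ℕ} {ζ a : 𝓞 F} (hp : p.Prime) (hζ : IsPrimitiveRoot ζ p)
    (hirr : Irreducible (X ^ p - C (a : F)))
    [IsSplittingField F M (X ^ p - C (a : F))] :
    ∃ (θ : 𝓞 M) (g : M ≃ₐ[F] M), θ ^ p = algebraMap (𝓞 F) (𝓞 M) a ∧
      g • θ = algebraMap (𝓞 F) (𝓞 M) ζ * θ := by
  have : NeZero p := ⟨hp.ne_zero⟩
  have hζF : IsPrimitiveRoot (ζ : F) p := hζ.map_of_injective RingOfIntegers.coe_injective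
  have hθ := rootOfSplitsXPowSubC_pow (a : F) M (n := p)
  set θ := rootOfSplitsXPowSubC (NeZero.pos p) (a : F) M
  have hint : IsIntegral ℤ θ := IsIntegral.of_pow hp.pos (hθ ▸ a.isIntegral_coe.algebraMap)
  refine ⟨⟨θ, hint⟩, (autEquivZmod hirr M hζF).symm (Multiplicative.ofAdd ((1 : ℕ) : ZMod p)),
    RingOfIntegers.ext hθ, RingOfIntegers.ext ?_⟩
  have hg := autEquivZmod_symm_apply_natCast hirr M hθ hζF 1
  rwa [pow_one, Algebra.smul_def] at hg

variable {F M : Type*} [Field F] [NumberField F] [Field M] [NumberField M] [Algebra F M] {p : ℕ}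

lemma ncard_primesOver_ne_one [IsGalois F M] {ζ a b : 𝓞 F} (hp : p.Prime)
    (hζ : IsPrimitiveRoot ζ p) {θ : 𝓞 M} (hθ : θ ^ p = algebraMap (𝓞 F) (𝓞 M) a) {g : M ≃ₐ[F] M}
    (hg : g • θ = algebraMap (𝓞 F) (𝓞 M) ζ * θ) {P : Ideal (𝓞 F)}
    (hb : b ^ p - a ∈ P) (haP : a ∉ P) (hpP : (p : 𝓞 F) ∉ P) :
    (P.primesOver (𝓞 M)).ncard ≠ 1 := by
  have : NeZero p := ⟨hp.ne_zero⟩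
  intro hone
  obtain ⟨Q, hQ⟩ := Set.ncard_eq_one.mp hone
  obtain ⟨hQprime, hQover⟩ : Q ∈ P.primesOver (𝓞 M) := hQ ▸ rfl
  have hgQ : g • Q = Q := by
    have : g • Q ∈ P.primesOver (𝓞 M) := ⟨inferInstance, inferInstance⟩
    rwa [hQ] at this
  have hcomap (x : 𝓞 F) : algebraMap (𝓞 F) (𝓞 M) x ∈ Q ↔ x ∈ P := by
    rw [hQover.over, Ideal.mem_comap]
  have hζM := hζ.map_of_injective (FaithfulSMul.algebraMap_injective (𝓞 F) (𝓞 M))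
  have hmem : θ ^ p - algebraMap (𝓞 F) (𝓞 M) b ^ p ∈ Q := by
    rw [hθ, ← map_pow, ← map_sub, hcomap, ← neg_mem_iff, neg_sub]
    exact hb
  rw [hζM.pow_sub_pow_eq_prod_sub_mul _ _ hp.pos, hQprime.prod_mem_iff] at hmem
  obtain ⟨ω, hω, hmem⟩ := hmem
  obtain ⟨j, -, rfl⟩ := hζM.eq_pow_of_pow_eq_one ((mem_nthRootsFinset hp.pos _).mp hω)
  rw [← map_pow, ← map_mul] at hmem
  have hgmem := Ideal.smul_mem_pointwise_smul g _ _ hmem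
  rw [hgQ, smul_sub, smul_algebraMap, hg] at hgmem
  have hsub : algebraMap (𝓞 F) (𝓞 M) (ζ - 1) * θ ∈ Q := by
    convert Q.sub_mem hgmem hmem using 1
    rw [map_sub, map_one]
    ring
  rcases hQprime.mem_or_mem hsub with h | h
  · exact hpP (natCast_mem_of_primitiveRoot_sub_one_mem hζ hp.one_lt ((hcomap _).mp h))
  · exact haP ((hcomap _).mp (hθ ▸ Q.pow_mem_of_mem h p hp.pos))

lemma exists_ne_absNorm_eq [IsGalois F M] (hp : p.Prime) (hcard : Nat.card (M ≃ₐ[F] M) = p)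
    (P : HeightOneSpectrum (𝓞 F)) (hne : (P.asIdeal.primesOver (𝓞 M)).ncard ≠ 1) :
    ∃ Q₁ Q₂ : HeightOneSpectrum (𝓞 M), Q₁ ≠ Q₂ ∧ ∀ Q ∈ ({Q₁, Q₂} : Set _),
      Q.asIdeal.under (𝓞 F) = P.asIdeal ∧ Ideal.absNorm Q.asIdeal = Ideal.absNorm P.asIdeal := by
  have hmax : P.asIdeal.IsMaximal := P.isMaximal
  have hfund := Ideal.ncard_primesOver_mul_ramificationIdxIn_mul_inertiaDegIn P.asIdeal (𝓞 M)
    (M ≃ₐ[F] M)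
  rw [hcard] at hfund
  have hncard : (P.asIdeal.primesOver (𝓞 M)).ncard = p :=
    (hp.eq_one_or_self_of_dvd _ ⟨_, hfund.symm⟩).resolve_left hne
  have hdeg : P.asIdeal.inertiaDegIn (𝓞 M) = 1 := by
    rw [hncard] at hfund
    exact Nat.eq_one_of_mul_eq_one_left
      (Nat.eq_of_mul_eq_mul_left hp.pos (hfund.trans (mul_one p).symm))
  obtain ⟨Q₁, ⟨hQ₁, hover₁⟩, Q₂, ⟨hQ₂, hover₂⟩, hQne⟩ :=
    (Set.one_lt_ncard (Algebra.QuasiFinite.finite_primesOver P.asIdeal)).mp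
      (hncard ▸ hp.one_lt)
  refine ⟨⟨Q₁, hQ₁, Ideal.ne_bot_of_liesOver_of_ne_bot P.ne_bot Q₁⟩,
    ⟨Q₂, hQ₂, Ideal.ne_bot_of_liesOver_of_ne_bot P.ne_bot Q₂⟩, fun h =>
      hQne (congrArg HeightOneSpectrum.asIdeal h), ?_⟩
  intro Q hQ
  have hover : Q.asIdeal.LiesOver P.asIdeal := by
    rcases hQ with rfl | rfl
    exacts [hover₁, hover₂]
  have := Q.isMaximal
  refine ⟨hover.over.symm, ?_⟩
  rw [Ideal.absNorm_eq_pow_inertiaDeg'_of_liesOver Q.asIdeal P.asIdeal P.isPrime P.ne_bot,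
    Ideal.inertiaDeg'_eq_inertiaDeg,
    ← Ideal.inertiaDegIn_eq_inertiaDeg P.asIdeal Q.asIdeal (M ≃ₐ[F] M), hdeg, pow_one]

lemma exists_notMem_ncard_primesOver_eq_one [IsGalois F M] (hp : p.Prime)
    (hcard : Nat.card (M ≃ₐ[F] M) = p) {T : Set (HeightOneSpectrum (𝓞 F))} (hT : T.Finite) :
    ∃ P ∉ T, (P.asIdeal.primesOver (𝓞 M)).ncard = 1 := by
  by_contra! hcon
  choose Q₁ Q₂ hne hQ using fun P : ↥Tᶜ => exists_ne_absNorm_eq hp hcard P.1 (hcon P.1 P.2)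
  have hover (P P' : ↥Tᶜ) (Q : HeightOneSpectrum (𝓞 M)) (h : Q ∈ ({Q₁ P, Q₂ P} : Set _))
      (h' : Q ∈ ({Q₁ P', Q₂ P'} : Set _)) : P = P' :=
    Subtype.ext (HeightOneSpectrum.ext ((hQ P Q h).1.symm.trans (hQ P' Q h').1))
  refine not_injective_of_absNorm_eq hT (Sum.elim Q₁ Q₂) ?_ ?_
  · rintro (P | P)
    exacts [(hQ P _ (.inl rfl)).2, (hQ P _ (.inr rfl)).2]
  · refine Function.Injective.sumElim (fun P P' h => hover P P' _ (.inl rfl) (.inl h))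
      (fun P P' h => hover P P' _ (.inr rfl) (.inr h)) fun P P' h => ?_
    obtain rfl := hover P P' _ (.inl rfl) (.inr h)
    exact hne P h

theorem exists_forall_pow_sub_notMem {ζ a : 𝓞 F} (hp : p.Prime) (hζ : IsPrimitiveRoot ζ p)
    (ha : ∀ b : F, b ^ p ≠ a) {T : Set (HeightOneSpectrum (𝓞 F))} (hT : T.Finite) :
    ∃ P ∉ T, ∀ b : 𝓞 F, b ^ p - a ∉ P.asIdeal := by
  have ha0 : a ≠ 0 := by rintro rfl; exact ha 0 (by simp [hp.ne_zero])
  have hirr : Irreducible (X ^ p - C (a : F)) := X_pow_sub_C_irreducible_of_prime hp ha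
  let M := SplittingField (X ^ p - C (a : F))
  have : CharZero M := charZero_of_injective_algebraMap (algebraMap F M).injective
  have : NumberField M := NumberField.of_module_finite F M
  have hroots : (primitiveRoots p F).Nonempty :=
    ⟨ζ, (mem_primitiveRoots hp.pos).mpr (hζ.map_of_injective RingOfIntegers.coe_injective)⟩
  have : IsGalois F M := isGalois_of_isSplittingField_X_pow_sub_C hroots hirr M
  have hcard : Nat.card (M ≃ₐ[F] M) = p := by
    rw [IsGalois.card_aut_eq_finrank, finrank_of_isSplittingField_X_pow_sub_C hroots hirr M]
  obtain ⟨θ, g, hθ, hg⟩ := exists_smul_eq_mul_of_isSplittingField (M := M) hp hζ hirr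
  have hfin : {v : HeightOneSpectrum (𝓞 F) | v.asIdeal ∣ Ideal.span {(p : 𝓞 F) * a}}.Finite :=
    Ideal.finite_factors (by simp [ha0, hp.ne_zero])
  obtain ⟨P, hP, hone⟩ := exists_notMem_ncard_primesOver_eq_one hp hcard (hT.union hfin)
  obtain ⟨hPT, hPpa⟩ := not_or.mp hP
  rw [Set.mem_ofPred_eq, Ideal.dvd_span_singleton] at hPpa
  exact ⟨P, hPT, fun b hb => ncard_primesOver_ne_one hp hζ hθ hg hb
    (fun h => hPpa (Ideal.mul_mem_left _ _ h)) (fun h => hPpa (Ideal.mul_mem_right _ _ h)) hone⟩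

lemma pow_ne_of_isCyclotomicExtension [IsCyclotomicExtension {p} ℚ F] (hp : p.Prime) {a : ℚ}
    (ha : ∀ b : ℚ, b ^ p ≠ a) (b : F) : b ^ p ≠ algebraMap ℚ F a := by
  have : NeZero p := ⟨hp.ne_zero⟩
  intro hb
  have hmin : minpoly ℚ b = X ^ p - C a :=
    (minpoly.eq_of_irreducible_of_monic (X_pow_sub_C_irreducible_of_prime hp ha) (by simp [hb])
      (monic_X_pow_sub_C _ hp.ne_zero)).symm
  have hdvd := minpoly.degree_dvd (IsIntegral.of_finite ℚ b)
  rw [hmin, natDegree_X_pow_sub_C, IsCyclotomicExtension.finrank F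
    (cyclotomic.irreducible_rat hp.pos), Nat.totient_prime hp] at hdvd
  have := Nat.le_of_dvd (Nat.sub_pos_of_lt hp.one_lt) hdvd
  have := hp.pos
  omega

theorem exists_prime_forall_pow_ne_s12 (hp : p.Prime) {a : ℤ} (ha : ∀ b : ℚ, b ^ p ≠ a) {N : ℕ}
    (hN : N ≠ 0) : ∃ q : ℕ, q.Prime ∧ ¬ q ∣ N ∧ ∀ z : ZMod q, z ^ p ≠ a := by
  have : NeZero p := ⟨hp.ne_zero⟩
  let F := CyclotomicField p ℚ
  have : IsCyclotomicExtension {p} ℚ F := CyclotomicField.isCyclotomicExtension p ℚ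
  have hζ : IsPrimitiveRoot (IsCyclotomicExtension.zeta p ℚ F) p :=
    IsCyclotomicExtension.zeta_spec p ℚ F
  have haF (b : F) : b ^ p ≠ ((a : 𝓞 F) : F) := by
    simpa using pow_ne_of_isCyclotomicExtension hp ha b
  obtain ⟨P, hPN, hP⟩ := exists_forall_pow_sub_notMem hp hζ.toInteger_isPrimitiveRoot haF
    (Ideal.finite_factors (I := Ideal.span {(N : 𝓞 F)}) (by simpa using hN))
  rw [Set.mem_ofPred_eq, Ideal.dvd_span_singleton] at hPN
  have : Finite (𝓞 F ⧸ P.asIdeal) := Ideal.finiteQuotientOfFreeOfNeBot P.asIdeal P.ne_bot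
  obtain ⟨q, hq⟩ := CharP.exists (𝓞 F ⧸ P.asIdeal)
  have hmem (c : ℤ) : (c : 𝓞 F) ∈ P.asIdeal ↔ (c : ZMod q) = 0 := by
    rw [← Ideal.Quotient.eq_zero_iff_mem, map_intCast,
      CharP.intCast_eq_zero_iff (𝓞 F ⧸ P.asIdeal) q, ZMod.intCast_zmod_eq_zero_iff_dvd]
  refine ⟨q, (CharP.char_is_prime_or_zero (𝓞 F ⧸ P.asIdeal) q).resolve_right
    (CharP.char_ne_zero_of_finite (𝓞 F ⧸ P.asIdeal) q), fun hqN => hPN ?_, fun z hz => ?_⟩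
  · simpa [(ZMod.natCast_eq_zero_iff N q).mpr hqN] using hmem N
  · obtain ⟨b, rfl⟩ := ZMod.intCast_surjective z
    refine hP b ?_
    exact_mod_cast (hmem (b ^ p - a)).mpr (by push_cast; rw [hz, sub_self])

end Kummer

section DetectsPow

/-- The modulus `M` detects `p`-th powers in the multiplicative group generated by the `ℓ i`: a
product of powers of the `ℓ i` which is a `p`-th power modulo each prime divisor of `M` has all its
exponents divisible by `p`. -/
def DetectsPow {ι : Type*} [Fintype ι] (ℓ : ι → ℕ) (p M : ℕ) : Prop :=
  ∀ v : ι → ℤ,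
    (∀ (q : ℕ) [Fact q.Prime], q ∣ M → ∃ z : ZMod q, z ^ p = ∏ i, (ℓ i : ZMod q) ^ v i) →
    ∀ i, (p : ℤ) ∣ v i

variable {ι : Type*} [Fintype ι] {ℓ : ι → ℕ} {p : ℕ}

lemma DetectsPow.of_dvd {M M' : ℕ} (h : DetectsPow ℓ p M) (hM : M ∣ M') : DetectsPow ℓ p M' :=
  fun v hv => h v fun q _ hq => hv q (hq.trans hM)

lemma dvd_of_pow_eq_prod_primes_pow (hℓ : ∀ i, (ℓ i).Prime) (hinj : ℓ.Injective) {n : ι → ℕ}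
    {b : ℚ} (hb : b ^ p = ∏ i, (ℓ i : ℚ) ^ n i) (i : ι) : p ∣ n i := by
  classical
  have : Fact (ℓ i).Prime := ⟨hℓ i⟩
  have hval : padicValNat (ℓ i) (∏ j, ℓ j ^ n j) = n i := by
    rw [← Nat.factorization_def _ (hℓ i), Nat.factorization_prod_apply
      fun j _ => pow_ne_zero _ (hℓ j).ne_zero, Finset.sum_eq_single i]
    · simp [(hℓ i).factorization_self]
    · intro j _ hj
      simp [hℓ, hinj.ne hj.symm]
    · simp
  have h := congrArg (padicValRat (ℓ i)) (hb.trans (by push_cast; rfl :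
    _ = ((∏ j, ℓ j ^ n j : ℕ) : ℚ)))
  rw [padicValRat.pow, padicValRat.of_nat, hval] at h
  exact Int.natCast_dvd_natCast.mp ⟨_, h.symm⟩

theorem exists_coprime_detectsPow (hp : p.Prime) (hℓ : ∀ i, (ℓ i).Prime) (hinj : ℓ.Injective)
    {N : ℕ} (hN : N ≠ 0) (hℓN : ∀ i, ℓ i ∣ N) : ∃ M : ℕ, M.Coprime N ∧ DetectsPow ℓ p M := by
  classical
  have : NeZero p := ⟨hp.ne_zero⟩
  have htest (e : {e : ι → ZMod p // e ≠ 0}) : ∃ q : ℕ, q.Prime ∧ ¬ q ∣ N ∧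
      ∀ z : ZMod q, z ^ p ≠ ∏ i, (ℓ i : ZMod q) ^ (e.1 i).val := by
    have hne (b : ℚ) : b ^ p ≠ ((∏ i, ℓ i ^ (e.1 i).val : ℕ) : ℤ) := by
      intro hb
      push_cast at hb
      refine e.2 (funext fun i => (ZMod.val_eq_zero _).mp ?_)
      exact Nat.eq_zero_of_dvd_of_lt (dvd_of_pow_eq_prod_primes_pow hℓ hinj hb i) (ZMod.val_lt _)
    obtain ⟨q, hq, hqN, hz⟩ := exists_prime_forall_pow_ne_s12 hp hne hN
    exact ⟨q, hq, hqN, by simpa using hz⟩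
  choose q hq hqN hz using htest
  refine ⟨∏ e, q e, Nat.Coprime.prod_left fun e _ => ((hq e).coprime_iff_not_dvd).mpr (hqN e),
    fun v hv i => ?_⟩
  rw [← ZMod.intCast_zmod_eq_zero_iff_dvd]
  by_contra hvi
  let e : {e : ι → ZMod p // e ≠ 0} := ⟨fun i => v i, fun h => hvi (congrFun h i)⟩
  have : Fact (q e).Prime := ⟨hq e⟩
  obtain ⟨z, hzv⟩ := hv (q e) (Finset.dvd_prod_of_mem q (Finset.mem_univ e))
  have hℓ0 (i : ι) : (ℓ i : ZMod (q e)) ≠ 0 := fun h =>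
    hqN e (((ZMod.natCast_eq_zero_iff _ _).mp h).trans (hℓN i))
  have hpow (i : ι) : (ℓ i : ZMod (q e)) ^ v i =
      (ℓ i : ZMod (q e)) ^ (e.1 i).val * ((ℓ i : ZMod (q e)) ^ (v i / p)) ^ p := by
    rw [← zpow_natCast, ZMod.val_intCast, ← zpow_natCast, ← zpow_mul, ← zpow_add₀ (hℓ0 i),
      mul_comm, Int.emod_add_mul_ediv]
  refine hz e (z / ∏ i, (ℓ i : ZMod (q e)) ^ (v i / p)) ?_
  rw [div_pow, hzv, Finset.prod_congr rfl fun i _ => hpow i, Finset.prod_mul_distrib,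
    Finset.prod_pow, mul_div_cancel_right₀]
  exact pow_ne_zero _ (Finset.prod_ne_zero_iff.mpr fun i _ => zpow_ne_zero _ (hℓ0 i))

theorem exists_coprime_forall_detectsPow (n : ℕ) (hℓ : ∀ i, (ℓ i).Prime) (hinj : ℓ.Injective)
    {N : ℕ} (hN : N ≠ 0) (hℓN : ∀ i, ℓ i ∣ N) :
    ∃ M : ℕ, M.Coprime N ∧ ∀ p ∈ n.primeFactors, DetectsPow ℓ p M := by
  choose M hMN hM using fun p : n.primeFactors =>
    exists_coprime_detectsPow (Nat.prime_of_mem_primeFactors p.2) hℓ hinj hN hℓN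
  exact ⟨∏ p, M p, Nat.Coprime.prod_left fun p _ => hMN p,
    fun p hp => (hM ⟨p, hp⟩).of_dvd (Finset.dvd_prod_of_mem M (Finset.mem_univ _))⟩

end DetectsPow

/-! ### Simplest quartic fields -/

/-- The quartic polynomial of Gras's simplest quartic fields, with parameter `t = -2 * k`. -/
noncomputable def simplestQuartic (k : ℤ) : ℤ[X] :=
  X ^ 4 + C (2 * k) * X ^ 3 - C 6 * X ^ 2 - C (2 * k) * X + 1

/-- The Cayley transform, a projective map of order four permuting the roots of
`simplestQuartic k` cyclically. -/
def cayley {L : Type*} [Field L] (x : L) : L := (x - 1) / (x + 1)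

lemma simplestQuartic_monic (k : ℤ) : (simplestQuartic k).Monic := by
  rw [simplestQuartic]
  monicity!

lemma natDegree_simplestQuartic (k : ℤ) : (simplestQuartic k).natDegree = 4 := by
  rw [simplestQuartic]
  compute_degree!

lemma aeval_simplestQuartic {A : Type*} [CommRing A] (k : ℤ) (x : A) :
    aeval x (simplestQuartic k) = x ^ 4 + 2 * k * x ^ 3 - 6 * x ^ 2 - 2 * k * x + 1 := by
  simp only [simplestQuartic, map_add, map_sub, map_mul, map_pow, map_one, aeval_X, aeval_C,
    algebraMap_int_eq, Int.coe_castRingHom, Int.cast_ofNat]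

lemma map_cayley {L L' : Type*} [Field L] [Field L'] (f : L →+* L') (x : L) :
    f (cayley x) = cayley (f x) := by
  simp [cayley]

lemma map_iterate_cayley {L L' : Type*} [Field L] [Field L'] (f : L →+* L') (t : ℕ) (x : L) :
    f (cayley^[t] x) = cayley^[t] (f x) :=
  (show Function.Semiconj f cayley cayley from map_cayley f).iterate_right t x

lemma aeval_map_simplestQuartic {L L' : Type*} [Field L] [Field L'] (f : L →+* L') {k : ℤ} {x : L}
    (hx : aeval x (simplestQuartic k) = 0) : aeval (f x) (simplestQuartic k) = 0 := by
  simpa [hx] using aeval_algHom_apply f.toIntAlgHom x (simplestQuartic k)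

lemma pow_apply_eq_iterate_cayley {F L : Type*} [Field F] [Field L] [Algebra F L] {σ : L ≃ₐ[F] L}
    {x : L} (hσ : σ x = cayley x) (t : ℕ) : (σ ^ t) x = cayley^[t] x := by
  induction t with
  | zero => rfl
  | succ t ih =>
    rw [pow_succ', AlgEquiv.mul_apply, ih, Function.iterate_succ_apply, ← hσ]
    exact map_iterate_cayley (σ : L →+* L) t x

lemma exists_real_root_simplestQuartic (k : ℤ) :
    ∃ r : ℝ, aeval r (simplestQuartic k) = 0 := by
  have hcont : Continuous fun r : ℝ => aeval r (simplestQuartic k) := by fun_prop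
  have h0 : aeval (0 : ℝ) (simplestQuartic k) = 1 := by simp [aeval_simplestQuartic]
  have h1 : aeval (1 : ℝ) (simplestQuartic k) = -4 := by rw [aeval_simplestQuartic]; ring
  obtain ⟨r, -, hr⟩ := intermediate_value_Icc' (zero_le_one' ℝ) hcont.continuousOn
    (show (0 : ℝ) ∈ _ by rw [h0, h1]; norm_num)
  exact ⟨r, hr⟩

section Roots

variable {L : Type*} [Field L] [CharZero L] {k : ℤ} {x z : L}

lemma ne_zero_of_aeval_simplestQuartic (hx : aeval x (simplestQuartic k) = 0) : x ≠ 0 := by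
  rintro rfl
  simp [aeval_simplestQuartic] at hx

lemma add_one_ne_zero_of_aeval_simplestQuartic (hx : aeval x (simplestQuartic k) = 0) :
    x + 1 ≠ 0 := fun h => by
  rw [aeval_simplestQuartic, eq_neg_of_add_eq_zero_left h] at hx
  exact OfNat.ofNat_ne_zero (R := L) 4 (by linear_combination -hx)

lemma sub_one_ne_zero_of_aeval_simplestQuartic (hx : aeval x (simplestQuartic k) = 0) :
    x - 1 ≠ 0 := fun h => by
  rw [aeval_simplestQuartic, sub_eq_zero.mp h] at hx
  exact OfNat.ofNat_ne_zero (R := L) 4 (by linear_combination -hx)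

lemma cayley_cayley (h : x + 1 ≠ 0) : cayley (cayley x) = -x⁻¹ := by
  obtain rfl | h0 := eq_or_ne x 0
  · simp [cayley]
  · have h2 : x - 1 + (x + 1) ≠ 0 := by
      ring_nf
      exact mul_ne_zero h0 two_ne_zero
    rw [cayley, cayley]
    field_simp
    ring

lemma iterate_cayley_three (h0 : x ≠ 0) (h : x + 1 ≠ 0) :
    cayley^[3] x = (1 + x) / (1 - x) := by
  change cayley (cayley (cayley x)) = _
  rw [cayley_cayley h, cayley, ← mul_div_mul_right _ _ h0, ← neg_div_neg_eq]
  congr 1 <;> field_simp <;> ring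

lemma aeval_cayley_simplestQuartic (hx : aeval x (simplestQuartic k) = 0) :
    aeval (cayley x) (simplestQuartic k) = 0 := by
  have h1 := add_one_ne_zero_of_aeval_simplestQuartic hx
  rw [aeval_simplestQuartic] at hx ⊢
  rw [cayley]
  field_simp
  linear_combination -4 * hx

lemma aeval_iterate_cayley_simplestQuartic (hx : aeval x (simplestQuartic k) = 0) (t : ℕ) :
    aeval (cayley^[t] x) (simplestQuartic k) = 0 :=
  Function.Iterate.rec (fun z => aeval z (simplestQuartic k) = 0)
    hx (fun _ => aeval_cayley_simplestQuartic) t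

lemma isPeriodicPt_cayley (hx : aeval x (simplestQuartic k) = 0) :
    Function.IsPeriodicPt cayley 4 x := by
  have h1 := add_one_ne_zero_of_aeval_simplestQuartic hx
  have h2 := add_one_ne_zero_of_aeval_simplestQuartic (aeval_iterate_cayley_simplestQuartic hx 2)
  change cayley (cayley (cayley^[2] x)) = x
  rw [cayley_cayley h2]
  change -(cayley (cayley x))⁻¹ = x
  rw [cayley_cayley h1, inv_neg, inv_inv, neg_neg]

lemma exists_eq_iterate_cayley (hx : aeval x (simplestQuartic k) = 0)
    (hz : aeval z (simplestQuartic k) = 0) : ∃ t < 4, z = cayley^[t] x := by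
  have h0 := ne_zero_of_aeval_simplestQuartic hx
  have h1 := add_one_ne_zero_of_aeval_simplestQuartic hx
  have h2 : 1 - x ≠ 0 := by
    simpa only [neg_sub] using neg_ne_zero.mpr (sub_one_ne_zero_of_aeval_simplestQuartic hx)
  have h : (z - x) * ((x + 1) * z - (x - 1)) * (x * z + 1) * ((1 - x) * z - (1 + x)) = 0 := by
    rw [aeval_simplestQuartic] at hx hz
    linear_combination (z ^ 3 - z) * hx - (x ^ 3 - x) * hz
  simp only [mul_eq_zero, or_assoc] at h
  obtain h | h | h | h := h
  · exact ⟨0, by norm_num, sub_eq_zero.mp h⟩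
  · refine ⟨1, by norm_num, ?_⟩
    rw [Function.iterate_one, cayley, eq_div_iff h1]
    linear_combination h
  · refine ⟨2, by norm_num, ?_⟩
    change z = cayley (cayley x)
    rw [cayley_cayley h1]
    field_simp
    linear_combination h
  · refine ⟨3, by norm_num, ?_⟩
    rw [iterate_cayley_three h0 h1, eq_div_iff h2]
    linear_combination h

lemma iterate_cayley_val_add (hx : aeval x (simplestQuartic k) = 0) (s t : Fin 4) :
    cayley^[(t + s : Fin 4)] x = cayley^[s] (cayley^[t] x) := by
  rw [Fin.val_add, (isPeriodicPt_cayley hx).iterate_mod_apply, add_comm, Function.iterate_add_apply]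

lemma prod_iterate_cayley_sub_two (hx : aeval x (simplestQuartic k) = 0) :
    (x - 2) * ((cayley x - 2) * (cayley (cayley x) - 2) * (cayley^[3] x - 2)) = 12 * k - 7 := by
  have h0 := ne_zero_of_aeval_simplestQuartic hx
  have h1 := add_one_ne_zero_of_aeval_simplestQuartic hx
  have h2 : 1 - x ≠ 0 := by
    simpa only [neg_sub] using neg_ne_zero.mpr (sub_one_ne_zero_of_aeval_simplestQuartic hx)
  rw [aeval_simplestQuartic] at hx
  rw [iterate_cayley_three h0 h1, cayley_cayley h1, cayley]
  field_simp
  linear_combination 6 * hx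

end Roots

section SquareClasses

variable {F K : Type*} [Field F] [Field K] [Algebra F K] [FiniteDimensional F K] [IsGalois F K]
  [IsCyclic (K ≃ₐ[F] K)]

theorem isSquare_mul_of_isCyclic {a b : F} (ha : ¬IsSquare a) (hb : ¬IsSquare b)
    (haK : IsSquare (algebraMap F K a)) (hbK : IsSquare (algebraMap F K b)) :
    IsSquare (a * b) := by
  obtain ⟨σ, hσ⟩ := IsCyclic.exists_generator (α := K ≃ₐ[F] K)
  have mem_range_of_fixed {z : K} (hz : σ z = z) : z ∈ Set.range (algebraMap F K) := by
    refine (IsGalois.mem_range_algebraMap_iff_fixed z).mpr fun g => ?_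
    exact Subgroup.zpowers_le.mpr (MulAction.mem_stabilizer_iff.mpr hz : σ ∈
      MulAction.stabilizer (K ≃ₐ[F] K) z) (hσ g)
  have map_sqrt {c : F} (hc : ¬IsSquare c) {γ : K} (hγ : algebraMap F K c = γ * γ) :
      σ γ = -γ := by
    have h : σ γ * σ γ = γ * γ := by rw [← map_mul, ← hγ, σ.commutes]
    refine (mul_self_eq_mul_self_iff.mp h).resolve_left fun hfix => hc ?_
    obtain ⟨d, rfl⟩ := mem_range_of_fixed hfix
    exact ⟨d, (algebraMap F K).injective (by rw [hγ, map_mul])⟩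
  obtain ⟨α, hα⟩ := haK
  obtain ⟨β, hβ⟩ := hbK
  obtain ⟨c, hc⟩ := mem_range_of_fixed (z := α * β) (by
    rw [map_mul, map_sqrt ha hα, map_sqrt hb hβ, neg_mul_neg])
  refine ⟨c, (algebraMap F K).injective ?_⟩
  rw [map_mul, map_mul, hα, hβ, hc, mul_mul_mul_comm]

end SquareClasses

lemma not_isSquare_sq_add_four {k : ℤ} (hk : k ≠ 0) : ¬IsSquare (k ^ 2 + 4) := by
  rintro ⟨r, hr⟩
  wlog hk' : 0 < k generalizing k
  · exact this (neg_ne_zero.mpr hk) (by rwa [neg_sq]) (by lia)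
  wlog hr' : 0 ≤ r generalizing r
  · exact this (-r) (by rwa [neg_mul_neg]) (by lia)
  obtain h | rfl | h := lt_trichotomy r (k + 1)
  · nlinarith
  · have : 2 * k = 3 := by linear_combination -hr
    lia
  · nlinarith

section SimplestQuarticField

/-- `K` is the splitting field over `ℚ` of `simplestQuartic k`. -/
abbrev IsSimplestQuarticField (k : ℤ) (K : Type*) [Field K] [CharZero K] : Prop :=
  ((simplestQuartic k).map (algebraMap ℤ ℚ)).IsSplittingField ℚ K

variable {K : Type*} [Field K] [CharZero K] {k : ℤ} {x : K}

namespace IsSimplestQuarticField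

lemma exists_root (hK : IsSimplestQuarticField k K) :
    ∃ x : K, aeval x (simplestQuartic k) = 0 := by
  obtain ⟨x, hx⟩ := hK.splits.exists_eval_eq_zero (by
    rw [degree_map, ((simplestQuartic_monic k).degree_map (algebraMap ℤ ℚ)),
      degree_eq_natDegree (simplestQuartic_monic k).ne_zero, natDegree_simplestQuartic]
    norm_num)
  exact ⟨x, by rwa [eval_map_algebraMap, aeval_map_algebraMap] at hx⟩

lemma finiteDimensional (hK : IsSimplestQuarticField k K) : FiniteDimensional ℚ K :=
  have := hK
  IsSplittingField.finiteDimensional K ((simplestQuartic k).map (algebraMap ℤ ℚ))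

lemma adjoin_root_eq_top (hK : IsSimplestQuarticField k K)
    (hx : aeval x (simplestQuartic k) = 0) : Algebra.adjoin ℚ {x} = ⊤ := by
  have := hK.finiteDimensional
  rw [← IntermediateField.adjoin_simple_toSubalgebra_of_isAlgebraic
    (Algebra.IsAlgebraic.isAlgebraic x), eq_top_iff, ← hK.adjoin_rootSet, Algebra.adjoin_le_iff]
  intro z hz
  have hz := aeval_eq_zero_of_mem_rootSet hz
  rw [aeval_map_algebraMap] at hz
  obtain ⟨t, -, rfl⟩ := exists_eq_iterate_cayley hx hz
  have hgen := IntermediateField.mem_adjoin_simple_self ℚ x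
  have := map_iterate_cayley (algebraMap (IntermediateField.adjoin ℚ {x}) K) t ⟨x, hgen⟩
  exact this ▸ SetLike.coe_mem _

lemma isGalois (hK : IsSimplestQuarticField k K) : IsGalois ℚ K :=
  have := hK.finiteDimensional
  have := Normal.of_isSplittingField (E := K) ((simplestQuartic k).map (algebraMap ℤ ℚ))
  ⟨⟩

lemma algHom_ext {A : Type*} [Semiring A] [Algebra ℚ A] (hK : IsSimplestQuarticField k K)
    (hx : aeval x (simplestQuartic k) = 0) {f g : K →ₐ[ℚ] A} (h : f x = g x) : f = g :=
  AlgHom.ext_of_adjoin_eq_top (hK.adjoin_root_eq_top hx) (by simpa using h)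

end IsSimplestQuarticField

end SimplestQuarticField

/-- For a root `x` of `simplestQuartic k`, the square root of `k ^ 2 + 4` generating the quadratic
subfield of the field generated by `x`. -/
def sqrtSqAddFour {L : Type*} [Field L] (k : ℤ) (x : L) : L := x - x⁻¹ + k

lemma map_sqrtSqAddFour {L L' : Type*} [Field L] [Field L'] (f : L →+* L') (k : ℤ) (x : L) :
    f (sqrtSqAddFour k x) = sqrtSqAddFour k (f x) := by
  simp [sqrtSqAddFour]

section Roots

variable {L : Type*} [Field L] [CharZero L] {k : ℤ} {x : L}

lemma sqrtSqAddFour_mul_self (hx : aeval x (simplestQuartic k) = 0) :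
    sqrtSqAddFour k x * sqrtSqAddFour k x = (k ^ 2 + 4 : ℤ) := by
  have h0 := ne_zero_of_aeval_simplestQuartic hx
  rw [aeval_simplestQuartic] at hx
  rw [sqrtSqAddFour]
  push_cast
  field_simp
  linear_combination hx

lemma sqrtSqAddFour_cayley (hx : aeval x (simplestQuartic k) = 0) :
    sqrtSqAddFour k (cayley x) = -sqrtSqAddFour k x := by
  have h0 := ne_zero_of_aeval_simplestQuartic hx
  have h1 := add_one_ne_zero_of_aeval_simplestQuartic hx
  have h2 := sub_one_ne_zero_of_aeval_simplestQuartic hx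
  rw [aeval_simplestQuartic] at hx
  rw [sqrtSqAddFour, sqrtSqAddFour, cayley]
  field_simp
  linear_combination hx

lemma sqrtSqAddFour_iterate_cayley_two (hx : aeval x (simplestQuartic k) = 0) :
    sqrtSqAddFour k (cayley^[2] x) = sqrtSqAddFour k x := by
  change sqrtSqAddFour k (cayley (cayley x)) = _
  rw [sqrtSqAddFour_cayley (aeval_cayley_simplestQuartic hx), sqrtSqAddFour_cayley hx, neg_neg]

lemma iterate_cayley_two_ne_self (hx : aeval x (simplestQuartic k) = 0) : cayley^[2] x ≠ x := by
  intro h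
  change cayley (cayley x) = x at h
  rw [cayley_cayley (add_one_ne_zero_of_aeval_simplestQuartic hx)] at h
  have hsq : x * x = -1 := by
    nth_rw 1 [← h]
    rw [neg_mul, inv_mul_cancel₀ (ne_zero_of_aeval_simplestQuartic hx)]
  rw [aeval_simplestQuartic] at hx
  have hkx : (k : L) * x = 2 := mul_left_cancel₀ (OfNat.ofNat_ne_zero 4 : (4 : L) ≠ 0) (by
    linear_combination -hx + (x ^ 2 + 2 * k * x - 7) * hsq)
  have hk : ((k ^ 2 + 4 : ℤ) : L) = 0 := by
    push_cast
    linear_combination (k * x + 2) * -hkx + k ^ 2 * hsq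
  exact (show k ^ 2 + 4 ≠ 0 by positivity) (by exact_mod_cast hk)

end Roots

namespace IsSimplestQuarticField

variable {K : Type*} [Field K] [CharZero K] {k : ℤ} {x : K}

theorem isSquare_algebraMap_sq_add_four (hK : IsSimplestQuarticField k K) :
    IsSquare (algebraMap ℚ K (k ^ 2 + 4 : ℤ)) := by
  obtain ⟨x, hx⟩ := hK.exists_root
  exact ⟨sqrtSqAddFour k x, by rw [sqrtSqAddFour_mul_self hx, map_intCast]⟩

lemma exists_algEquiv_sqrtSqAddFour_ne (hK : IsSimplestQuarticField k K) (hk : k ≠ 0)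
    (hx : aeval x (simplestQuartic k) = 0) :
    ∃ g : K ≃ₐ[ℚ] K, sqrtSqAddFour k (g x) ≠ sqrtSqAddFour k x := by
  have := hK.isGalois
  have := hK.finiteDimensional
  by_contra! hfix
  obtain ⟨c, hc⟩ := (IsGalois.mem_range_algebraMap_iff_fixed (sqrtSqAddFour k x)).mpr fun g =>
    (map_sqrtSqAddFour (g : K →+* K) k x).trans (hfix g)
  refine not_isSquare_sq_add_four hk (Rat.isSquare_intCast_iff.mp ⟨c, ?_⟩)
  apply (algebraMap ℚ K).injective
  rw [map_mul, hc, sqrtSqAddFour_mul_self hx, map_intCast]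

theorem exists_algEquiv_apply_eq_cayley (hK : IsSimplestQuarticField k K) (hk : k ≠ 0)
    (hx : aeval x (simplestQuartic k) = 0) : ∃ σ : K ≃ₐ[ℚ] K, σ x = cayley x := by
  obtain ⟨g, hg⟩ := hK.exists_algEquiv_sqrtSqAddFour_ne hk hx
  obtain ⟨t, ht, hgx : g x = _⟩ :=
    exists_eq_iterate_cayley hx (aeval_map_simplestQuartic (g : K →+* K) hx)
  rw [hgx] at hg
  interval_cases t
  · exact absurd rfl hg
  · exact ⟨g, hgx⟩
  · exact absurd (sqrtSqAddFour_iterate_cayley_two hx) hg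
  · refine ⟨g.symm, g.injective ?_⟩
    calc g (g.symm x) = cayley^[4] x := by
          rw [AlgEquiv.apply_symm_apply, isPeriodicPt_cayley hx]
      _ = cayley (g x) := by rw [hgx, Function.iterate_succ_apply']
      _ = g (cayley x) := (map_cayley (g : K →+* K) x).symm

lemma algEquiv_ext (hK : IsSimplestQuarticField k K) (hx : aeval x (simplestQuartic k) = 0)
    {g h : K ≃ₐ[ℚ] K} (hgh : g x = h x) : g = h :=
  AlgEquiv.coe_toAlgHom_injective (hK.algHom_ext hx hgh)

lemma mem_zpowers_of_apply_eq_cayley (hK : IsSimplestQuarticField k K)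
    (hx : aeval x (simplestQuartic k) = 0) {σ : K ≃ₐ[ℚ] K} (hσ : σ x = cayley x)
    (g : K ≃ₐ[ℚ] K) : g ∈ Subgroup.zpowers σ := by
  obtain ⟨t, -, hgx⟩ := exists_eq_iterate_cayley hx (aeval_map_simplestQuartic (g : K →+* K) hx)
  rw [hK.algEquiv_ext hx (hgx.trans (pow_apply_eq_iterate_cayley hσ t).symm)]
  exact Subgroup.npow_mem_zpowers σ t

lemma orderOf_of_apply_eq_cayley (hK : IsSimplestQuarticField k K)
    (hx : aeval x (simplestQuartic k) = 0) {σ : K ≃ₐ[ℚ] K} (hσ : σ x = cayley x) :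
    orderOf σ = 4 := by
  refine orderOf_eq_prime_pow (p := 2) (n := 1) (fun h => ?_) (hK.algEquiv_ext hx ?_)
  · exact iterate_cayley_two_ne_self hx
      ((pow_apply_eq_iterate_cayley hσ 2).symm.trans (DFunLike.congr_fun h x))
  · exact (pow_apply_eq_iterate_cayley hσ 4).trans (isPeriodicPt_cayley hx)

theorem isCyclic (hK : IsSimplestQuarticField k K) (hk : k ≠ 0) : IsCyclic (K ≃ₐ[ℚ] K) := by
  obtain ⟨x, hx⟩ := hK.exists_root
  obtain ⟨σ, hσ⟩ := hK.exists_algEquiv_apply_eq_cayley hk hx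
  exact ⟨σ, hK.mem_zpowers_of_apply_eq_cayley hx hσ⟩

theorem card_algEquiv (hK : IsSimplestQuarticField k K) (hk : k ≠ 0) :
    Nat.card (K ≃ₐ[ℚ] K) = 4 := by
  obtain ⟨x, hx⟩ := hK.exists_root
  obtain ⟨σ, hσ⟩ := hK.exists_algEquiv_apply_eq_cayley hk hx
  rw [← hK.orderOf_of_apply_eq_cayley hx hσ]
  exact (orderOf_eq_card_of_forall_mem_zpowers
    (hK.mem_zpowers_of_apply_eq_cayley hx hσ)).symm

theorem finrank_eq_four (hK : IsSimplestQuarticField k K) (hk : k ≠ 0) :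
    Module.finrank ℚ K = 4 := by
  have := hK.isGalois
  have := hK.finiteDimensional
  rw [← IsGalois.card_aut_eq_finrank, hK.card_algEquiv hk]

lemma minpoly_root (hK : IsSimplestQuarticField k K) (hk : k ≠ 0)
    (hx : aeval x (simplestQuartic k) = 0) :
    minpoly ℚ x = (simplestQuartic k).map (algebraMap ℤ ℚ) := by
  have := hK.finiteDimensional
  have hint : IsIntegral ℚ x := .of_finite ℚ x
  refine (eq_of_monic_of_dvd_of_natDegree_le (minpoly.monic hint)
    ((simplestQuartic_monic k).map _) (minpoly.dvd ℚ x ?_) ?_).symm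
  · rwa [aeval_map_algebraMap]
  · have h := (PowerBasis.ofAdjoinEqTop hint (hK.adjoin_root_eq_top hx)).finrank
    rw [(simplestQuartic_monic k).natDegree_map, natDegree_simplestQuartic,
      ← hK.finrank_eq_four hk, h, PowerBasis.ofAdjoinEqTop_dim]

theorem irreducible (hK : IsSimplestQuarticField k K) (hk : k ≠ 0) :
    Irreducible ((simplestQuartic k).map (algebraMap ℤ ℚ)) := by
  have := hK.finiteDimensional
  obtain ⟨x, hx⟩ := hK.exists_root
  exact hK.minpoly_root hk hx ▸ minpoly.irreducible (.of_finite ℚ x)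

theorem exists_algHom_apply_eq {L : Type*} [Field L] [CharZero L] {z : L}
    (hK : IsSimplestQuarticField k K) (hk : k ≠ 0) (hx : aeval x (simplestQuartic k) = 0)
    (hz : aeval z (simplestQuartic k) = 0) : ∃ f : K →ₐ[ℚ] L, f x = z := by
  have := hK.finiteDimensional
  let pb := PowerBasis.ofAdjoinEqTop (.of_finite ℚ x) (hK.adjoin_root_eq_top hx)
  have hgen : pb.gen = x := PowerBasis.ofAdjoinEqTop_gen ..
  have h0 : aeval z (minpoly ℚ pb.gen) = 0 := by
    rwa [hgen, hK.minpoly_root hk hx, aeval_map_algebraMap]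
  exact ⟨pb.lift z h0, by rw [← hgen, pb.lift_gen]⟩

theorem totallyReal (hK : IsSimplestQuarticField k K) (hk : k ≠ 0) : TotallyReal K := by
  intro φ z
  obtain ⟨x, hx⟩ := hK.exists_root
  obtain ⟨r, hr⟩ := exists_real_root_simplestQuartic k
  obtain ⟨t, -, ht⟩ := exists_eq_iterate_cayley (aeval_map_simplestQuartic Complex.ofRealHom hr)
    (aeval_map_simplestQuartic φ hx)
  obtain ⟨f, hf⟩ := hK.exists_algHom_apply_eq hk hx (aeval_iterate_cayley_simplestQuartic hr t)
  have hφ : φ.toRatAlgHom = (Complex.ofRealHom.comp f.toRingHom).toRatAlgHom := by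
    refine hK.algHom_ext hx ?_
    change φ x = Complex.ofRealHom (f x)
    rw [ht, hf, map_iterate_cayley]
  have : φ z = (f z : ℂ) := DFunLike.congr_fun hφ z
  rw [this, Complex.ofReal_im]

end IsSimplestQuarticField

/-! ### Local power classes -/

lemma isUnit_of_toZMod_ne_zero {q : ℕ} [Fact q.Prime] {u : ℤ_[q]} (hu : PadicInt.toZMod u ≠ 0) :
    IsUnit u := by
  contrapose! hu
  rwa [← RingHom.mem_ker, PadicInt.ker_toZMod, IsLocalRing.mem_maximalIdeal]

/-- `g` is a `p`-th power times a `q`-adic unit with residue `∏ i, ℓ i ^ v i`. -/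
def HasPowClass {ι : Type*} [Fintype ι] {q : ℕ} [Fact q.Prime] (ℓ : ι → ℕ) (p : ℕ) (g : ℚ_[q])
    (v : ι → ℤ) : Prop :=
  ∃ (b : ℚ_[q]) (u : ℤ_[q]ˣ), b ≠ 0 ∧ g = b ^ p * (u : ℤ_[q]) ∧
    PadicInt.toZMod (u : ℤ_[q]) = ∏ i, (ℓ i : ZMod q) ^ v i

namespace HasPowClass

variable {ι : Type*} [Fintype ι] {q : ℕ} [Fact q.Prime] {ℓ : ι → ℕ} {p : ℕ} {g g' : ℚ_[q]}
  {v v' : ι → ℤ}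

lemma of_pow {b : ℚ_[q]} (hb : b ≠ 0) : HasPowClass ℓ p (b ^ p) 0 :=
  ⟨b, 1, hb, by simp, by simp⟩

lemma neg (hp : Odd p) (h : HasPowClass ℓ p g v) : HasPowClass ℓ p (-g) v := by
  obtain ⟨b, u, hb, rfl, hu⟩ := h
  exact ⟨-b, u, neg_ne_zero.mpr hb, by rw [hp.neg_pow, neg_mul], hu⟩

lemma inv (h : HasPowClass ℓ p g v) : HasPowClass ℓ p g⁻¹ (-v) := by
  obtain ⟨b, u, hb, rfl, hu⟩ := h
  refine ⟨b⁻¹, u⁻¹, inv_ne_zero hb, ?_, ?_⟩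
  · rw [mul_inv, inv_pow]
    congr 1
    exact (map_units_inv PadicInt.Coe.ringHom u).symm
  · rw [map_units_inv, hu]
    simp only [Pi.neg_apply, zpow_neg, Finset.prod_inv_distrib]

lemma pow (h : HasPowClass ℓ p g v) (e : ℕ) : HasPowClass ℓ p (g ^ e) (e • v) := by
  obtain ⟨b, u, hb, rfl, hu⟩ := h
  refine ⟨b ^ e, u ^ e, pow_ne_zero e hb, ?_, ?_⟩
  · rw [mul_pow, pow_right_comm, Units.val_pow_eq_pow_val, PadicInt.coe_pow]
  · rw [Units.val_pow_eq_pow_val, map_pow, hu, ← Finset.prod_pow]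
    simp only [Pi.smul_apply, nsmul_eq_mul, mul_comm _ (v _), zpow_mul, zpow_natCast]

lemma zpow (h : HasPowClass ℓ p g v) (e : ℤ) : HasPowClass ℓ p (g ^ e) (e • v) := by
  obtain ⟨m, rfl | rfl⟩ := e.eq_nat_or_neg
  · simpa using h.pow m
  · simpa using (h.pow m).inv

lemma exists_pow_eq (hp : p ≠ 0) {b : ℚ_[q]} (h : HasPowClass ℓ p (b ^ p) v) :
    ∃ z : ZMod q, z ^ p = ∏ i, (ℓ i : ZMod q) ^ v i := by
  obtain ⟨c, u, hc, hcu, hu⟩ := h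
  have hw : (b / c) ^ p = (u : ℤ_[q]) := by
    rw [div_pow, hcu, mul_div_cancel_left₀ _ (pow_ne_zero p hc)]
  have hnorm : ‖b / c‖ = 1 := (pow_eq_one_iff_of_nonneg (norm_nonneg _) hp).mp (by
    rw [← norm_pow, hw, PadicInt.padic_norm_e_of_padicInt, PadicInt.norm_units])
  let w : ℤ_[q] := ⟨b / c, hnorm.le⟩
  have hwu : w ^ p = u := Subtype.ext hw
  exact ⟨PadicInt.toZMod w, by rw [← map_pow, hwu, hu]⟩

lemma of_toZMod_eq (hℓ : ∀ i, (ℓ i : ZMod q) ≠ 0) {u : ℤ_[q]}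
    (hu : PadicInt.toZMod u = ∏ i, (ℓ i : ZMod q) ^ v i) : HasPowClass ℓ p (u : ℚ_[q]) v := by
  have hunit : IsUnit u := isUnit_of_toZMod_ne_zero (by
    rw [hu]
    exact Finset.prod_ne_zero_iff.mpr fun i _ => zpow_ne_zero _ (hℓ i))
  exact ⟨1, hunit.unit, one_ne_zero, by simp, hu⟩

lemma mul (hℓ : ∀ i, (ℓ i : ZMod q) ≠ 0) (h : HasPowClass ℓ p g v)
    (h' : HasPowClass ℓ p g' v') : HasPowClass ℓ p (g * g') (v + v') := by
  obtain ⟨b, u, hb, rfl, hu⟩ := h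
  obtain ⟨b', u', hb', rfl, hu'⟩ := h'
  refine ⟨b * b', u * u', mul_ne_zero hb hb', ?_, ?_⟩
  · rw [mul_mul_mul_comm, mul_pow, Units.val_mul, PadicInt.coe_mul]
  · rw [Units.val_mul, map_mul, hu, hu', ← Finset.prod_mul_distrib]
    simp only [Pi.add_apply, zpow_add₀ (hℓ _)]

lemma div (hℓ : ∀ i, (ℓ i : ZMod q) ≠ 0) (h : HasPowClass ℓ p g v)
    (h' : HasPowClass ℓ p g' v') : HasPowClass ℓ p (g / g') (v - v') := by
  rw [div_eq_mul_inv, sub_eq_add_neg]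
  exact h.mul hℓ h'.inv

lemma prod (hℓ : ∀ i, (ℓ i : ZMod q) ≠ 0) {κ : Type*} (s : Finset κ) {g : κ → ℚ_[q]}
    {v : κ → ι → ℤ} (h : ∀ i, HasPowClass ℓ p (g i) (v i)) :
    HasPowClass ℓ p (∏ i ∈ s, g i) (∑ i ∈ s, v i) := by
  classical
  induction s using Finset.induction with
  | empty => simpa using of_pow (ℓ := ℓ) (p := p) (one_ne_zero (α := ℚ_[q]))
  | insert i s hi ih =>
    rw [Finset.prod_insert hi, Finset.sum_insert hi]
    exact (h i).mul hℓ ih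

end HasPowClass

section LocalRoot

variable {q : ℕ} [Fact q.Prime] {k : ℤ} {y n : ℕ}

lemma cast_ne_zero_of_dvd_of_not_dvd {m r : ℕ} (hm : ¬q ∣ m) (hr : r ∣ m) : (r : ZMod q) ≠ 0 :=
  fun h => hm (((ZMod.natCast_eq_zero_iff r q).mp h).trans hr)

lemma exists_padicInt_root (hq : ¬q ∣ 30) (hn : n ≠ 0) (hy : q ∣ y)
    (hk : (y : ℤ) ^ n + 7 = 12 * k) :
    ∃ z : ℤ_[q], PadicInt.toZMod z = 2 ∧ aeval z (simplestQuartic k) = 0 := by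
  have hyn : PadicInt.toZMod ((y : ℤ_[q]) ^ n) = 0 := by
    rw [map_pow, map_natCast, (ZMod.natCast_eq_zero_iff y q).mpr hy, zero_pow hn]
  have hkq : (y : ℤ_[q]) ^ n + 7 = 12 * k := by exact_mod_cast congrArg (Int.cast (R := ℤ_[q])) hk
  have heval : aeval (2 : ℤ_[q]) (simplestQuartic k) = (y : ℤ_[q]) ^ n := by
    rw [aeval_simplestQuartic]
    linear_combination -hkq
  have hderiv : aeval (2 : ℤ_[q]) (derivative (simplestQuartic k)) = 22 * k + 8 := by
    simp only [simplestQuartic, derivative_mul, derivative_X_pow,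
      derivative_C, derivative_X, derivative_one, map_add, map_sub, map_mul, map_pow, map_zero,
      map_one, aeval_X, aeval_C, algebraMap_int_eq, Int.coe_castRingHom, Int.cast_ofNat,
      Nat.cast_ofNat]
    ring
  have hunit : IsUnit (aeval (2 : ℤ_[q]) (derivative (simplestQuartic k))) := by
    refine isUnit_of_toZMod_ne_zero fun h0 => ?_
    have h125 : PadicInt.toZMod (6 * (22 * (k : ℤ_[q]) + 8)) = ((5 : ℕ) : ZMod q) ^ 3 := by
      rw [show 6 * (22 * (k : ℤ_[q]) + 8) = 11 * (y : ℤ_[q]) ^ n + 125 by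
        linear_combination -11 * hkq, map_add, map_mul, hyn, mul_zero, zero_add, map_ofNat]
      norm_num
    rw [map_mul, ← hderiv, h0, mul_zero] at h125
    exact pow_ne_zero 3 (cast_ne_zero_of_dvd_of_not_dvd hq (by norm_num)) h125.symm
  have hmax {w : ℤ_[q]} : ‖w‖ < 1 ↔ PadicInt.toZMod w = 0 := by
    rw [← PadicInt.mem_nonunits, ← IsLocalRing.mem_maximalIdeal, ← PadicInt.ker_toZMod,
      RingHom.mem_ker]
  have hnorm := PadicInt.isUnit_iff.mp hunit
  obtain ⟨z, hz0, hz2, -⟩ := hensels_lemma (F := simplestQuartic k) (a := (2 : ℤ_[q]))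
    (by rwa [hnorm, one_pow, heval, hmax])
  rw [hnorm, hmax, map_sub, map_ofNat, sub_eq_zero] at hz2
  exact ⟨z, hz2, hz0⟩

end LocalRoot

/-- For a root `x` of `simplestQuartic k` with conjugates `x' = cayley x` and `x'' = cayley x'`:
the elements `x - 2`, `x' - 2`, `x'' - 2`, which generate `n`-th powers of ideals, followed by three
independent units. -/
def radicand {L : Type*} [Field L] (x : L) : Fin 6 → L :=
  ![x - 2, cayley x - 2, cayley (cayley x) - 2, x, cayley x, (x - 1) ^ 2 / 2]

lemma map_radicand {L L' : Type*} [Field L] [Field L'] (f : L →+* L') (x : L) (i : Fin 6) :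
    f (radicand x i) = radicand (f x) i := by
  fin_cases i <;> simp [radicand, map_cayley, map_ofNat f 2]

/-- The exponents of `2, 3, 5` in the residue of `cayley^[t] x - 2` up to `p`-th powers, where `x`
has residue `2`. -/
def subTwoClass : Fin 4 → Fin 3 → ℤ := ![![1, 1, -3], ![0, -1, 1], ![-1, 0, 1], ![0, 0, 1]]

/-- The exponents of `2, 3, 5` in the residue of `cayley^[t] x`, up to sign, where `x` has residue
`2`. -/
def rootClass : Fin 4 → Fin 3 → ℤ := ![![1, 0, 0], ![0, -1, 0], ![-1, 0, 0], ![0, 1, 0]]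

/-- The exponents of `2, 3, 5` in the residue of `(cayley^[t] x - 1) ^ 2 / 2`, where `x` has residue
`2`. -/
def unitClass : Fin 4 → Fin 3 → ℤ := ![![-1, 0, 0], ![1, -2, 0], ![-3, 2, 0], ![3, 0, 0]]

/-- The exponents of `2, 3, 5` in the residues of the entries of `radicand (cayley^[t] x)`, up to
`p`-th powers, where `x` has residue `2`. -/
def radicandClass (t : Fin 4) : Fin 6 → Fin 3 → ℤ :=
  ![subTwoClass t, subTwoClass (t + 1), subTwoClass (t + 2), rootClass t, rootClass (t + 1),
    unitClass t]

section RadicandClass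

variable {q : ℕ} [Fact q.Prime] {p n y : ℕ} {k : ℤ} {z : ℤ_[q]}

lemma two_three_five_ne_zero (hq : ¬q ∣ 30) (i : Fin 3) : ((![2, 3, 5] i : ℕ) : ZMod q) ≠ 0 := by
  refine cast_ne_zero_of_dvd_of_not_dvd hq ?_
  fin_cases i <;> norm_num

lemma hasPowClass_linear (hq : ¬q ∣ 30) (hz : PadicInt.toZMod z = 2) (a b : ℤ) (i j l : ℕ)
    (h : a * 2 + b = 2 ^ i * 3 ^ j * 5 ^ l) :
    HasPowClass ![2, 3, 5] p ((a : ℚ_[q]) * (z : ℚ_[q]) + (b : ℚ_[q])) ![i, j, l] := by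
  have hmod : PadicInt.toZMod ((a : ℤ_[q]) * z + (b : ℤ_[q])) =
      ((2 ^ i * 3 ^ j * 5 ^ l : ℤ) : ZMod q) := by
    rw [← h, map_add, map_mul, hz, map_intCast, map_intCast]
    push_cast
    rfl
  simpa using HasPowClass.of_toZMod_eq (p := p) (two_three_five_ne_zero hq)
    (u := (a : ℤ_[q]) * z + (b : ℤ_[q])) (v := ![i, j, l])
    (by rw [hmod]; simp [Fin.prod_univ_three])

lemma hasPowClass_self (hq : ¬q ∣ 30) (hz : PadicInt.toZMod z = 2) :
    HasPowClass ![2, 3, 5] p (z : ℚ_[q]) ![1, 0, 0] := by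
  simpa using hasPowClass_linear hq hz 1 0 1 0 0 (by norm_num)

lemma hasPowClass_sub_one (hq : ¬q ∣ 30) (hz : PadicInt.toZMod z = 2) :
    HasPowClass ![2, 3, 5] p ((z : ℚ_[q]) - 1) ![0, 0, 0] := by
  simpa [sub_eq_add_neg] using hasPowClass_linear hq hz 1 (-1) 0 0 0 (by norm_num)

lemma hasPowClass_add_one (hq : ¬q ∣ 30) (hz : PadicInt.toZMod z = 2) :
    HasPowClass ![2, 3, 5] p ((z : ℚ_[q]) + 1) ![0, 1, 0] := by
  simpa using hasPowClass_linear hq hz 1 1 0 1 0 (by norm_num)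

lemma hasPowClass_iterate_cayley (hp : Odd p) (hq : ¬q ∣ 30) (hz : PadicInt.toZMod z = 2)
    (hzk : aeval (z : ℚ_[q]) (simplestQuartic k) = 0) (t : Fin 4) :
    HasPowClass ![2, 3, 5] p (cayley^[t] (z : ℚ_[q])) (rootClass t) := by
  have hℓ := two_three_five_ne_zero hq
  have hX : HasPowClass ![2, 3, 5] p (z : ℚ_[q]) _ := hasPowClass_self hq hz
  have hX_sub : HasPowClass ![2, 3, 5] p ((z : ℚ_[q]) - 1) _ := hasPowClass_sub_one hq hz
  have hX_add : HasPowClass ![2, 3, 5] p ((z : ℚ_[q]) + 1) _ := hasPowClass_add_one hq hz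
  fin_cases t
  · exact hX
  · convert hX_sub.div hℓ hX_add using 1
    · rfl
    · decide
  · convert hX.inv.neg hp using 1
    · exact cayley_cayley (add_one_ne_zero_of_aeval_simplestQuartic hzk)
    · decide
  · convert (hX_add.div hℓ hX_sub).neg hp using 1
    · change cayley^[3] (z : ℚ_[q]) = _
      rw [iterate_cayley_three (ne_zero_of_aeval_simplestQuartic hzk)
        (add_one_ne_zero_of_aeval_simplestQuartic hzk), ← div_neg, neg_sub, add_comm]
    · decide

lemma hasPowClass_unit (hq : ¬q ∣ 30) (hz : PadicInt.toZMod z = 2)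
    (hzk : aeval (z : ℚ_[q]) (simplestQuartic k) = 0) (t : Fin 4) :
    HasPowClass ![2, 3, 5] p ((cayley^[t] (z : ℚ_[q]) - 1) ^ 2 / 2) (unitClass t) := by
  have hℓ := two_three_five_ne_zero hq
  have hX : HasPowClass ![2, 3, 5] p (z : ℚ_[q]) _ := hasPowClass_self hq hz
  have hX_sub : HasPowClass ![2, 3, 5] p ((z : ℚ_[q]) - 1) _ := hasPowClass_sub_one hq hz
  have hX_add : HasPowClass ![2, 3, 5] p ((z : ℚ_[q]) + 1) _ := hasPowClass_add_one hq hz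
  have h2 : HasPowClass ![2, 3, 5] p (2 : ℚ_[q]) ![1, 0, 0] := by
    simpa using hasPowClass_linear hq hz 0 2 1 0 0 (by norm_num)
  have h0 := ne_zero_of_aeval_simplestQuartic hzk
  have h1 := add_one_ne_zero_of_aeval_simplestQuartic hzk
  have h1' := sub_one_ne_zero_of_aeval_simplestQuartic hzk
  fin_cases t
  · convert (hX_sub.pow 2).div hℓ h2 using 1
    · rfl
    · decide
  · convert h2.div hℓ (hX_add.pow 2) using 1
    · change (cayley (z : ℚ_[q]) - 1) ^ 2 / 2 = _
      rw [cayley]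
      field_simp
      ring
    · decide
  · convert (hX_add.pow 2).div hℓ (h2.mul hℓ (hX.pow 2)) using 1
    · change (cayley (cayley (z : ℚ_[q])) - 1) ^ 2 / 2 = _
      rw [cayley_cayley h1]
      field_simp
      ring
    · decide
  · convert (h2.mul hℓ (hX.pow 2)).div hℓ (hX_sub.pow 2) using 1
    · change (cayley^[3] (z : ℚ_[q]) - 1) ^ 2 / 2 = _
      have h1'' : 1 - (z : ℚ_[q]) ≠ 0 := by rwa [← neg_ne_zero, neg_sub]
      rw [iterate_cayley_three h0 h1, ← neg_sub (1 : ℚ_[q]) z, neg_sq]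
      field_simp
      ring
    · decide

lemma hasPowClass_iterate_cayley_sub_two_of_ne_zero (hp : Odd p) (hq : ¬q ∣ 30)
    (hz : PadicInt.toZMod z = 2) (hzk : aeval (z : ℚ_[q]) (simplestQuartic k) = 0) {t : Fin 4}
    (ht : t ≠ 0) : HasPowClass ![2, 3, 5] p (cayley^[t] (z : ℚ_[q]) - 2) (subTwoClass t) := by
  have hℓ := two_three_five_ne_zero hq
  have h0 := ne_zero_of_aeval_simplestQuartic hzk
  have h1 := add_one_ne_zero_of_aeval_simplestQuartic hzk
  have h2 := sub_one_ne_zero_of_aeval_simplestQuartic hzk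
  fin_cases t
  · exact absurd rfl ht
  · have h : HasPowClass ![2, 3, 5] p ((z : ℚ_[q]) + 3) ![0, 0, 1] := by
      simpa using hasPowClass_linear hq hz 1 3 0 0 1 (by norm_num)
    convert (h.div hℓ (hasPowClass_add_one hq hz)).neg hp using 1
    · change cayley (z : ℚ_[q]) - 2 = _
      rw [cayley]
      field_simp
      ring
    · decide
  · have h : HasPowClass ![2, 3, 5] p (2 * (z : ℚ_[q]) + 1) ![0, 0, 1] := by
      simpa using hasPowClass_linear hq hz 2 1 0 0 1 (by norm_num)
    convert (h.div hℓ (hasPowClass_self hq hz)).neg hp using 1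
    · change cayley (cayley (z : ℚ_[q])) - 2 = _
      rw [cayley_cayley h1]
      field_simp
      ring
    · decide
  · have h : HasPowClass ![2, 3, 5] p (3 * (z : ℚ_[q]) - 1) ![0, 0, 1] := by
      simpa [sub_eq_add_neg] using hasPowClass_linear hq hz 3 (-1) 0 0 1 (by norm_num)
    convert (h.div hℓ (hasPowClass_sub_one hq hz)).neg hp using 1
    · change cayley^[3] (z : ℚ_[q]) - 2 = _
      rw [iterate_cayley_three h0 h1, ← neg_sub (z : ℚ_[q]), div_neg]
      field_simp
      ring
    · decide

lemma hasPowClass_iterate_cayley_sub_two (hp : Odd p) (hpn : p ∣ n) (hy : y ≠ 0)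
    (hk : (y : ℤ) ^ n + 7 = 12 * k) (hq : ¬q ∣ 30) (hz : PadicInt.toZMod z = 2)
    (hzk : aeval (z : ℚ_[q]) (simplestQuartic k) = 0) (t : Fin 4) :
    HasPowClass ![2, 3, 5] p (cayley^[t] (z : ℚ_[q]) - 2) (subTwoClass t) := by
  have hconj {t : Fin 4} (ht : t ≠ 0) :=
    hasPowClass_iterate_cayley_sub_two_of_ne_zero hp hq hz hzk ht
  obtain rfl | ht := eq_or_ne t 0
  · obtain ⟨m, rfl⟩ := hpn
    have hℓ := two_three_five_ne_zero hq
    have hym : (y : ℚ_[q]) ^ m ≠ 0 := pow_ne_zero m (Nat.cast_ne_zero.mpr hy)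
    have hprod : ((z : ℚ_[q]) - 2) * ((cayley (z : ℚ_[q]) - 2) * (cayley (cayley (z : ℚ_[q])) - 2) *
        (cayley^[3] (z : ℚ_[q]) - 2)) = ((y : ℚ_[q]) ^ m) ^ p := by
      rw [prod_iterate_cayley_sub_two hzk, ← pow_mul, mul_comm m, sub_eq_iff_eq_add]
      exact_mod_cast (congrArg (Int.cast (R := ℚ_[q])) hk).symm
    convert (HasPowClass.of_pow hym).div hℓ (((hconj (t := 1) (by decide)).mul hℓ
      (hconj (t := 2) (by decide))).mul hℓ (hconj (t := 3) (by decide))) using 1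
    · exact eq_div_of_mul_eq (right_ne_zero_of_mul (hprod.trans_ne (pow_ne_zero p hym))) hprod
    · decide
  · exact hconj ht

lemma hasPowClass_radicand (hp : Odd p) (hpn : p ∣ n) (hy : y ≠ 0)
    (hk : (y : ℤ) ^ n + 7 = 12 * k) (hq : ¬q ∣ 30) (hz : PadicInt.toZMod z = 2)
    (hzk : aeval (z : ℚ_[q]) (simplestQuartic k) = 0) (t : Fin 4) (i : Fin 6) :
    HasPowClass ![2, 3, 5] p (radicand (cayley^[t] (z : ℚ_[q])) i) (radicandClass t i) := by
  have hsub := hasPowClass_iterate_cayley_sub_two hp hpn hy hk hq hz hzk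
  have hroot := hasPowClass_iterate_cayley hp hq hz hzk
  have hsub1 := iterate_cayley_val_add hzk 1 t ▸ hsub (t + 1)
  have hsub2 := iterate_cayley_val_add hzk 2 t ▸ hsub (t + 2)
  have hroot1 := iterate_cayley_val_add hzk 1 t ▸ hroot (t + 1)
  fin_cases i
  exacts [hsub t, hsub1, hsub2, hroot t, hroot1, hasPowClass_unit hq hz hzk t]

end RadicandClass

lemma dvd_of_forall_dvd_sum_radicandClass {p : ℕ} (hp : Odd p) {e : Fin 6 → ℤ}
    (h : ∀ t j, (p : ℤ) ∣ (∑ i, e i • radicandClass t i) j) (i : Fin 6) : (p : ℤ) ∣ e i := by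
  have dvd_of_dvd_four_mul {a : ℤ} (ha : (p : ℤ) ∣ 4 * a) : (p : ℤ) ∣ a := by
    refine IsCoprime.dvd_of_dvd_mul_left ?_ ha
    exact_mod_cast Nat.isCoprime_iff_coprime.mpr ((Nat.coprime_two_right.mpr hp).pow_right 2)
  simp only [Finset.sum_apply, Pi.smul_apply, smul_eq_mul, Fin.sum_univ_six] at h
  have h00 : (p : ℤ) ∣ e 0 * 1 + e 1 * 0 + e 2 * -1 + e 3 * 1 + e 4 * 0 + e 5 * -1 := h 0 0
  have h01 : (p : ℤ) ∣ e 0 * 1 + e 1 * -1 + e 2 * 0 + e 3 * 0 + e 4 * -1 + e 5 * 0 := h 0 1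
  have h10 : (p : ℤ) ∣ e 0 * 0 + e 1 * -1 + e 2 * 0 + e 3 * 0 + e 4 * -1 + e 5 * 1 := h 1 0
  have h02 : (p : ℤ) ∣ e 0 * -3 + e 1 * 1 + e 2 * 1 + e 3 * 0 + e 4 * 0 + e 5 * 0 := h 0 2
  have h12 : (p : ℤ) ∣ e 0 * 1 + e 1 * 1 + e 2 * 1 + e 3 * 0 + e 4 * 0 + e 5 * 0 := h 1 2
  have h22 : (p : ℤ) ∣ e 0 * 1 + e 1 * 1 + e 2 * -3 + e 3 * 0 + e 4 * 0 + e 5 * 0 := h 2 2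
  have h32 : (p : ℤ) ∣ e 0 * 1 + e 1 * -3 + e 2 * 1 + e 3 * 0 + e 4 * 0 + e 5 * 0 := h 3 2
  have h0 : (p : ℤ) ∣ e 0 := dvd_of_dvd_four_mul (by convert Int.dvd_sub h12 h02 using 1; ring)
  have h1 : (p : ℤ) ∣ e 1 := dvd_of_dvd_four_mul (by convert Int.dvd_sub h12 h32 using 1; ring)
  have h2 : (p : ℤ) ∣ e 2 := dvd_of_dvd_four_mul (by convert Int.dvd_sub h12 h22 using 1; ring)
  have h4 : (p : ℤ) ∣ e 4 := by convert Int.dvd_sub (Int.dvd_sub h0 h1) h01 using 1; ring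
  have h5 : (p : ℤ) ∣ e 5 := by convert Int.dvd_add h10 (Int.dvd_add h1 h4) using 1; ring
  have h3 : (p : ℤ) ∣ e 3 := by
    convert Int.dvd_add h00 (Int.dvd_add (Int.dvd_sub h2 h0) h5) using 1
    ring
  fin_cases i
  exacts [h0, h1, h2, h3, h4, h5]

theorem IsSimplestQuarticField.dvd_of_prod_radicand_zpow_eq_pow {K : Type*} [Field K] [CharZero K]
    {k : ℤ} {x β : K} {n p y M : ℕ} {e : Fin 6 → ℤ} (hK : IsSimplestQuarticField k K) (hk : k ≠ 0)
    (hx : aeval x (simplestQuartic k) = 0) (hn : n ≠ 0) (hpn : p ∣ n) (hp : Odd p)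
    (hyk : (y : ℤ) ^ n + 7 = 12 * k) (hMy : M ∣ y) (hM : M.Coprime 30) (hy : y ≠ 0)
    (hdet : DetectsPow ![2, 3, 5] p M) (h : ∏ i, radicand x i ^ e i = β ^ p) (i : Fin 6) :
    (p : ℤ) ∣ e i := by
  refine dvd_of_forall_dvd_sum_radicandClass hp (fun t => hdet _ fun q _ hqM => ?_) i
  have hq : ¬q ∣ 30 := fun h =>
    (Fact.out : q.Prime).one_lt.ne' (Nat.eq_one_of_dvd_coprimes hM hqM h)
  obtain ⟨z, hz, hzk⟩ := exists_padicInt_root hq hn (hqM.trans hMy) hyk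
  have hzk' : aeval (z : ℚ_[q]) (simplestQuartic k) = 0 := by
    have := aeval_algHom_apply PadicInt.Coe.ringHom.toIntAlgHom z (simplestQuartic k)
    rwa [hzk, map_zero] at this
  obtain ⟨f, hf⟩ := hK.exists_algHom_apply_eq hk hx (aeval_iterate_cayley_simplestQuartic hzk' t)
  have hprod : ∏ i, radicand (cayley^[t] (z : ℚ_[q])) i ^ e i = f β ^ p := by
    rw [← map_pow, ← h, map_prod, ← hf]
    refine Finset.prod_congr rfl fun i _ => ?_
    rw [map_zpow₀]
    exact congrArg (· ^ e i) (map_radicand (f : K →+* ℚ_[q]) x i).symm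
  have hclass := HasPowClass.prod (two_three_five_ne_zero hq) Finset.univ fun i =>
    (hasPowClass_radicand hp hpn hy hyk hq hz hzk' t i).zpow (e i)
  rw [hprod] at hclass
  exact hclass.exists_pow_eq hp.pos.ne'

/-! ### Relations between units -/

lemma exists_gcd_eq_one_sum_smul_eq_zero {ι M : Type*} [Fintype ι] [AddCommGroup M]
    [Module.Free ℤ M] [Module.Finite ℤ M] (h : Module.finrank ℤ M < Fintype.card ι) (u : ι → M) :
    ∃ c : ι → ℤ, Finset.univ.gcd c = 1 ∧ ∑ i, c i • u i = 0 := by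
  have hdep : ¬LinearIndependent ℤ u := fun hu => h.not_ge hu.fintype_card_le_finrank
  obtain ⟨g, hg, i, hi⟩ := Fintype.not_linearIndependent_iff.mp hdep
  obtain ⟨c, hgc, hc⟩ := Finset.extract_gcd g ⟨i, Finset.mem_univ i⟩
  have hgcd : Finset.univ.gcd g ≠ 0 := fun h0 =>
    hi (Finset.gcd_eq_zero_iff.mp h0 i (Finset.mem_univ i))
  refine ⟨c, hc, (smul_eq_zero.mp ?_).resolve_left hgcd⟩
  rw [← hg, Finset.smul_sum]
  exact Finset.sum_congr rfl fun i hi => by rw [hgc i hi, mul_smul]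

section Units

variable {K : Type*} [Field K] [NumberField K]

lemma unitRank_lt_finrank : Units.rank K < Module.finrank ℚ K := by
  have hcard := InfinitePlace.card_add_two_mul_card_eq_rank K
  rw [Units.rank, InfinitePlace.card_eq_nrRealPlaces_add_nrComplexPlaces]
  have := Module.finrank_pos (R := ℚ) (M := K)
  lia

lemma TotallyReal.sq_eq_one_of_mem_torsion (hK : TotallyReal K) {ζ : (𝓞 K)ˣ}
    (hζ : ζ ∈ Units.torsion K) : ζ ^ 2 = 1 := by
  obtain ⟨φ⟩ : Nonempty (K →+* ℂ) := inferInstance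
  have hreal : φ ζ = ((φ ζ).re : ℂ) := Complex.ext rfl (hK φ ζ)
  have hnorm : ‖φ ζ‖ = 1 := (Units.mem_torsion K).mp hζ (InfinitePlace.mk φ)
  refine Units.coe_injective K (φ.injective ?_)
  rw [hreal, Complex.norm_real, Real.norm_eq_abs] at hnorm
  simp only [Units.coe_pow, Units.coe_one, map_pow, map_one]
  rw [hreal, ← Complex.ofReal_pow, ← sq_abs, hnorm, one_pow, Complex.ofReal_one]

theorem TotallyReal.exists_gcd_eq_one_prod_zpow_eq_pow {ι : Type*} [Fintype ι] {p : ℕ}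
    (hK : TotallyReal K) (hp : Odd p) (hι : Module.finrank ℚ K ≤ Fintype.card ι)
    (u : ι → (𝓞 K)ˣ) :
    ∃ c : ι → ℤ, Finset.univ.gcd c = 1 ∧ ∃ v : (𝓞 K)ˣ, ∏ i, u i ^ c i = v ^ p := by
  obtain ⟨c, hc, hsum⟩ := exists_gcd_eq_one_sum_smul_eq_zero
    (Units.finrank_modTorsion K ▸ unitRank_lt_finrank.trans_le hι)
    fun i => Additive.ofMul (QuotientGroup.mk (u i) : (𝓞 K)ˣ ⧸ Units.torsion K)
  have htors : ∏ i, u i ^ c i ∈ Units.torsion K := by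
    rw [← QuotientGroup.eq_one_iff, QuotientGroup.mk_prod]
    exact hsum
  obtain ⟨m, rfl⟩ := hp
  exact ⟨c, hc, _, by rw [pow_succ, pow_mul, hK.sq_eq_one_of_mem_torsion htors, one_pow, one_mul]⟩

end Units

/-! ### Independent classes of order `n` -/

lemma hasZModRankGE_of_forall_dvd {G : Type*} [CommGroup G] {n s : ℕ} [NeZero n] (g : Fin s → G)
    (hg : ∀ i, g i ^ n = 1)
    (hdvd : ∀ E : Fin s → ℕ, ∏ i, g i ^ E i = 1 → ∀ i, n ∣ E i) : HasZModRankGE G n s := by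
  let powHom (i : Fin s) : ZMod n →+ Additive G :=
    ZMod.lift n ⟨zmultiplesHom _ (.ofMul (g i)), by simp [← ofMul_pow, hg i]⟩
  have powHom_natCast (i : Fin s) (m : ℕ) : powHom i m = .ofMul (g i ^ m) := by
    rw [← Int.cast_natCast, ZMod.lift_coe]
    exact natCast_zsmul _ m
  have powHom_apply (i : Fin s) (a : ZMod n) : powHom i a = .ofMul (g i ^ a.val) := by
    simpa only [ZMod.natCast_zmod_val] using powHom_natCast i a.val
  let Φ : (Fin s → ZMod n) →+ Additive G :=
    ∑ i, (powHom i).comp (Pi.evalAddMonoidHom (fun _ => ZMod n) i)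
  refine ⟨Φ.toMultiplicativeLeft, (injective_iff_map_eq_one _).mpr fun v hv => ?_⟩
  have hprod : ∏ i, g i ^ (v.toAdd i).val = 1 := by
    rw [← hv]
    simp [Φ, powHom_apply, AddMonoidHom.toMultiplicativeLeft]
  refine funext fun i => ?_
  exact (ZMod.val_eq_zero _).mp
    (Nat.eq_zero_of_dvd_of_lt (hdvd _ hprod i) (ZMod.val_lt (v.toAdd i)))

lemma dvd_of_isPrincipal_prod_pow {R ι : Type*} [CommRing R] [IsDomain R] [Fintype ι] {n : ℕ}
    (hn : n ≠ 0) {α : ι → R} {A : ι → Ideal R} (hA : ∀ i, Ideal.span {α i} = A i ^ n)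
    (hα : ∀ p, p.Prime → p ∣ n → ∀ (e : ι → ℕ) (ε : Rˣ) (γ : R),
      ∏ i, α i ^ e i = γ ^ p * ε → ∀ i, p ∣ e i)
    {E : ι → ℕ} (hE : (∏ i, A i ^ E i).IsPrincipal) (i : ι) : n ∣ E i := by
  obtain ⟨β, hβ⟩ := hE.principal
  suffices h : ∀ d, d ∣ n → ∀ i, d ∣ E i from h n dvd_rfl i
  intro d
  induction d using induction_on_primes with
  | zero => exact fun h0 => absurd (zero_dvd_iff.mp h0) hn
  | one => exact fun _ i => one_dvd _
  | prime_mul p d hp ih =>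
    intro hpd
    choose e he using ih ((dvd_mul_left d p).trans hpd)
    obtain ⟨m, rfl⟩ := id hpd
    have hspan : Ideal.span {(β ^ m) ^ p} = Ideal.span {∏ i, α i ^ e i} := by
      rw [← pow_mul, ← Ideal.span_singleton_pow, Ideal.span, ← hβ, ← Ideal.prod_span_singleton,
        ← Finset.prod_pow]
      refine Finset.prod_congr rfl fun i _ => ?_
      rw [← Ideal.span_singleton_pow, hA, he, ← pow_mul, ← pow_mul]
      congr 1
      ring
    obtain ⟨ε, hε⟩ := Ideal.span_singleton_eq_span_singleton.mp hspan
    intro i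
    rw [he i, mul_comm p]
    exact mul_dvd_mul_left d (hα p hp ((dvd_mul_right p d).trans hpd) e ε _ hε.symm i)

theorem hasZModRankGE_classGroup_s12 {R : Type*} [CommRing R] [IsDedekindDomain R] {n s : ℕ}
    (hn : n ≠ 0) {α : Fin s → R} {A : Fin s → Ideal R} (hα0 : ∀ i, α i ≠ 0)
    (hA : ∀ i, Ideal.span {α i} = A i ^ n)
    (hα : ∀ p, p.Prime → p ∣ n → ∀ (e : Fin s → ℕ) (ε : Rˣ) (γ : R),
      ∏ i, α i ^ e i = γ ^ p * ε → ∀ i, p ∣ e i) :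
    HasZModRankGE (ClassGroup R) n s := by
  have := NeZero.mk hn
  have hA0 (i : Fin s) : A i ∈ nonZeroDivisors (Ideal R) := by
    refine mem_nonZeroDivisors_of_ne_zero fun h0 => hα0 i ?_
    rw [← Ideal.span_singleton_eq_bot, hA, h0, zero_pow hn, Ideal.zero_eq_bot]
  refine hasZModRankGE_of_forall_dvd (fun i => ClassGroup.mk0 ⟨A i, hA0 i⟩) (fun i => ?_)
    fun E hE => dvd_of_isPrincipal_prod_pow hn hA hα ?_
  · rw [← map_pow, SubmonoidClass.mk_pow, ClassGroup.mk0_eq_one_iff, ← hA i]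
    exact ⟨⟨α i, rfl⟩⟩
  · have hmem : ∏ i, A i ^ E i ∈ nonZeroDivisors (Ideal R) :=
      Submonoid.prod_mem _ fun i _ => Submonoid.pow_mem _ (hA0 i) _
    have hmk : (⟨∏ i, A i ^ E i, hmem⟩ : nonZeroDivisors (Ideal R)) =
        ∏ i, ⟨A i, hA0 i⟩ ^ E i :=
      Subtype.ext (by simp only [Submonoid.coe_finsetProd, SubmonoidClass.coe_pow])
    rw [← ClassGroup.mk0_eq_one_iff hmem, hmk, map_prod]
    simpa only [map_pow] using hE

/-! ### The class group of a simplest quartic field -/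

section Units

variable {K : Type*} [Field K] {k : ℤ} {x : K}

lemma isIntegral_of_aeval_simplestQuartic (hx : aeval x (simplestQuartic k) = 0) :
    IsIntegral ℤ x :=
  ⟨simplestQuartic k, simplestQuartic_monic k, hx⟩

lemma exists_coe_unit_eq {a b : K} (ha : IsIntegral ℤ a) (hb : IsIntegral ℤ b) (hab : a * b = 1) :
    ∃ u : (𝓞 K)ˣ, (u : K) = a :=
  ⟨Units.mkOfMulEqOne ⟨a, ha⟩ ⟨b, hb⟩ (RingOfIntegers.ext hab), rfl⟩

variable [CharZero K]

lemma exists_coe_unit_eq_of_aeval_simplestQuartic (hx : aeval x (simplestQuartic k) = 0) :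
    ∃ u : (𝓞 K)ˣ, (u : K) = x := by
  refine exists_coe_unit_eq (b := -cayley^[2] x) (isIntegral_of_aeval_simplestQuartic hx)
    (isIntegral_of_aeval_simplestQuartic (aeval_iterate_cayley_simplestQuartic hx 2)).neg ?_
  change x * -cayley (cayley x) = 1
  rw [cayley_cayley (add_one_ne_zero_of_aeval_simplestQuartic hx), neg_neg,
    mul_inv_cancel₀ (ne_zero_of_aeval_simplestQuartic hx)]

lemma isIntegral_sub_one_sq_div_two (hx : aeval x (simplestQuartic k) = 0) :
    IsIntegral ℤ ((x - 1) ^ 2 / 2) := by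
  let x' : 𝓞 K := ⟨x, isIntegral_of_aeval_simplestQuartic hx⟩
  let A : 𝓞 K := (2 + k) * (x' - 1) + 3 * k
  let B : 𝓞 K := (k - 2) * (x' - 1) - 1
  have h : IsIntegral (𝓞 K) ((x - 1) ^ 2 / 2) := by
    refine ⟨X ^ 2 + C A * X + C B, by monicity!, ?_⟩
    have hx' : algebraMap (𝓞 K) K x' = x := rfl
    have hA : algebraMap (𝓞 K) K A = (2 + k) * (x - 1) + 3 * k := by
      simp only [A, map_add, map_mul, map_sub, map_one, map_intCast, map_ofNat, hx']
    have hB : algebraMap (𝓞 K) K B = (k - 2) * (x - 1) - 1 := by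
      simp only [B, map_mul, map_sub, map_one, map_intCast, map_ofNat, hx']
    simp only [eval₂_add, eval₂_mul, eval₂_pow, eval₂_X, eval₂_C, hA, hB]
    rw [aeval_simplestQuartic] at hx
    linear_combination (1 / 4) * hx
  exact isIntegral_trans (R := ℤ) (A := 𝓞 K) _ h

lemma exists_coe_unit_eq_sub_one_sq_div_two (hx : aeval x (simplestQuartic k) = 0) :
    ∃ u : (𝓞 K)ˣ, (u : K) = (x - 1) ^ 2 / 2 := by
  have hx1 := aeval_cayley_simplestQuartic hx
  have hx3 := aeval_iterate_cayley_simplestQuartic hx 3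
  have h0 := ne_zero_of_aeval_simplestQuartic hx
  have h1 := add_one_ne_zero_of_aeval_simplestQuartic hx
  have h2 := sub_one_ne_zero_of_aeval_simplestQuartic hx
  have h3 : 1 - x ≠ 0 := by simpa only [neg_sub] using neg_ne_zero.mpr h2
  refine exists_coe_unit_eq (isIntegral_sub_one_sq_div_two hx)
    ((isIntegral_sub_one_sq_div_two hx1).mul ((isIntegral_of_aeval_simplestQuartic hx3).pow 2)) ?_
  rw [iterate_cayley_three h0 h1, cayley]
  field_simp
  ring

end Units

section Coprime

variable {R : Type*} [CommRing R]

lemma isCoprime_of_dvd_natCast {a b : R} {m N : ℕ} (hmN : m.Coprime N) (ha : a ∣ N)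
    (hm : (m : R) ∈ Ideal.span {a, b}) : IsCoprime a b := by
  obtain ⟨c, d, hcd⟩ := Ideal.mem_span_pair.mp hm
  obtain ⟨r, hr⟩ := ha
  obtain ⟨u, v, huv⟩ := hmN.isCoprime
  have huv' : (u * m + v * N : R) = 1 := mod_cast congrArg (Int.cast : ℤ → R) huv
  exact ⟨u * c + v * r, u * d, by linear_combination huv' + u * hcd - v * hr⟩

variable {s : ℕ → R}

lemma five_mem_span_sub_two (hsucc : ∀ t, s (t + 1) * (s t + 1) = s t - 1)
    (hopp : ∀ t, s t * s (t + 2) = -1) (hper : s 4 = s 0) {i j : ℕ} (hij : i < j) (hj : j < 4) :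
    (5 : R) ∈ Ideal.span {s i - 2, s j - 2} := by
  have hnext (t) : (5 : R) ∈ Ideal.span {s t - 2, s (t + 1) - 2} :=
    Ideal.mem_span_pair.mpr ⟨-1, -(s t + 1), by linear_combination -hsucc t⟩
  have hskip (t) : (5 : R) ∈ Ideal.span {s t - 2, s (t + 2) - 2} :=
    Ideal.mem_span_pair.mpr ⟨-2, -s t, by linear_combination -hopp t⟩
  obtain rfl | rfl | ⟨rfl, rfl⟩ : j = i + 1 ∨ j = i + 2 ∨ i = 0 ∧ j = 3 := by lia
  · exact hnext i
  · exact hskip i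
  · rw [Set.pair_comm, ← hper]
    exact hnext 3

end Coprime

section ClassGroup

variable {K : Type*} [Field K] [NumberField K] {k : ℤ} {x : K} {n y : ℕ} {s : ℕ → 𝓞 K}

lemma prod_sub_two_eq_pow (hx : aeval x (simplestQuartic k) = 0) (hyk : (y : ℤ) ^ n + 7 = 12 * k)
    (hs : ∀ t, (s t : K) = cayley^[t] x) : ∏ i : Fin 4, (s i - 2) = (y : 𝓞 K) ^ n := by
  have hyk' : (y : K) ^ n + 7 = 12 * k := mod_cast congrArg (Int.cast : ℤ → K) hyk
  have hprod := prod_iterate_cayley_sub_two hx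
  refine RingOfIntegers.ext ?_
  simp only [Fin.prod_univ_four, map_mul, map_sub, map_pow, map_natCast, hs,
    map_ofNat (algebraMap (𝓞 K) K)]
  change (x - 2) * (cayley x - 2) * (cayley (cayley x) - 2) * (cayley^[3] x - 2) = _
  linear_combination hprod - hyk'

lemma isCoprime_sub_two (hx : aeval x (simplestQuartic k) = 0) (hyk : (y : ℤ) ^ n + 7 = 12 * k)
    (hy : ¬5 ∣ y) (hs : ∀ t, (s t : K) = cayley^[t] x) {i j : Fin 4} (hij : i < j) :
    IsCoprime (s i - 2) (s j - 2) := by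
  have hsucc (t) : s (t + 1) * (s t + 1) = s t - 1 := by
    refine RingOfIntegers.ext ?_
    have h1 := add_one_ne_zero_of_aeval_simplestQuartic (aeval_iterate_cayley_simplestQuartic hx t)
    simp only [map_mul, map_add, map_sub, map_one, hs, Function.iterate_succ_apply']
    rw [cayley, div_mul_cancel₀ _ h1]
  have hopp (t) : s t * s (t + 2) = -1 := by
    refine RingOfIntegers.ext ?_
    have ht := aeval_iterate_cayley_simplestQuartic hx t
    simp only [map_mul, map_neg, map_one, hs, Function.iterate_succ_apply']
    rw [cayley_cayley (add_one_ne_zero_of_aeval_simplestQuartic ht), mul_neg,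
      mul_inv_cancel₀ (ne_zero_of_aeval_simplestQuartic ht)]
  have hper : s 4 = s 0 := RingOfIntegers.ext (by rw [hs, hs]; exact isPeriodicPt_cayley hx)
  have hcop : Nat.Coprime 5 (y ^ n) :=
    ((Nat.Prime.coprime_iff_not_dvd Nat.prime_five).mpr hy).pow_right n
  refine isCoprime_of_dvd_natCast hcop ?_ (five_mem_span_sub_two hsucc hopp hper hij j.isLt)
  rw [Nat.cast_pow, ← prod_sub_two_eq_pow hx hyk hs]
  exact Finset.dvd_prod_of_mem (fun i : Fin 4 => s i - 2) (Finset.mem_univ i)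

lemma exists_span_sub_two_eq_pow (hx : aeval x (simplestQuartic k) = 0)
    (hyk : (y : ℤ) ^ n + 7 = 12 * k) (hy : ¬5 ∣ y) (hs : ∀ t, (s t : K) = cayley^[t] x)
    (i : Fin 4) : ∃ A, Ideal.span {s i - 2} = A ^ n := by
  refine Finset.exists_eq_pow_of_mul_eq_pow_of_coprime (c := Ideal.span {(y : 𝓞 K)})
    (f := fun i : Fin 4 => Ideal.span {s i - 2}) (fun i _ j _ hij => ?_) ?_ i (Finset.mem_univ i)
  · rw [Ideal.isCoprime_span_singleton_iff]
    obtain hij | hji := hij.lt_or_gt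
    · exact isCoprime_sub_two hx hyk hy hs hij
    · exact (isCoprime_sub_two hx hyk hy hs hji).symm
  · rw [Ideal.prod_span_singleton, prod_sub_two_eq_pow hx hyk hs, Ideal.span_singleton_pow]

end ClassGroup

namespace IsSimplestQuarticField

variable {K : Type*} [Field K] [NumberField K] {k : ℤ} {x : K} {n y M : ℕ}

lemma exists_gcd_eq_one_prod_unit_zpow_eq_pow (hK : IsSimplestQuarticField k K) (hk : k ≠ 0)
    (hx : aeval x (simplestQuartic k) = 0) {p : ℕ} (hp : Odd p) (ε : (𝓞 K)ˣ) :
    ∃ c : Fin 4 → ℤ, Finset.univ.gcd c = 1 ∧ ∃ v : K,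
      x ^ c 0 * cayley x ^ c 1 * ((x - 1) ^ 2 / 2) ^ c 2 * (ε : K) ^ c 3 = v ^ p := by
  obtain ⟨u, hu⟩ := exists_coe_unit_eq_of_aeval_simplestQuartic hx
  obtain ⟨u', hu'⟩ :=
    exists_coe_unit_eq_of_aeval_simplestQuartic (aeval_cayley_simplestQuartic hx)
  obtain ⟨η, hη⟩ := exists_coe_unit_eq_sub_one_sq_div_two hx
  obtain ⟨c, hc, v, hv⟩ := (hK.totallyReal hk).exists_gcd_eq_one_prod_zpow_eq_pow hp (ι := Fin 4)
    (hK.finrank_eq_four hk).le ![u, u', η, ε]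
  refine ⟨c, hc, v, ?_⟩
  rw [← hu', ← hη]
  nth_rw 1 [← hu]
  simpa [Fin.prod_univ_four, Units.coe_zpow] using congrArg (fun w : (𝓞 K)ˣ => (w : K)) hv

lemma dvd_of_prod_sub_two_pow_eq (hK : IsSimplestQuarticField k K) (hk : k ≠ 0)
    (hx : aeval x (simplestQuartic k) = 0) (hn : n ≠ 0) {p : ℕ} (hp : p.Prime) (hpn : p ∣ n)
    (hodd : Odd p) (hyk : (y : ℤ) ^ n + 7 = 12 * k) (hMy : M ∣ y) (hM : M.Coprime 30) (hy : y ≠ 0)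
    (hdet : DetectsPow ![2, 3, 5] p M) {e : Fin 3 → ℕ} {ε : (𝓞 K)ˣ} {γ : K}
    (h : ∏ i : Fin 3, (cayley^[i] x - 2) ^ e i = γ ^ p * ε) (i : Fin 3) : p ∣ e i := by
  obtain ⟨c, hc, v, hv⟩ := hK.exists_gcd_eq_one_prod_unit_zpow_eq_pow hk hx hodd ε
  have hsub : (x - 2) ^ (c 3 * e 0) * (cayley x - 2) ^ (c 3 * e 1) *
      (cayley (cayley x) - 2) ^ (c 3 * e 2) = (γ ^ c 3) ^ p * (ε : K) ^ c 3 := by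
    have hγ : (γ ^ c 3) ^ p = (γ ^ p) ^ c 3 := by
      rw [← zpow_natCast, zpow_comm, zpow_natCast]
    simp only [zpow_mul', zpow_natCast, hγ, ← mul_zpow]
    rw [← h, Fin.prod_univ_three]
    rfl
  have hrad : ∏ i, radicand x i ^ ![c 3 * e 0, c 3 * e 1, c 3 * e 2, c 0, c 1, c 2] i =
      (v * γ ^ c 3) ^ p := by
    rw [mul_pow, ← hv, Fin.prod_univ_six]
    change (x - 2) ^ (c 3 * e 0) * (cayley x - 2) ^ (c 3 * e 1) *
      (cayley (cayley x) - 2) ^ (c 3 * e 2) * x ^ c 0 * cayley x ^ c 1 *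
        ((x - 1) ^ 2 / 2) ^ c 2 = _
    linear_combination (x ^ c 0 * cayley x ^ c 1 * ((x - 1) ^ 2 / 2) ^ c 2) * hsub
  have hdvd := hK.dvd_of_prod_radicand_zpow_eq_pow hk hx hn hpn hodd hyk hMy hM hy hdet hrad
  have hpc : ¬(p : ℤ) ∣ c 3 := by
    intro hc3
    have : (p : ℤ) ∣ 1 := hc ▸ Finset.dvd_gcd fun j _ => by
      fin_cases j
      exacts [hdvd 3, hdvd 4, hdvd 5, hc3]
    exact hp.one_lt.ne' (by exact_mod_cast Int.eq_one_of_dvd_one (by positivity) this)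
  have hmul : (p : ℤ) ∣ c 3 * e i := by
    fin_cases i
    exacts [hdvd 0, hdvd 1, hdvd 2]
  exact_mod_cast ((Nat.prime_iff_prime_int.mp hp).dvd_or_dvd hmul).resolve_left hpc

theorem hasZModRankGE_classGroup_three (hK : IsSimplestQuarticField k K) (hodd : Odd n)
    (hyk : (y : ℤ) ^ n + 7 = 12 * k) (hy5 : ¬5 ∣ y) (hMy : M ∣ y) (hM : M.Coprime 30)
    (hdet : ∀ p ∈ n.primeFactors, DetectsPow ![2, 3, 5] p M) :
    HasZModRankGE (ClassGroup (𝓞 K)) n 3 := by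
  have hk : k ≠ 0 := by
    rintro rfl
    have : (0 : ℤ) ≤ (y : ℤ) ^ n := by positivity
    lia
  have hy : y ≠ 0 := fun h => hy5 (h ▸ dvd_zero 5)
  have hn : n ≠ 0 := hodd.pos.ne'
  obtain ⟨x, hx⟩ := hK.exists_root
  let s (t : ℕ) : 𝓞 K :=
    ⟨cayley^[t] x, isIntegral_of_aeval_simplestQuartic (aeval_iterate_cayley_simplestQuartic hx t)⟩
  have hs (t) : (s t : K) = cayley^[t] x := rfl
  have hprod : ∏ i : Fin 4, (s i - 2) ≠ 0 := by
    rw [prod_sub_two_eq_pow hx hyk hs]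
    exact pow_ne_zero n (Nat.cast_ne_zero.mpr hy)
  choose A hA using exists_span_sub_two_eq_pow hx hyk hy5 hs
  refine hasZModRankGE_classGroup_s12 (α := fun i : Fin 3 => s i.castSucc - 2) hn
    (fun i => Finset.prod_ne_zero_iff.mp hprod i.castSucc (Finset.mem_univ _))
    (fun i => hA i.castSucc) fun p hp hpn e ε γ h => ?_
  refine hK.dvd_of_prod_sub_two_pow_eq hk hx hn hp hpn (hodd.of_dvd_nat hpn) hyk hMy hM hy
    (hdet p (Nat.mem_primeFactors.mpr ⟨hp, hpn, hn⟩)) (ε := ε) (γ := γ) ?_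
  simpa [hs, map_ofNat (algebraMap (𝓞 K) K)] using congrArg (fun w : 𝓞 K => (w : K)) h

end IsSimplestQuarticField

/-! ### Infinitely many fields -/

lemma exists_twelve_mul_eq_pow_add_seven {n y : ℕ} (hn : Odd n) (hy : y % 120 = 77) :
    ∃ k : ℕ, y ^ n + 7 = 12 * k ∧ (k ^ 2 + 4).Coprime 30 := by
  obtain ⟨m, rfl⟩ := hn
  have hpow : y ^ (2 * m + 1) % 120 = 77 ∨ y ^ (2 * m + 1) % 120 = 53 := by
    induction m with
    | zero => left; simpa using hy
    | succ m ih =>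
      rw [show 2 * (m + 1) + 1 = 2 * m + 1 + 2 by ring, pow_add, Nat.mul_mod, Nat.pow_mod y 2, hy]
      lia
  obtain ⟨k, hk⟩ : 12 ∣ y ^ (2 * m + 1) + 7 := by lia
  refine ⟨k, hk, ?_⟩
  have hcoprime (r) (hr : (r ^ 2 + 4).Coprime 30) (hkr : k ≡ r [MOD 30]) :
      (k ^ 2 + 4).Coprime 30 :=
    ((hkr.pow 2).add_right 4).gcd_eq.trans hr
  obtain h | h | h | h | h | h : k % 30 = 5 ∨ k % 30 = 7 ∨ k % 30 = 15 ∨ k % 30 = 17 ∨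
      k % 30 = 25 ∨ k % 30 = 27 := by lia
  exacts [hcoprime 5 (by norm_num) h, hcoprime 7 (by norm_num) h, hcoprime 15 (by norm_num) h,
    hcoprime 17 (by norm_num) h, hcoprime 25 (by norm_num) h, hcoprime 27 (by norm_num) h]

lemma coprime_sq_add_four {n y k : ℕ} (hn : n ≠ 0) (hy : ¬5 ∣ y) (hk : y ^ n + 7 = 12 * k) :
    (k ^ 2 + 4).Coprime y := by
  have hk' : 144 * (k ^ 2 + 4) = 625 + y ^ n * (y ^ n + 14) := by
    calc 144 * (k ^ 2 + 4) = (12 * k) ^ 2 + 576 := by ring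
      _ = 625 + y ^ n * (y ^ n + 14) := by rw [← hk]; ring
  have h625 : Nat.Coprime 625 (y ^ n) :=
    Nat.Coprime.pow 4 n ((Nat.Prime.coprime_iff_not_dvd Nat.prime_five).mpr hy)
  refine (Nat.coprime_pow_right_iff hn.bot_lt _ _).mp (Nat.Coprime.coprime_mul_left (k := 144) ?_)
  rw [hk']
  exact (Nat.coprime_add_mul_left_left _ _ _).mpr h625

lemma exists_coprime_sq_add_four {n M N : ℕ} (hn : Odd n) (hM : M.Coprime 30)
    (hN : N.Coprime 30) :
    ∃ y k : ℕ, y % 120 = 77 ∧ M ∣ y ∧ y ^ n + 7 = 12 * k ∧ (k ^ 2 + 4).Coprime N := by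
  have h120 : Nat.Coprime 120 (M * N) :=
    (((hM.mul_left hN).pow_right 3).coprime_dvd_right (by norm_num)).symm
  obtain ⟨y, hy, hMN⟩ := Nat.chineseRemainder h120 77 0
  rw [Nat.modEq_zero_iff_dvd] at hMN
  obtain ⟨k, hk, -⟩ := exists_twelve_mul_eq_pow_add_seven hn hy
  have hy5 : ¬5 ∣ y := by
    have : y % 120 = 77 := hy
    lia
  exact ⟨y, k, hy, (dvd_mul_right M N).trans hMN, hk,
    (coprime_sq_add_four hn.pos.ne' hy5 hk).coprime_dvd_right ((dvd_mul_left N M).trans hMN)⟩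

lemma IsSimplestQuarticField.not_coprime_sq_add_four {K : Type*} [Field K] [CharZero K] {k l : ℕ}
    (hK : IsSimplestQuarticField k K) (hL : IsSimplestQuarticField l K) (hk : k ≠ 0) (hl : l ≠ 0) :
    ¬(k ^ 2 + 4).Coprime (l ^ 2 + 4) := by
  intro hcop
  have hk' : (k : ℤ) ≠ 0 := mod_cast hk
  have hl' : (l : ℤ) ≠ 0 := mod_cast hl
  have := hK.isGalois
  have := hK.finiteDimensional
  have := hK.isCyclic hk'
  have hsq : IsSquare ((k ^ 2 + 4 : ℤ) * (l ^ 2 + 4 : ℤ) : ℚ) :=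
    isSquare_mul_of_isCyclic (K := K)
      (fun h => not_isSquare_sq_add_four hk' (Rat.isSquare_intCast_iff.mp h))
      (fun h => not_isSquare_sq_add_four hl' (Rat.isSquare_intCast_iff.mp h))
      hK.isSquare_algebraMap_sq_add_four hL.isSquare_algebraMap_sq_add_four
  obtain ⟨c, hc⟩ : IsSquare ((k ^ 2 + 4) * (l ^ 2 + 4)) :=
    Rat.isSquare_natCast_iff.mp (by exact_mod_cast hsq)
  obtain ⟨d, hd⟩ := exists_eq_pow_of_mul_eq_pow (Nat.isUnit_iff.mpr hcop) (hc.trans (sq c).symm)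
  exact not_isSquare_sq_add_four hk' ⟨d, by exact_mod_cast hd.trans (sq d)⟩

lemma exists_isSimplestQuarticField (k : ℤ) :
    ∃ K : IntermediateField ℚ ℂ, IsSimplestQuarticField k K :=
  ⟨_, IntermediateField.adjoin_rootSet_isSplittingField (IsAlgClosed.splits _)⟩

/-- The simplest quartic fields in `ℂ` with parameter `(y ^ n + 7) / 12`, for `y` divisible by `M`.
The condition `y ≡ 77 [MOD 120]` strengthens `y ≡ 5 [MOD 12]` and `¬5 ∣ y`; it makes `k ^ 2 + 4`
prime to `30`. -/
def quarticFamily (n M : ℕ) : Set (IntermediateField ℚ ℂ) :=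
  {K | ∃ y k : ℕ, y % 120 = 77 ∧ M ∣ y ∧ y ^ n + 7 = 12 * k ∧ IsSimplestQuarticField k K}

theorem infinite_quarticFamily {n M : ℕ} (hn : Odd n) (hM : M.Coprime 30) :
    (quarticFamily n M).Infinite := by
  intro hfin
  have hparam (K : IntermediateField ℚ ℂ) (hK : K ∈ quarticFamily n M) :
      ∃ k : ℕ, k ≠ 0 ∧ (k ^ 2 + 4).Coprime 30 ∧ IsSimplestQuarticField k K := by
    obtain ⟨y, k, hy, -, hk, hK⟩ := hK
    obtain ⟨k', hk', hcop⟩ := exists_twelve_mul_eq_pow_add_seven hn hy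
    obtain rfl : k = k' := by lia
    exact ⟨k, by lia, hcop, hK⟩
  choose! κ hκ0 hκ30 hκ using hparam
  obtain ⟨y, k, hy, hMy, hk, hcop⟩ := exists_coprime_sq_add_four hn hM
    (Nat.Coprime.prod_left fun K hK => hκ30 K (hfin.mem_toFinset.mp hK))
  obtain ⟨K, hK⟩ := exists_isSimplestQuarticField k
  have hmem : K ∈ quarticFamily n M := ⟨y, k, hy, hMy, hk, hK⟩
  exact hK.not_coprime_sq_add_four (hκ K hmem) (by lia) (hκ0 K hmem) <|
    hcop.coprime_dvd_right (Finset.dvd_prod_of_mem (κ · ^ 2 + 4) (hfin.mem_toFinset.mpr hmem))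

lemma eq_of_algEquiv {F L : Type*} [Field F] [Field L] [Algebra F L] {K K' : IntermediateField F L}
    [Normal F K] (e : K ≃ₐ[F] K') : K = K' := by
  have hf : (K'.val.comp e.toAlgHom).fieldRange = K' := by
    refine le_antisymm ?_ fun w hw => ⟨e.symm ⟨w, hw⟩, ?_⟩
    · rintro _ ⟨z, rfl⟩
      exact (e z).2
    · change (e (e.symm ⟨w, hw⟩) : L) = w
      rw [e.apply_symm_apply]
  exact (AlgHom.fieldRange_of_normal _).symm.trans hf

lemma map_simplestQuartic_eq {n y k : ℕ} (hk : y ^ n + 7 = 12 * k) :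
    (simplestQuartic k).map (algebraMap ℤ ℚ) = X ^ 4 + C (((y : ℚ) ^ n + 7) / 6) * X ^ 3 -
      C 6 * X ^ 2 - C (((y : ℚ) ^ n + 7) / 6) * X + 1 := by
  have hk' : ((y : ℚ) ^ n + 7) / 6 = 2 * k := by
    rw [div_eq_iff (by norm_num)]
    exact_mod_cast hk.trans (by ring)
  rw [hk']
  simp [simplestQuartic, map_ofNat (C : ℚ →+* ℚ[X])]

lemma IsSimplestQuarticField.eq_of_ringEquiv {k : ℤ} {K L : IntermediateField ℚ ℂ}
    (hK : IsSimplestQuarticField k K) (e : K ≃+* L) : K = L := by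
  -- `IntermediateField.algebra'` is not reducibly the `ℚ`-algebra structure of a field.
  have : @Normal ℚ K _ _ (IntermediateField.algebra' K) := hK.isGalois.to_normal
  exact eq_of_algEquiv e.toRatAlgEquiv

/-- **Cyclic quartic fields with large class group (`G = ℤ/4ℤ`).**
For every odd integer `n > 1` there are infinitely many pairwise non-isomorphic totally
real cyclic quartic fields `K`, each a splitting field of an irreducible polynomial
`x⁴ + ((yⁿ + 7)/6)x³ - 6x² - ((yⁿ + 7)/6)x + 1` with `y` a positive integer,
`y ≡ 5 (mod 12)` and `5 ∤ y`, such that `rank_n Cl(K) ≥ 3`. -/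
theorem cyclic_quartic_large_class_group (n : ℕ) (hn : 1 < n) (hodd : Odd n) :
    ∃ S : Set (IntermediateField ℚ ℂ), S.Infinite ∧
      (∀ K ∈ S, ∀ K' ∈ S, K ≠ K' → IsEmpty (K ≃+* K')) ∧
      ∀ K ∈ S, ∃ y : ℕ, 0 < y ∧ y % 12 = 5 ∧ ¬ (5 ∣ y) ∧
        (let P : Polynomial ℚ := X ^ 4 + C (((y : ℚ) ^ n + 7) / 6) * X ^ 3 - C 6 * X ^ 2 -
          C (((y : ℚ) ^ n + 7) / 6) * X + 1
         Irreducible P ∧ P.IsSplittingField ℚ K) ∧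
        NumberField K ∧ Module.finrank ℚ K = 4 ∧ IsGalois ℚ K ∧
        Nonempty ((K ≃ₐ[ℚ] K) ≃* Multiplicative (ZMod 4)) ∧
        TotallyReal K ∧
        HasZModRankGE (ClassGroup (𝓞 K)) n 3 := by
  obtain ⟨M, hM, hdet⟩ := exists_coprime_forall_detectsPow (ℓ := ![2, 3, 5]) (N := 30) n
    (by simp [Fin.forall_fin_succ, Nat.prime_two, Nat.prime_three, Nat.prime_five])
    (by decide) (by norm_num) (by decide)
  refine ⟨quarticFamily n M, infinite_quarticFamily hodd hM, ?_, ?_⟩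
  · rintro K ⟨y, k, -, -, -, hK⟩ K' - hne
    exact ⟨fun e => hne (hK.eq_of_ringEquiv e)⟩
  · rintro K ⟨y, k, hy, hMy, hk, hK⟩
    have hk0 : (k : ℤ) ≠ 0 := by lia
    have : NumberField K := { to_finiteDimensional := hK.finiteDimensional }
    have := hK.isCyclic hk0
    refine ⟨y, by lia, by lia, by lia, ?_, inferInstance, hK.finrank_eq_four hk0, hK.isGalois, ?_,
      hK.totallyReal hk0, hK.hasZModRankGE_classGroup_three hodd (mod_cast hk) (by lia) hMy hM hdet⟩
    · rw [← map_simplestQuartic_eq hk]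
      exact ⟨hK.irreducible hk0, hK⟩
    · exact ⟨mulEquivOfCyclicCardEq ((hK.card_algEquiv hk0).trans (Nat.card_zmod 4).symm)⟩
end
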